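/- For every n ≥ 1 and r ≥ 1, the quotient topological space of SL_n(ℂ)^r by the diagonal conjugation action of SL_n(ℂ) has trivial second homotopy group at every basepoint. -/

import Mathlib

/-!
Write `Y = SL_n(ℂ)^r` and `X` for its quotient; since scalars act trivially, `X` is also the quotient of `Y` by
`Γ = GL_n(ℂ)`. Although `Y → X` is far from a fibration, every sphere in `X` lifts to `Y` up to free homotopy
(`Setup.lift_plane`). Spheres in `Y` are null homotopic (`RepSp_null`), and a free null homotopy suffices because it can
be made based (`FH.base`).

Spheres are treated as maps of the plane that are constant off a square. The lifting is done over a fine grid, whose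
cells are mapped into slice neighbourhoods: open sets `U` of `X` whose preimage in `Y` deforms equivariantly into a
single orbit `Γ • y`. Over an edge, both ends are deformed into the orbit and then moved inside it, which is invisible in
`X` (`Setup.edge`, `Setup.line`). Over the boundary of a square, the deformed loop lies in `Γ • y`. It lifts to a loop
in `Γ`, as its monodromy lies in the stabilizer of `y`, which is path connected (`Setup.lift_sphere`). A path from `y` to the
tuple of identity matrices, a fixed point of `Γ`, then contracts it (`Setup.square`).

Slices are constructed at tuples `y` of minimal norm in their orbit. Every orbit closure contains a tuple of minimal
norm, at which the moment `∑ (yᵢ yᵢ* - yᵢ* yᵢ)` vanishes (`exists_min`); tuples with vanishing moment are conjugate as soon as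
their orbits cannot be separated (`sep`), so that the class in `X` of the minimal tuple depends continuously on the
point of `X` (`exists_sigma`). A neighbourhood of this class contains the original point, so the slices at minimal
tuples cover `X`. At such a tuple the adjoints `yᵢ*` are polynomials in `y` (`star_mem_adjoin`). Hence
`∑ ad(yᵢ)* ad(yᵢ)`, whose kernel is the commutant of `y`, makes sense algebraically and can be deformed as `y` varies; its
spectral projection yields a local map to the matrices, equivariant up to the commutant (`exists_w`), and from it
the slice (`exists_slice`).

For spheres in `SL_n(ℂ)` with `2 ≤ n`, the first column is a sphere in `ℂⁿ` without zero. Approximated by a smooth one,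
it spans a real cone of dimension `3 < 2 n`, so it can be moved to `e₁` (`frame_std`), and the lower right block is
treated by induction (`Det1_null`).
-/

/-- The special linear group `SL_n(ℂ)` of `n × n` complex matrices of determinant `1`. -/
abbrev SLn (n : ℕ) : Type := Matrix.SpecialLinearGroup (Fin n) ℂ

/-- `SL_n(ℂ)` carries the subspace topology from the space of `n × n` complex matrices. -/
instance (n : ℕ) : TopologicalSpace (SLn n) :=
  inferInstanceAs (TopologicalSpace {A : Matrix (Fin n) (Fin n) ℂ // A.det = 1})

/-- The quotient topological space of `SL_n(ℂ)^r` by the diagonal conjugation action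
`g • (A₁, …, A_r) = (g A₁ g⁻¹, …, g A_r g⁻¹)`, i.e. `Hom(F_r, SL_n(ℂ))/SL_n(ℂ)`. -/
abbrev RepQuotSL (n r : ℕ) : Type :=
  Quotient (MulAction.orbitRel (ConjAct (SLn n)) (Fin r → SLn n))

open Set Filter Topology Function Metric
open scoped Matrix

/-! ### Maps of the plane that are constant off a square -/


/-- The open square `(0, L)²` in the plane. -/
def Sq (L : ℝ) : Set (ℝ × ℝ) := {p | 0 < p.1 ∧ p.1 < L ∧ 0 < p.2 ∧ p.2 < L}

/-- Free homotopy of maps on the plane through maps that are constant off `(0, L)²`. -/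
def FH {X : Type*} [TopologicalSpace X] (L : ℝ) (f g : ℝ × ℝ → X) : Prop :=
  ∃ H : ℝ → ℝ × ℝ → X, Continuous (uncurry H) ∧ H 0 = f ∧ H 1 = g ∧
    ∀ t, ∀ p ∉ Sq L, ∀ p' ∉ Sq L, H t p = H t p'

theorem FH.trans {X : Type*} [TopologicalSpace X] {L : ℝ} {f g h : ℝ × ℝ → X}
    (h1 : FH L f g) (h2 : FH L g h) : FH L f h := by
  obtain ⟨H, hH, H0, H1, Hc⟩ := h1
  obtain ⟨K, hK, K0, K1, Kc⟩ := h2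
  refine ⟨fun t p => if t ≤ 1/2 then H (2*t) p else K (2*t-1) p, ?_, ?_, ?_, ?_⟩
  · refine Continuous.if_le (f := fun z : ℝ × (ℝ × ℝ) => z.1) (g := fun _ => (1/2:ℝ)) (f' := fun z => H (2*z.1) z.2) (g' := fun z => K (2*z.1-1) z.2)
      ?_ ?_ (by fun_prop) (by fun_prop) ?_
    · exact hH.comp (f := fun z : ℝ × (ℝ × ℝ) => (2*z.1, z.2)) (by fun_prop)
    · exact hK.comp (f := fun z : ℝ × (ℝ × ℝ) => (2*z.1-1, z.2)) (by fun_prop)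
    · rintro ⟨t, p⟩ h
      simp only at h
      subst h
      norm_num [H1, K0]
  · simp [H0]
  · norm_num [K1]
  · intro t p hp p' hp'
    dsimp only
    split_ifs
    · exact Hc _ _ hp _ hp'
    · exact Kc _ _ hp _ hp'

theorem FH.symm {X : Type*} [TopologicalSpace X] {L : ℝ} {f g : ℝ × ℝ → X}
    (h1 : FH L f g) : FH L g f := by
  obtain ⟨H, hH, H0, H1, Hc⟩ := h1
  refine ⟨fun t p => H (1-t) p, ?_, by simp [H1], by simp [H0], fun t => Hc _⟩
  exact hH.comp (f := fun z : ℝ × (ℝ × ℝ) => (1-z.1, z.2)) (by fun_prop)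

theorem FH.map {X Y : Type*} [TopologicalSpace X] [TopologicalSpace Y] {L : ℝ} {f g : ℝ × ℝ → X}
    (h1 : FH L f g) {φ : X → Y} (hφ : Continuous φ) : FH L (φ ∘ f) (φ ∘ g) := by
  obtain ⟨H, hH, H0, H1, Hc⟩ := h1
  exact ⟨fun t p => φ (H t p), hφ.comp hH, by ext; simp [H0], by ext; simp [H1],
    fun t p hp p' hp' => congrArg φ (Hc t p hp p' hp')⟩

theorem FH.scale {X : Type*} [TopologicalSpace X] {L a : ℝ} (ha : 0 < a) {f g : ℝ × ℝ → X}
    (h1 : FH (a * L) f g) : FH L (fun p => f (a • p)) (fun p => g (a • p)) := by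
  obtain ⟨H, hH, H0, H1, Hc⟩ := h1
  have key : ∀ p ∉ Sq L, a • p ∉ Sq (a * L) := by
    intro p hp h
    apply hp
    simpa [Sq, ha] using h
  refine ⟨fun t p => H t (a • p), hH.comp (f := fun z : ℝ × (ℝ × ℝ) => (z.1, a • z.2)) (by fun_prop),
    by simp [H0], by simp [H1], fun t p hp p' hp' => Hc t _ (key p hp) _ (key p' hp')⟩

/-- A free null homotopy through maps constant off the square can be made relative to the
complement of the square: the track of the boundary value is first spread out over a collar of the
square, and is then contracted along itself. -/
theorem FH.base {X : Type*} [TopologicalSpace X] {f : ℝ × ℝ → X} {c₀ : X}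
    (h1 : FH 1 f (fun _ => c₀)) :
    ∃ K : ℝ → ℝ × ℝ → X, Continuous (uncurry K) ∧ K 0 = f ∧ (∀ p, K 1 p = f 0) ∧
      ∀ t, 0 ≤ t → t ≤ 1 → ∀ p ∉ Sq 1, K t p = f 0 := by
  obtain ⟨H, hH, H0, H1, Hc⟩ := h1
  set c : ℝ → X := fun t => H t 0 with hc
  have hcc : Continuous c := hH.comp (f := fun t : ℝ => (t, (0:ℝ×ℝ))) (by fun_prop)
  have h00 : (0:ℝ×ℝ) ∉ Sq 1 := by simp [Sq]
  set μ : ℝ × ℝ → ℝ := fun p => 4 * min (min p.1 (1-p.1)) (min p.2 (1-p.2)) with hμ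
  set ρ : ℝ × ℝ → ℝ := fun p => max 0 (min 1 (μ p)) with hρ
  have hρc : Continuous ρ := by fun_prop
  have hoff : ∀ p, p ∉ Sq 1 → μ p ≤ 0 := by
    intro p hp
    by_contra! h
    apply hp
    simp only [hμ] at h
    have h' : 0 < min (min p.1 (1-p.1)) (min p.2 (1-p.2)) := by linarith
    simp only [lt_min_iff] at h'
    exact ⟨by linarith [h'.1.1], by linarith [h'.1.2], by linarith [h'.2.1], by linarith [h'.2.2]⟩
  have hρ0 : ∀ p, p ∉ Sq 1 → ρ p = 0 := by
    intro p hp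
    exact max_eq_left ((min_le_right _ _).trans (hoff p hp))
  set G : ℝ → ℝ × ℝ → ℝ × ℝ := fun v p => (p.1 + v*(p.1-1/2), p.2 + v * (p.2-1/2)) with hG
  have hGoff : ∀ v, 0 ≤ v → ∀ p, p ∉ Sq 1 → G v p ∉ Sq 1 := by
    intro v hv p hp h
    apply hp
    obtain ⟨a, b, c, d⟩ := h
    simp only [hG] at a b c d
    refine ⟨?_, ?_, ?_, ?_⟩ <;> by_contra! h <;> nlinarith
  have hend : ∀ p, H (ρ p) (G 1 p) = c (ρ p) := by
    intro p
    by_cases h : G 1 p ∈ Sq 1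
    · have : 1 ≤ μ p := by
        obtain ⟨a, b, c, d⟩ := h
        simp only [hG] at a b c d
        have : 1/4 ≤ min (min p.1 (1-p.1)) (min p.2 (1-p.2)) := by
          simp only [le_min_iff]; refine ⟨⟨?_, ?_⟩, ?_, ?_⟩ <;> linarith
        simp only [hμ]; linarith
      have h1 : ρ p = 1 := by simp only [hρ]; rw [min_eq_left this]; norm_num
      simp [h1, hc, H1]
    · exact Hc _ _ h _ h00
  have hf0 : c 0 = f 0 := by simp [hc, H0]
  refine ⟨fun v p => if v ≤ 1/2 then H (2*v*ρ p) (G (2*v) p) else c ((2-2*v) * ρ p), ?_, ?_, ?_, ?_⟩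
  · refine Continuous.if_le (f := fun z : ℝ × (ℝ × ℝ) => z.1) (g := fun _ => (1/2:ℝ)) (f' := fun z => H (2*z.1*ρ z.2) (G (2*z.1) z.2)) (g' := fun z => c ((2-2*z.1) * ρ z.2)) ?_ ?_ (by fun_prop) (by fun_prop) ?_
    · exact hH.comp (f := fun z : ℝ × (ℝ × ℝ) => (2*z.1*ρ z.2, G (2*z.1) z.2)) (by fun_prop)
    · exact hcc.comp (by fun_prop)
    · rintro ⟨t, p⟩ h
      simp only at h
      subst h
      have := hend p
      norm_num [this]
  · ext p; simp [H0, hG]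
  · intro p; norm_num [hf0]
  · intro t h0 h1 p hp
    dsimp only
    split_ifs
    · rw [hρ0 p hp, mul_zero, H0, ← hf0, hc]
      simp only [H0]
      have := Hc 0 _ (hGoff (2*t) (by linarith) p hp) _ h00
      simpa [H0] using this
    · rw [hρ0 p hp, mul_zero, hf0]

/-! ### Filling cells -/


section Fill
variable {E : Type*} [NormedAddCommGroup E] 
variable {X Y : Type*} [TopologicalSpace X] [TopologicalSpace Y]

/-- Filling a ball. Suppose that `f` maps the ball into `U`, that `e` contracts `U` to the point `q y`,
and that over the boundary sphere the contraction of `f` lifts along `q` to `ε`, ending at `y`. Then `f`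
is homotopic relative to the sphere to a map that lifts along `q`, with lift `ε · 0` on the sphere.
The last two conclusions say where the homotopy and the lift take their values. -/
theorem fill [NormedSpace ℝ E] {q : Y → X} {f : E → X} (hf : ContinuousOn f (closedBall 0 1)) {U : Set X}
    (hU : MapsTo f (closedBall 0 1) U) {e : X → ℝ → X}
    (he : ContinuousOn (uncurry e) (U ×ˢ Icc 0 1)) (e0 : ∀ u ∈ U, e u 0 = u) {y : Y}
    (e1 : ∀ u ∈ U, e u 1 = q y) {ε : E → ℝ → Y}
    (hε : ContinuousOn (uncurry ε) (sphere 0 1 ×ˢ Icc 0 1))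
    (qε : ∀ b ∈ sphere (0:E) 1, ∀ s ∈ Icc (0:ℝ) 1, q (ε b s) = e (f b) s)
    (ε1 : ∀ b ∈ sphere (0:E) 1, ε b 1 = y) :
    ∃ (H : ℝ → E → X) (F : E → Y),
      ContinuousOn (uncurry H) (Icc 0 1 ×ˢ closedBall 0 1) ∧ ContinuousOn F (closedBall 0 1) ∧
      (∀ p ∈ closedBall (0:E) 1, H 0 p = f p) ∧ (∀ p ∈ closedBall (0:E) 1, H 1 p = q (F p)) ∧
      (∀ v, ∀ p ∈ sphere (0:E) 1, H v p = f p) ∧ (∀ p ∈ sphere (0:E) 1, F p = ε p 0) ∧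
      (∀ v ∈ Icc (0:ℝ) 1, ∀ p ∈ closedBall (0:E) 1, ∃ p' ∈ closedBall (0:E) 1, ∃ s ∈ Icc (0:ℝ) 1,
        H v p = e (f p') s) ∧
      ∀ p ∈ closedBall (0:E) 1, F p = y ∨ ∃ b ∈ sphere (0:E) 1, ∃ s ∈ Icc (0:ℝ) 1, F p = ε b s := by
  -- `m` retracts the shell `1 / 2 ≤ ‖p‖ ≤ 1` radially onto the sphere and doubles the inner ball; `ρ` is
  -- the time of the contraction to be reached at `p`: zero on the sphere, one on the inner ball.
  set ρ : E → ℝ := fun p => min 1 (2*(1-‖p‖)) with hρ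
  have hρc : Continuous ρ := by fun_prop
  set m : E → E := fun p => (max ‖p‖ (1/2))⁻¹ • p with hm
  have hmax : ∀ p : E, max ‖p‖ (1/2) ≠ 0 := fun p => by positivity
  have hmc : Continuous m := by
    refine Continuous.smul (Continuous.inv₀ (by fun_prop) hmax) continuous_id
  have hmB : ∀ p : E, ‖m p‖ ≤ 1 := by
    intro p
    simp only [hm, norm_smul, norm_inv, Real.norm_eq_abs]
    rw [abs_of_pos (by positivity), inv_mul_le_iff₀ (by positivity), mul_one]
    exact le_max_left _ _
  have hmid : ∀ v ∈ Icc (0:ℝ) 1, ∀ p ∈ closedBall (0:E) 1, (1-v) • p + v • m p ∈ closedBall (0:E) 1 := by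
    intro v hv p hp
    exact (convex_closedBall (0:E) 1) hp (by simpa using hmB p) (by linarith [hv.2]) hv.1 (by ring)
  have hρI : ∀ p ∈ closedBall (0:E) 1, ρ p ∈ Icc (0:ℝ) 1 := by
    intro p hp
    have : ‖p‖ ≤ 1 := by simpa using hp
    exact ⟨le_min zero_le_one (by linarith), min_le_left _ _⟩
  have hvρ : ∀ v ∈ Icc (0:ℝ) 1, ∀ p ∈ closedBall (0:E) 1, v * ρ p ∈ Icc (0:ℝ) 1 := by
    intro v hv p hp
    have := hρI p hp
    exact ⟨mul_nonneg hv.1 this.1, mul_le_one₀ hv.2 this.1 this.2⟩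
  classical
  refine ⟨fun v p => e (f ((1-v) • p + v • m p)) (v * ρ p),
    fun p => if ‖p‖ ≤ 1/2 then y else ε (‖p‖⁻¹ • p) (2*(1-‖p‖)), ?_, ?_, ?_, ?_, ?_, ?_, ?_, ?_⟩
  · refine he.comp (f := fun z : ℝ × E => (f ((1-z.1) • z.2 + z.1 • m z.2), z.1 * ρ z.2)) ?_ ?_
    · refine ContinuousOn.prodMk (hf.comp (by fun_prop) ?_) (by fun_prop)
      rintro ⟨v, p⟩ ⟨hv, hp⟩
      exact hmid v hv p hp
    · rintro ⟨v, p⟩ ⟨hv, hp⟩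
      exact ⟨hU (hmid v hv p hp), hvρ v hv p hp⟩
  · have hB : closedBall (0:E) 1 = (closedBall (0:E) 1 ∩ {p | ‖p‖ ≤ 1/2}) ∪ (closedBall (0:E) 1 ∩ {p | 1/2 ≤ ‖p‖}) := by
      ext p; simp only [mem_union, mem_inter_iff, mem_ofPred_eq]
      have := le_total ‖p‖ (1/2); tauto
    rw [hB]
    have hin : ∀ p ∈ closedBall (0:E) 1 ∩ {p | 1/2 ≤ ‖p‖}, ‖p‖⁻¹ • p ∈ sphere (0:E) 1 := by
      rintro p ⟨-, hp⟩
      have : (0:ℝ) < ‖p‖ := lt_of_lt_of_le (by norm_num) hp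
      simp [norm_smul, this.ne']
    refine ContinuousOn.union_of_isClosed ?_ ?_ ?_ ?_
    · exact (continuousOn_const (c := y)).congr (fun p hp => if_pos hp.2)
    · have : ContinuousOn (fun p : E => ε (‖p‖⁻¹ • p) (2*(1-‖p‖))) (closedBall (0:E) 1 ∩ {p | 1/2 ≤ ‖p‖}) := by
        refine hε.comp (f := fun p : E => (‖p‖⁻¹ • p, 2*(1-‖p‖))) ?_ ?_
        · refine ContinuousOn.prodMk (ContinuousOn.smul (ContinuousOn.inv₀ (by fun_prop) ?_) continuousOn_id) (by fun_prop)
          rintro p ⟨-, hp⟩ h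
          simp only [mem_ofPred_eq] at hp
          rw [h] at hp; norm_num at hp
        · intro p hp
          refine ⟨hin p hp, ?_⟩
          obtain ⟨h1, h2⟩ := hp
          simp only [mem_closedBall, dist_zero_right, mem_ofPred_eq] at h1 h2
          constructor <;> dsimp <;> linarith
      refine this.congr (fun p hp => ?_)
      dsimp only
      split_ifs with h
      · have h3 : ‖p‖ = 1/2 := le_antisymm h hp.2
        have h4 := ε1 _ (hin p hp)
        rw [← h4]; congr 1; rw [h3]; norm_num
      · rfl
    · exact isClosed_closedBall.inter (isClosed_le continuous_norm continuous_const)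
    · exact isClosed_closedBall.inter (isClosed_le continuous_const continuous_norm)
  · intro p hp
    simp [e0 _ (hU hp)]
  · intro p hp
    have hmp : m p ∈ closedBall (0:E) 1 := by simpa using hmB p
    simp only [sub_self, zero_smul, one_smul, zero_add, one_mul]
    split_ifs with h
    · have : ρ p = 1 := min_eq_left (by linarith)
      rw [this, e1 _ (hU hmp)]
    · push Not at h
      have hpos : 0 < ‖p‖ := by linarith
      have h1 : ‖p‖ ≤ 1 := by simpa using hp
      have h2 : m p = ‖p‖⁻¹ • p := by simp only [hm]; rw [max_eq_left h.le]
      have h3 : ρ p = 2*(1-‖p‖) := min_eq_right (by linarith)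
      rw [qε _ (by simp [norm_smul, hpos.ne']) _ ⟨by linarith, by linarith⟩, h2, h3]
  · intro v p hp
    have h1 : ‖p‖ = 1 := by simpa using hp
    have h2 : m p = p := by simp only [hm, h1]; norm_num
    have h3 : ρ p = 0 := by simp [hρ, h1]
    dsimp only
    rw [h2, h3, mul_zero, ← add_smul, sub_add_cancel, one_smul, e0]
    exact hU (sphere_subset_closedBall hp)
  · intro p hp
    have h1 : ‖p‖ = 1 := by simpa using hp
    norm_num [h1]
  · intro v hv p hp
    exact ⟨_, hmid v hv p hp, _, hvρ v hv p hp, rfl⟩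
  · intro p hp
    dsimp only
    split_ifs with h
    · exact Or.inl rfl
    · have hpos : 0 < ‖p‖ := by linarith
      have h1 : ‖p‖ ≤ 1 := by simpa using hp
      exact Or.inr ⟨_, by simp [norm_smul, hpos.ne'], _, ⟨by linarith, by linarith⟩, rfl⟩

/-- The homotopy extension property of the ball relative to its boundary sphere, where the extension
takes only values of `f` and of `h`. -/
theorem hep [NormedSpace ℝ E] {f : E → X} (hf : ContinuousOn f (closedBall 0 1)) {h : ℝ → E → X}
    (hh : ContinuousOn (uncurry h) (Icc 0 1 ×ˢ sphere 0 1)) (h0 : ∀ b ∈ sphere (0:E) 1, h 0 b = f b) :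
    ∃ H : ℝ → E → X, ContinuousOn (uncurry H) (Icc 0 1 ×ˢ closedBall 0 1) ∧
      (∀ p ∈ closedBall (0:E) 1, H 0 p = f p) ∧
      (∀ v ∈ Icc (0:ℝ) 1, ∀ p ∈ sphere (0:E) 1, H v p = h v p) ∧
      ∀ v ∈ Icc (0:ℝ) 1, ∀ p ∈ closedBall (0:E) 1, (∃ p' ∈ closedBall (0:E) 1, H v p = f p') ∨
        ∃ v' ∈ Icc (0:ℝ) 1, ∃ b ∈ sphere (0:E) 1, H v p = h v' b := by
  classical
  -- at time `v` the map `f` is squeezed into the ball of radius `1 / (1 + v)`, and the homotopy of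
  -- the sphere runs through the collar around it
  set A : Set (ℝ × E) := (Icc 0 1 ×ˢ closedBall 0 1) ∩ {z | (1+z.1)*‖z.2‖ ≤ 1} with hA
  set B : Set (ℝ × E) := (Icc 0 1 ×ˢ closedBall 0 1) ∩ {z | 1 ≤ (1+z.1)*‖z.2‖} with hB
  have hAm : ∀ z ∈ A, (1+z.1) • z.2 ∈ closedBall (0:E) 1 := by
    rintro ⟨v, p⟩ ⟨⟨hv, hp⟩, h⟩
    simp only [mem_ofPred_eq] at h
    simp only [mem_closedBall, dist_zero_right, norm_smul, Real.norm_eq_abs]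
    rwa [abs_of_nonneg (by linarith [hv.1])]
  have hBpos : ∀ z ∈ B, 0 < ‖z.2‖ := by
    rintro ⟨v, p⟩ ⟨⟨hv, hp⟩, h⟩
    simp only [mem_ofPred_eq] at h
    by_contra! h'
    have : ‖p‖ = 0 := le_antisymm h' (norm_nonneg _)
    rw [this] at h; norm_num at h
  have hBm : ∀ z ∈ B, ((1+z.1)*‖z.2‖-1, ‖z.2‖⁻¹ • z.2) ∈ Icc (0:ℝ) 1 ×ˢ sphere (0:E) 1 := by
    intro z hz
    have hpos := hBpos z hz
    obtain ⟨v, p⟩ := z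
    obtain ⟨⟨hv, hp⟩, h⟩ := hz
    simp only [mem_ofPred_eq, mem_Icc, mem_closedBall, dist_zero_right] at h hv hp hpos ⊢
    refine ⟨⟨by linarith, by nlinarith⟩, ?_⟩
    simp [norm_smul, hpos.ne']
  refine ⟨fun v p => if (1+v)*‖p‖ ≤ 1 then f ((1+v) • p) else h ((1+v)*‖p‖-1) (‖p‖⁻¹ • p), ?_, ?_, ?_, ?_⟩
  · have hU : Icc (0:ℝ) 1 ×ˢ closedBall (0:E) 1 = A ∪ B := by
      ext z; simp only [hA, hB, mem_union, mem_inter_iff, mem_ofPred_eq]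
      have := le_total ((1+z.1)*‖z.2‖) 1; tauto
    have hcl : IsClosed (Icc (0:ℝ) 1 ×ˢ closedBall (0:E) 1) := isClosed_Icc.prod isClosed_closedBall
    rw [hU]
    refine ContinuousOn.union_of_isClosed ?_ ?_ (hcl.inter (isClosed_le (by fun_prop) continuous_const))
      (hcl.inter (isClosed_le continuous_const (by fun_prop)))
    · refine (hf.comp (f := fun z : ℝ × E => (1+z.1) • z.2) (by fun_prop) hAm).congr ?_
      intro z hz
      exact if_pos hz.2
    · have : ContinuousOn (fun z : ℝ × E => h ((1+z.1)*‖z.2‖-1) (‖z.2‖⁻¹ • z.2)) B := by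
        refine hh.comp (f := fun z : ℝ × E => ((1+z.1)*‖z.2‖-1, ‖z.2‖⁻¹ • z.2)) ?_ hBm
        refine ContinuousOn.prodMk (by fun_prop) (ContinuousOn.smul (ContinuousOn.inv₀ (by fun_prop) ?_) (by fun_prop))
        exact fun z hz => (hBpos z hz).ne'
      refine this.congr ?_
      rintro z hz
      simp only [uncurry]
      split_ifs with h'
      · have h3 : (1+z.1)*‖z.2‖ = 1 := le_antisymm h' hz.2
        have h4 : 1+z.1 = ‖z.2‖⁻¹ := eq_inv_of_mul_eq_one_left h3
        rw [h3, sub_self, h0 _ (hBm z hz).2, h4]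
      · rfl
  · intro p hp
    have : ‖p‖ ≤ 1 := by simpa using hp
    simp [this]
  · intro v hv p hp
    have h1 : ‖p‖ = 1 := by simpa using hp
    simp only [h1, mul_one, inv_one, one_smul, add_sub_cancel_left]
    split_ifs with h'
    · have : v = 0 := le_antisymm (by linarith) hv.1
      subst this
      simp [h0 p hp]
    · rfl
  · intro v hv p hp
    dsimp only
    split_ifs with h'
    · exact Or.inl ⟨_, hAm (v, p) ⟨⟨hv, hp⟩, h'⟩, rfl⟩
    · have := hBm (v, p) ⟨⟨hv, hp⟩, (not_le.1 h').le⟩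
      exact Or.inr ⟨_, this.1, _, this.2, rfl⟩

/-- A locally finite cover of `E` by closed unit balls that meet only along their boundary
spheres. -/
structure Grid (I : Type*) (E : Type*) [NormedAddCommGroup E] where
  /-- The centres of the balls. -/
  c : I → E
  /-- Local finiteness is what lets continuity be checked ball by ball. -/
  lf : LocallyFinite fun i => closedBall (c i) 1
  cover : ∀ p, ∃ i, p ∈ closedBall (c i) 1
  overlap : ∀ i j p, i ≠ j → p ∈ closedBall (c i) 1 → p ∈ closedBall (c j) 1 → p ∈ sphere (c i) 1

/-- Homotopies given ball by ball that agree with one homotopy `h` on all boundary spheres glue.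
Time is clamped to `[0, 1]`. -/
theorem Grid.glue {I : Type*} (G : Grid I E) {H : I → ℝ → E → X}
    (hH : ∀ i, ContinuousOn (uncurry (H i)) (Icc 0 1 ×ˢ closedBall 0 1)) {h : ℝ → E → X}
    (hh : ∀ i, ∀ v ∈ Icc (0:ℝ) 1, ∀ b ∈ sphere (0:E) 1, H i v b = h v (G.c i + b)) :
    ∃ K : ℝ → E → X, Continuous (uncurry K) ∧
      ∀ i, ∀ v ∈ Icc (0:ℝ) 1, ∀ b ∈ closedBall (0:E) 1, K v (G.c i + b) = H i v b := by
  choose ι hι using G.cover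
  set cl : ℝ → ℝ := fun v => max 0 (min 1 v) with hcl
  have hclI : ∀ v, cl v ∈ Icc (0:ℝ) 1 := fun v => ⟨le_max_left _ _, max_le zero_le_one (min_le_left _ _)⟩
  have hclid : ∀ v ∈ Icc (0:ℝ) 1, cl v = v := by
    intro v hv; simp only [hcl]; rw [min_eq_right hv.2, max_eq_right hv.1]
  have key : ∀ i, ∀ v ∈ Icc (0:ℝ) 1, ∀ p ∈ closedBall (G.c i) 1, H (ι p) v (p - G.c (ι p)) = H i v (p - G.c i) := by
    intro i v hv p hp
    by_cases hi : i = ι p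
    · rw [← hi]
    · have h1 := G.overlap _ _ p hi hp (hι p)
      have h2 := G.overlap _ _ p (Ne.symm hi) (hι p) hp
      rw [hh _ v hv _ (by simpa [dist_eq_norm] using h2), hh _ v hv _ (by simpa [dist_eq_norm] using h1)]
      simp
  refine ⟨fun v p => H (ι p) (cl v) (p - G.c (ι p)), ?_, ?_⟩
  · have hlf : LocallyFinite fun i => (univ : Set ℝ) ×ˢ closedBall (G.c i) 1 := by
      intro z
      obtain ⟨t, ht, hf⟩ := G.lf z.2
      refine ⟨univ ×ˢ t, prod_mem_nhds univ_mem ht, hf.subset ?_⟩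
      rintro i ⟨w, hw⟩
      exact ⟨w.2, hw.1.2, hw.2.2⟩
    refine hlf.continuous ?_ (fun i => isClosed_univ.prod isClosed_closedBall) ?_
    · rw [eq_univ_iff_forall]
      intro z
      exact mem_iUnion.2 ⟨ι z.2, mem_univ _, hι _⟩
    · intro i
      have : ContinuousOn (fun z : ℝ × E => H i (cl z.1) (z.2 - G.c i)) (univ ×ˢ closedBall (G.c i) 1) := by
        refine (hH i).comp (f := fun z : ℝ × E => (cl z.1, z.2 - G.c i)) (by fun_prop) ?_
        rintro z ⟨-, hz⟩
        exact ⟨hclI _, by simpa [dist_eq_norm] using hz⟩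
      refine this.congr ?_
      rintro ⟨v, p⟩ ⟨-, hz⟩
      exact key i _ (hclI v) p hz
  · intro i v hv b hb
    have := key i v hv (G.c i + b) (by simpa using hb)
    simp only [hclid v hv, this, add_sub_cancel_left]

/-- The closed unit ball about `c` can be filled: on it `f` takes values in a set `U` that is
contracted to a point `q y` by `e`, and over the boundary sphere the contraction lifts along `q`,
starting at `F₀`. The contraction stays in `O` and the lift in `N`. -/
def Fillable (q : Y → X) (f : E → X) (F₀ : E → Y) (c : E) (O : Set X) (N : Set Y) : Prop :=
  ∃ (U : Set X) (e : X → ℝ → X) (y : Y) (ε : E → ℝ → Y),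
    (∀ b ∈ closedBall (0:E) 1, f (c + b) ∈ U) ∧ ContinuousOn (uncurry e) (U ×ˢ Icc 0 1) ∧
    (∀ u ∈ U, e u 0 = u) ∧ (∀ u ∈ U, e u 1 = q y) ∧
    ContinuousOn (uncurry ε) (sphere 0 1 ×ˢ Icc 0 1) ∧
    (∀ b ∈ sphere (0:E) 1, ∀ s ∈ Icc (0:ℝ) 1, q (ε b s) = e (f (c + b)) s) ∧
    (∀ b ∈ sphere (0:E) 1, ε b 1 = y) ∧ (∀ b ∈ sphere (0:E) 1, ε b 0 = F₀ (c + b)) ∧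
    (∀ u ∈ U, ∀ s ∈ Icc (0:ℝ) 1, e u s ∈ O) ∧ y ∈ N ∧
    (∀ b ∈ sphere (0:E) 1, ∀ s ∈ Icc (0:ℝ) 1, ε b s ∈ N)

theorem Fillable.trivial {q : Y → X} {f : E → X} {F₀ : E → Y} {c : E} (y : Y)
    (hf : ∀ b ∈ closedBall (0:E) 1, f (c + b) = q y) (hF : ∀ b ∈ sphere (0:E) 1, F₀ (c + b) = y) :
    Fillable q f F₀ c {q y} {y} := by
  refine ⟨{q y}, fun u _ => u, y, fun _ _ => y, hf, continuous_fst.continuousOn, fun _ _ => rfl,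
    fun u hu => hu, continuousOn_const, ?_, fun _ _ => rfl, fun b hb => (hF b hb).symm,
    fun u hu _ _ => hu, rfl, fun _ _ _ _ => rfl⟩
  exact fun b hb s _ => (hf b (sphere_subset_closedBall hb)).symm

/-- If all balls of a grid can be filled, then they can be filled simultaneously: `f` is homotopic,
relative to the boundary spheres, to a map that lifts along `q`. -/
theorem Grid.fill [NormedSpace ℝ E] {I : Type*} (G : Grid I E) {q : Y → X} {f : E → X} (hf : Continuous f) {F₀ : E → Y}
    {O : I → Set X} {N : I → Set Y} (h : ∀ i, Fillable q f F₀ (G.c i) (O i) (N i)) :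
    ∃ (H : ℝ → E → X) (F : E → Y), Continuous (uncurry H) ∧ Continuous F ∧ H 0 = f ∧ H 1 = q ∘ F ∧
      (∀ i, ∀ v ∈ Icc (0:ℝ) 1, ∀ b ∈ sphere (0:E) 1, H v (G.c i + b) = f (G.c i + b)) ∧
      (∀ i, ∀ b ∈ sphere (0:E) 1, F (G.c i + b) = F₀ (G.c i + b)) ∧
      (∀ i, ∀ v ∈ Icc (0:ℝ) 1, ∀ b ∈ closedBall (0:E) 1, H v (G.c i + b) ∈ O i) ∧
      (∀ i, ∀ b ∈ closedBall (0:E) 1, F (G.c i + b) ∈ N i) := by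
  choose U e y ε hU he e0 e1 hε qε ε1 ε0 hO hy hN using h
  have := fun i => _root_.fill (q := q) (f := fun b => f (G.c i + b)) (by fun_prop) (hU i) (he i) (e0 i) (e1 i) (hε i) (qε i) (ε1 i)
  choose H F hH hF H0 H1 HS FS HO FN using this
  obtain ⟨K, hK, hKe⟩ := G.glue hH (h := fun _ => f) (fun i v hv b hb => HS i v b hb)
  obtain ⟨Φ, hΦ, hΦe⟩ := G.glue (H := fun i _ => F i)
    (fun i => (hF i).comp continuousOn_snd (fun z hz => hz.2)) (h := fun _ => F₀)
    (fun i v hv b hb => (FS i b hb).trans (ε0 i b hb))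
  have z0 : (0:ℝ) ∈ Icc (0:ℝ) 1 := by simp
  have z1 : (1:ℝ) ∈ Icc (0:ℝ) 1 := by simp
  have hp : ∀ p, ∃ i, ∃ b ∈ closedBall (0:E) 1, p = G.c i + b := by
    intro p
    obtain ⟨i, hi⟩ := G.cover p
    exact ⟨i, p - G.c i, by simpa [dist_eq_norm] using hi, by simp⟩
  refine ⟨K, Φ 0, hK, hΦ.comp (f := fun p : E => ((0:ℝ), p)) (by fun_prop), ?_, ?_, ?_, ?_, ?_, ?_⟩
  · ext p
    obtain ⟨i, b, hb, rfl⟩ := hp p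
    rw [hKe i 0 z0 b hb, H0 i b hb]
  · ext p
    obtain ⟨i, b, hb, rfl⟩ := hp p
    rw [hKe i 1 z1 b hb, H1 i b hb, comp_apply, hΦe i 0 z0 b hb]
  · intro i v hv b hb
    rw [hKe i v hv b (sphere_subset_closedBall hb), HS i v b hb]
  · intro i b hb
    rw [hΦe i 0 z0 b (sphere_subset_closedBall hb), FS i b hb, ε0 i b hb]
  · intro i v hv b hb
    rw [hKe i v hv b hb]
    obtain ⟨p', hp', s, hs, h⟩ := HO i v hv b hb
    rw [h]
    exact hO i _ (hU i p' hp') s hs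
  · intro i b hb
    rw [hΦe i 0 z0 b hb]
    rcases FN i b hb with h | ⟨b', hb', s, hs, h⟩ <;> rw [h]
    exacts [hy i, hN i b' hb' s hs]

/-- The grid of the intervals `[2 i, 2 i + 2]`. -/
def grid1 : Grid ℤ ℝ where
  c i := 2 * i + 1
  lf := by
    intro x
    refine ⟨ball x 1, ball_mem_nhds x one_pos, (Set.finite_Icc ⌊(x - 4)/2⌋ ⌈(x+4)/2⌉).subset ?_⟩
    rintro i ⟨z, hz, hz'⟩
    simp only [mem_closedBall, mem_ball, Real.dist_eq, abs_le, abs_lt] at hz hz'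
    constructor
    · have : ((⌊(x-4)/2⌋:ℤ):ℝ) ≤ i := (Int.floor_le _).trans (by linarith)
      exact_mod_cast this
    · have : (i:ℝ) ≤ ((⌈(x+4)/2⌉:ℤ):ℝ) := le_trans (by linarith) (Int.le_ceil _)
      exact_mod_cast this
  cover p := by
    refine ⟨⌊p/2⌋, ?_⟩
    have h1 := Int.floor_le (p/2)
    have h2 := Int.lt_floor_add_one (p/2)
    simp only [mem_closedBall, Real.dist_eq, abs_le]
    constructor <;> linarith
  overlap i j p hij hi hj := by
    simp only [mem_closedBall, mem_sphere, Real.dist_eq, abs_le] at hi hj ⊢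
    rcases lt_or_gt_of_ne hij with h | h
    · have : (i:ℝ) + 1 ≤ j := by exact_mod_cast h
      have : p - (2*i+1) = 1 := by linarith
      rw [this, abs_one]
    · have : (j:ℝ) + 1 ≤ i := by exact_mod_cast h
      have : p - (2*i+1) = -1 := by linarith
      rw [this, abs_neg, abs_one]

/-- The grid of the squares `[2 i, 2 i + 2] × [2 j, 2 j + 2]`, which are balls in the sup norm. -/
def grid2 : Grid (ℤ × ℤ) (ℝ × ℝ) where
  c i := (2 * i.1 + 1, 2 * i.2 + 1)
  lf := by
    intro x
    obtain ⟨t, ht, hf⟩ := grid1.lf x.1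
    obtain ⟨t', ht', hf'⟩ := grid1.lf x.2
    refine ⟨t ×ˢ t', prod_mem_nhds ht ht', (hf.prod hf').subset ?_⟩
    rintro i ⟨z, hz, hz'⟩
    dsimp only at hz
    rw [← closedBall_prod_same] at hz
    exact ⟨⟨z.1, hz.1, hz'.1⟩, ⟨z.2, hz.2, hz'.2⟩⟩
  cover p := by
    obtain ⟨i, hi⟩ := grid1.cover p.1
    obtain ⟨j, hj⟩ := grid1.cover p.2
    refine ⟨(i, j), ?_⟩
    rw [← closedBall_prod_same]
    exact ⟨hi, hj⟩
  overlap i j p hij hi hj := by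
    rw [← closedBall_prod_same] at hi hj
    rw [sphere_prod]
    by_cases h : i.1 = j.1
    · have h2 : i.2 ≠ j.2 := fun h' => hij (Prod.ext h h')
      exact Or.inr ⟨hi.1, grid1.overlap i.2 j.2 p.2 h2 hi.2 hj.2⟩
    · exact Or.inl ⟨grid1.overlap i.1 j.1 p.1 h hi.1 hj.1, hi.2⟩

end Fill

/-! ### Slices and lifting along an edge -/


section Slices
variable {Γ Y X : Type*} [Group Γ] [TopologicalSpace Γ] [TopologicalSpace Y] [TopologicalSpace X]
  [MulAction Γ Y]

/-- A slice neighbourhood of the point `q y`: an open set `U` containing `q y` together with a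
`Γ`-equivariant deformation of its preimage into the orbit of `y`. The image in the quotient of the
deformation contracts `U` to `q y` within `U'`. -/
structure Slice (q : Y → X) (y : Y) (U U' : Set X) where
  isOpen : IsOpen U
  mem : q y ∈ U
  /-- The deformation; its values at points outside the preimage of `U` are irrelevant. -/
  D : Y → ℝ → Y
  cont : ∀ n, q n ∈ U → ∀ t, ContinuousAt (uncurry D) (n, t)
  equi : ∀ (g : Γ) n, q n ∈ U → ∀ t, D (g • n) t = g • D n t
  zero : ∀ n, q n ∈ U → D n 0 = n
  /-- The deformation ends in the orbit of `y`, and its end lifts locally along the orbit map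
`Γ → Γ • y`; the orbit need not carry the quotient topology of `Γ`, so continuity alone would not give this. -/
  lift : ∀ n, q n ∈ U → ∃ V ∈ 𝓝 n, ∃ k : Y → Γ, ContinuousOn k V ∧ ∀ m ∈ V, D m 1 = k m • y
  /-- The deformation takes place over the larger set. -/
  img : ∀ n, q n ∈ U → ∀ t ∈ Icc (0:ℝ) 1, q (D n t) ∈ U'

variable (Γ Y X) in
/-- A quotient `q : Y → X` of the space `Y` by the group `Γ` to which the lifting argument applies.
For representations, `Y` is `SL_n(ℂ)^r`, the group is `GL_n(ℂ)`, and `σ` chooses minimal vectors. -/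
structure Setup where
  q : Y → X
  hq : IsOpenQuotientMap q
  orb : ∀ a b, q a = q b ↔ ∃ g : Γ, g • a = b
  /-- Every element of `Γ` is joined to `1` by a path that fixes all points it fixes itself; hence all
stabilizers are path connected. -/
  conn : ∀ g : Γ, ∃ κ : ℝ → Γ, Continuous κ ∧ κ 0 = 1 ∧ κ 1 = g ∧ ∀ t, ∀ y : Y, g • y = y → κ t • y = y
  /-- A point fixed by `Γ` that every point can be joined to. -/
  one : Y
  fix : ∀ g : Γ, g • one = one
  path : ∀ y, ∃ γ : ℝ → Y, Continuous γ ∧ γ 0 = y ∧ γ 1 = one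
  /-- A choice, for every point of the quotient, of a point of `Y` that has slices. It is not a section:
`q (σ z)` only lies in the closure of `z`. -/
  σ : X → Y
  hσ : Continuous (q ∘ σ)
  /-- Every neighbourhood of `q (σ z)` is a neighbourhood of `z`. -/
  spec : ∀ z (U : Set X), IsOpen U → q (σ z) ∈ U → z ∈ U
  slice : ∀ z (U' : Set X), IsOpen U' → q (σ z) ∈ U' → ∃ U, Nonempty (Slice (Γ := Γ) q (σ z) U U')

namespace Setup
variable (S : Setup Γ Y X)

/-- A set-theoretic section of `q`. -/
noncomputable def l : X → Y := surjInv S.hq.surjective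

theorem q_l (x : X) : S.q (S.l x) = x := surjInv_eq _ x

variable {S} {y : Y} {U U' : Set X} (A : Slice (Γ := Γ) S.q y U U')

theorem qD (n : Y) (hn : S.q n ∈ U) (t : ℝ) : S.q (A.D (S.l (S.q n)) t) = S.q (A.D n t) := by
  obtain ⟨g, hg⟩ := (S.orb n (S.l (S.q n))).1 (S.q_l _).symm
  rw [← hg, A.equi g n hn]
  exact ((S.orb _ _).2 ⟨g, rfl⟩).symm

/-- By equivariance, the deformation descends to a homotopy on `U`, which is continuous because `q × id` is a
quotient map. -/
theorem contDbar : ContinuousOn (uncurry fun u t => S.q (A.D (S.l u) t)) (U ×ˢ univ) := by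
  rintro ⟨u, t⟩ ⟨hu, -⟩
  refine ContinuousAt.continuousWithinAt ?_
  have hQ : IsOpenQuotientMap (Prod.map S.q (id : ℝ → ℝ)) := S.hq.prodMap IsOpenQuotientMap.id
  have : (u, t) = Prod.map S.q (id : ℝ → ℝ) (S.l u, t) := by simp [q_l]
  rw [this, ← hQ.continuousAt_comp_iff]
  have hu' : S.q (S.l u) ∈ U := by rwa [q_l]
  have h1 : ContinuousAt (fun z : Y × ℝ => S.q (A.D z.1 z.2)) (S.l u, t) :=
    S.hq.continuous.continuousAt.comp (A.cont _ hu' t)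
  refine h1.congr ?_
  have : ∀ᶠ z in 𝓝 (S.l u, t), S.q z.1 ∈ U :=
    (S.hq.continuous.comp continuous_fst).continuousAt.eventually (A.isOpen.mem_nhds hu')
  filter_upwards [this] with z hz
  exact (qD A z.1 hz z.2).symm

theorem qD1 (n : Y) (hn : S.q n ∈ U) : ∃ g : Γ, A.D n 1 = g • y := by
  obtain ⟨V, hV, k, -, hk⟩ := A.lift n hn
  exact ⟨_, hk n (mem_of_mem_nhds hV)⟩

theorem qsmul (g : Γ) (n : Y) : S.q (g • n) = S.q n := ((S.orb _ _).2 ⟨g, rfl⟩).symm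

variable [IsTopologicalGroup Γ]

/-- An interval that `φ` maps into a slice neighbourhood can be filled, with the lift prescribed at
both ends by the section `l`: each end is first moved by the deformation, which takes it to some `g • y`,
and then along a path in `Γ` from there to `y`, during which its image in the quotient does not move. -/
theorem edge [ContinuousSMul Γ Y] (A : Slice (Γ := Γ) S.q y U U') {φ : ℝ → X} {c : ℝ} (hφ : ∀ b ∈ closedBall (0:ℝ) 1, φ (c + b) ∈ U) :
    Fillable S.q φ (S.l ∘ φ) c U' univ := by
  have hU : ∀ u ∈ U, S.q (S.l u) ∈ U := fun u hu => by rwa [q_l]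
  have hy : S.q y ∈ U' := by
    have := A.img y A.mem 0 (by simp)
    rwa [A.zero y A.mem] at this
  have key : ∀ u ∈ U, ∃ a : ℝ → Y, Continuous a ∧ a 0 = S.l u ∧ a 1 = y ∧
      ∀ s, S.q (a s) = S.q (A.D (S.l u) (min 1 (2*s))) := by
    intro u hu
    obtain ⟨g, hg⟩ := qD1 A _ (hU u hu)
    obtain ⟨κ, hκ, κ0, κ1, -⟩ := S.conn g⁻¹
    refine ⟨fun s => if s ≤ 1/2 then A.D (S.l u) (2*s) else (κ (2*s-1) * g) • y, ?_, ?_, ?_, ?_⟩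
    · refine Continuous.if_le ?_ (by fun_prop) continuous_id continuous_const ?_
      · rw [continuous_iff_continuousAt]
        intro s
        exact ContinuousAt.comp (g := uncurry A.D) (f := fun s : ℝ => (S.l u, 2*s)) (A.cont _ (hU u hu) _) (by fun_prop)
      · rintro s rfl
        norm_num [κ0, hg]
    · simp [A.zero _ (hU u hu)]
    · norm_num [κ1]
    · intro s
      dsimp only
      split_ifs with h
      · rw [min_eq_right (by linarith)]
      · rw [min_eq_left (by linarith), hg, qsmul, qsmul]
  have hb1 : ∀ b ∈ sphere (0:ℝ) 1, b = 1 ∨ b = -1 := by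
    intro b hb
    simpa using eq_or_eq_neg_of_abs_eq (by simpa using hb : |b| = 1)
  have hm : ∀ u ∈ U, ∀ s : ℝ, 0 ≤ s → S.q (A.D (S.l u) (min 1 (2*s))) ∈ U' := fun u hu s hs =>
    A.img _ (hU u hu) _ ⟨le_min zero_le_one (by linarith), min_le_left _ _⟩
  obtain ⟨a, ha, a0, a1, aq⟩ := key _ (hφ 1 (by simp))
  obtain ⟨a', ha', a0', a1', aq'⟩ := key _ (hφ (-1) (by simp))
  refine ⟨U, fun u s => S.q (A.D (S.l u) (min 1 (2*s))), y, fun b s => if b = 1 then a s else a' s,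
    hφ, ?_, ?_, ?_, ?_, ?_, ?_, ?_, ?_, mem_univ _, fun _ _ _ _ => mem_univ _⟩
  · refine (contDbar A).comp (f := fun z : X × ℝ => (z.1, min 1 (2*z.2))) (by fun_prop) ?_
    rintro z ⟨hz, -⟩
    exact ⟨hz, mem_univ _⟩
  · intro u hu
    simp [A.zero _ (hU u hu), q_l]
  · intro u hu
    obtain ⟨g, hg⟩ := qD1 A _ (hU u hu)
    norm_num [hg, qsmul]
  · have : (sphere (0:ℝ) 1 ×ˢ Icc (0:ℝ) 1) ⊆ ({1} ×ˢ Icc (0:ℝ) 1) ∪ ({-1} ×ˢ Icc (0:ℝ) 1) := by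
      rintro ⟨b, s⟩ ⟨hb, hs⟩
      rcases hb1 b hb with h | h
      · exact Or.inl ⟨h, hs⟩
      · exact Or.inr ⟨h, hs⟩
    refine ContinuousOn.mono ?_ this
    refine ContinuousOn.union_of_isClosed ?_ ?_ (isClosed_singleton.prod isClosed_Icc) (isClosed_singleton.prod isClosed_Icc)
    · refine (ha.comp continuous_snd).continuousOn.congr ?_
      rintro ⟨b, s⟩ ⟨hb, -⟩
      simp only [mem_singleton_iff] at hb
      simp [hb]
    · refine (ha'.comp continuous_snd).continuousOn.congr ?_
      rintro ⟨b, s⟩ ⟨hb, -⟩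
      simp only [mem_singleton_iff] at hb
      norm_num [hb]
  · intro b hb s hs
    rcases hb1 b hb with rfl | rfl
    · simp [aq]
    · norm_num [aq']
  · intro b hb
    rcases hb1 b hb with rfl | rfl
    · simp [a1]
    · norm_num [a1']
  · intro b hb
    rcases hb1 b hb with rfl | rfl
    · simp [a0]
    · norm_num [a0']
  · intro u hu s hs
    exact hm u hu s hs.1

/-- Along a path, the end of the deformation lifts to `Γ`: local lifts over a subdivision are
translated by elements of the stabilizer of `y` so as to match. -/
theorem lift_interval (A : Slice (Γ := Γ) S.q y U U') {a : ℝ → Y} (ha : Continuous a) (haU : ∀ s, S.q (a s) ∈ U) (T : ℝ) (hT : 0 ≤ T) :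
    ∃ K : ℝ → Γ, ContinuousOn K (Icc 0 T) ∧ ∀ s ∈ Icc 0 T, A.D (a s) 1 = K s • y := by
  -- local lifts along the path
  have hloc : ∀ s, ∃ W : Set ℝ, IsOpen W ∧ s ∈ W ∧ ∃ k : ℝ → Γ, ContinuousOn k W ∧ ∀ s' ∈ W, A.D (a s') 1 = k s' • y := by
    intro s
    obtain ⟨V, hV, k, hk, hkD⟩ := A.lift (a s) (haU s)
    refine ⟨interior (a ⁻¹' V), isOpen_interior, mem_interior_iff_mem_nhds.2 (ha.continuousAt hV), k ∘ a, ?_, ?_⟩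
    · exact hk.comp ha.continuousOn (fun s' hs' => (interior_subset hs' : s' ∈ a ⁻¹' V))
    · intro s' hs'
      exact hkD _ (interior_subset hs' : s' ∈ a ⁻¹' V)
  choose W hWo hW k hk hkD using hloc
  obtain ⟨t, t0, tm, ⟨N, hN⟩, ht⟩ := exists_monotone_Icc_subset_open_cover_Icc hT (c := fun i => (Subtype.val ⁻¹' W i : Set (Icc (0:ℝ) T)))
    (fun i => (hWo i).preimage continuous_subtype_val) (fun x _ => mem_iUnion.2 ⟨x, hW x⟩)
  have step : ∀ m, ∃ K : ℝ → Γ, ContinuousOn K (Icc 0 (t m)) ∧ ∀ s ∈ Icc 0 (t m : ℝ), A.D (a s) 1 = K s • y := by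
    intro m
    induction m with
    | zero =>
      rw [t0]
      refine ⟨k 0, ?_, ?_⟩
      · simp
      · intro s hs
        have : s = 0 := le_antisymm hs.2 hs.1
        subst this
        exact hkD 0 0 (hW 0)
    | succ m ih =>
      obtain ⟨K, hK, hKD⟩ := ih
      obtain ⟨w, hw⟩ := ht m
      replace hw : Icc (t m : ℝ) (t (m+1)) ⊆ W w := fun s hs =>
        hw (show (⟨s, (t m).2.1.trans hs.1, hs.2.trans (t (m+1)).2.2⟩ : Icc (0:ℝ) T) ∈ Icc (t m) (t (m+1)) from hs)
      have hmm : (t m : ℝ) ≤ t (m+1) := tm (Nat.le_succ m)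
      obtain ⟨c, hc⟩ : ∃ c, c = ((t m : Icc (0:ℝ) T) : ℝ) := ⟨_, rfl⟩
      rw [← hc] at hw hmm hK hKD
      have hcw : c ∈ W w := hw ⟨le_refl _, hmm⟩
      have h0c : 0 ≤ c := hc ▸ (t m).2.1
      set K' : ℝ → Γ := fun s => k w s * ((k w c)⁻¹ * K c) with hK'
      have hst : ((k w c)⁻¹ * K c) • y = y := by
        rw [mul_smul, ← hKD c ⟨h0c, le_refl _⟩, hkD w c hcw, inv_smul_smul]
      refine ⟨fun s => if s ≤ c then K s else K' s, ?_, ?_⟩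
      · have hsub : Icc 0 (t (m+1) : ℝ) ⊆ Icc 0 c ∪ Icc c (t (m+1)) := Icc_subset_Icc_union_Icc
        refine ContinuousOn.mono ?_ hsub
        refine ContinuousOn.union_of_isClosed ?_ ?_ isClosed_Icc isClosed_Icc
        · exact hK.congr (fun s hs => if_pos hs.2)
        · have : ContinuousOn K' (Icc c (t (m+1))) := ((hk w).mono hw).mul continuousOn_const
          refine this.congr ?_
          intro s hs
          dsimp only
          split_ifs with h
          · have : s = c := le_antisymm h hs.1
            subst this
            simp [hK']
          · rfl
      · intro s hs
        dsimp only
        split_ifs with h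
        · exact hKD s ⟨hs.1, h⟩
        · push Not at h
          rw [hkD w s (hw ⟨h.le, hs.2⟩), hK']
          dsimp only
          rw [mul_smul, hst]
  obtain ⟨K, hK⟩ := step N
  rw [hN N le_rfl] at hK
  exact ⟨K, hK⟩

end Setup
end Slices

/-! ### Lifting over a square -/

namespace Setup
variable {Γ Y X : Type*} [Group Γ] [TopologicalSpace Γ] [TopologicalSpace Y] [TopologicalSpace X]
  [MulAction Γ Y]
variable {S : Setup Γ Y X} {y : Y} {U U' : Set X}
variable [IsTopologicalGroup Γ]

/-- Around a loop, the end of the deformation lifts to a loop in `Γ`: the lift along the circle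
changes by an element of the stabilizer of `y`, which is joined to `1` inside the stabilizer. -/
theorem lift_sphere (A : Slice (Γ := Γ) S.q y U U') {a : ℝ × ℝ → Y} (ha : ContinuousOn a (sphere 0 1))
    (haU : ∀ b ∈ sphere (0:ℝ×ℝ) 1, S.q (a b) ∈ U) :
    ∃ k : ℝ × ℝ → Γ, ContinuousOn k (sphere 0 1) ∧ ∀ b ∈ sphere (0:ℝ×ℝ) 1, A.D (a b) 1 = k b • y := by
  set w : ℝ → ℝ × ℝ := fun θ => (Real.cos θ, Real.sin θ) with hw
  have hwc : Continuous w := by fun_prop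
  have hw0 : ∀ θ, w θ ≠ 0 := by
    intro θ h
    simp only [hw, Prod.mk_eq_zero] at h
    have := Real.sin_sq_add_cos_sq θ
    rw [h.1, h.2] at this; norm_num at this
  set u : ℝ → ℝ × ℝ := fun θ => ‖w θ‖⁻¹ • w θ with hu
  have huc : Continuous u := (hwc.norm.inv₀ (fun θ => norm_ne_zero_iff.2 (hw0 θ))).smul hwc
  have huS : ∀ θ, u θ ∈ sphere (0:ℝ×ℝ) 1 := by
    intro θ
    have := norm_ne_zero_iff.2 (hw0 θ)
    rw [mem_sphere_zero_iff_norm, hu, norm_smul, norm_inv, norm_norm, inv_mul_cancel₀ this]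
  have hau : Continuous (a ∘ u) := ha.comp_continuous huc huS
  have hT : (0:ℝ) < 2 * Real.pi := Real.two_pi_pos
  obtain ⟨K, hK, hKD⟩ := lift_interval A hau (fun s => haU _ (huS s)) _ hT.le
  have e0 : u (2*Real.pi) = u 0 := by simp [hu, hw]
  have hst : ((K (2*Real.pi))⁻¹ * K 0) • y = y := by
    have h0 := hKD 0 ⟨le_rfl, hT.le⟩
    have h1 := hKD (2*Real.pi) ⟨hT.le, le_rfl⟩
    rw [comp_apply, e0] at h1
    rw [mul_smul, ← h0, comp_apply, h1, inv_smul_smul]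
  -- the monodromy is removed by a path inside the stabilizer
  obtain ⟨κ, hκ, κ0, κ1, hκy⟩ := S.conn ((K (2*Real.pi))⁻¹ * K 0)
  set K' : ℝ → Γ := fun s => K s * κ (s / (2*Real.pi)) with hK'
  have hK'c : ContinuousOn K' (Icc 0 (2*Real.pi)) := hK.mul (by fun_prop)
  have hK'D : ∀ s ∈ Icc 0 (2*Real.pi), A.D (a (u s)) 1 = K' s • y := by
    intro s hs
    rw [hK', mul_smul, hκy _ _ hst]; exact hKD s hs
  have hK'0 : K' 0 = K' (0 + 2*Real.pi) := by
    simp only [hK', zero_div, κ0, mul_one, zero_add, div_self hT.ne', κ1, mul_inv_cancel_left]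
  have : Fact (0 < 2 * Real.pi) := ⟨hT⟩
  set L : AddCircle (2*Real.pi) → Γ := AddCircle.liftIco (2*Real.pi) 0 K' with hL
  have hLc : Continuous L := AddCircle.liftIco_continuous hK'0 (by rw [zero_add]; exact hK'c)
  set z : ℝ × ℝ → ℂ := fun b => ⟨b.1, b.2⟩ with hz
  have hzc : Continuous z := by
    have : z = fun b : ℝ × ℝ => (b.1 : ℂ) + b.2 * Complex.I := by
      ext b; apply Complex.ext <;> simp [hz]
    rw [this]; fun_prop
  have hz0 : ∀ b ∈ sphere (0:ℝ×ℝ) 1, z b ≠ 0 := by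
    intro b hb h
    have h1 := congrArg Complex.re h
    have h2 := congrArg Complex.im h
    simp only [hz, Complex.zero_re, Complex.zero_im] at h1 h2
    have : b = 0 := Prod.ext h1 h2
    rw [this] at hb; simp at hb
  refine ⟨fun b => L ((Complex.arg (z b) : Real.Angle) : AddCircle (2*Real.pi)), ?_, ?_⟩
  · intro b hb
    refine ContinuousAt.continuousWithinAt ?_
    refine hLc.continuousAt.comp (f := fun b => ((Complex.arg (z b) : Real.Angle) : AddCircle (2*Real.pi))) ?_
    exact (Complex.continuousAt_arg_coe_angle (hz0 b hb)).comp (f := z) hzc.continuousAt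
  · intro b hb
    obtain ⟨θ, hθ, hθe⟩ : ∃ θ ∈ Ico 0 (0 + 2*Real.pi), ((θ : ℝ) : AddCircle (2*Real.pi)) = ((Complex.arg (z b) : Real.Angle) : AddCircle (2*Real.pi)) := by
      exact ⟨_, (AddCircle.equivIco (2*Real.pi) 0 (Complex.arg (z b) : Real.Angle)).2, AddCircle.coe_equivIco⟩
    have hcos : Real.cos θ = Real.cos (Complex.arg (z b)) := by
      have := congrArg Real.Angle.cos (hθe : (θ : Real.Angle) = (Complex.arg (z b) : Real.Angle))
      exact (Real.Angle.cos_coe θ).symm.trans (this.trans (Real.Angle.cos_coe _))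
    have hsin : Real.sin θ = Real.sin (Complex.arg (z b)) := by
      have := congrArg Real.Angle.sin (hθe : (θ : Real.Angle) = (Complex.arg (z b) : Real.Angle))
      exact (Real.Angle.sin_coe θ).symm.trans (this.trans (Real.Angle.sin_coe _))
    have hub : u θ = b := by
      have hnz : 0 < ‖z b‖ := norm_pos_iff.2 (hz0 b hb)
      have h1 : b = ‖z b‖ • w θ := by
        ext
        · simp only [hw, hcos, Prod.smul_fst, smul_eq_mul, Complex.cos_arg (hz0 b hb)]
          field_simp
          simp [hz]
        · simp only [hw, hsin, Prod.smul_snd, smul_eq_mul, Complex.sin_arg]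
          field_simp
          simp [hz]
      have hb1 : ‖b‖ = 1 := by simpa using hb
      have h2 : ‖z b‖ * ‖w θ‖ = 1 := by
        rw [h1, norm_smul] at hb1
        simpa using hb1
      have h3 : ‖w θ‖⁻¹ = ‖z b‖ := (eq_inv_of_mul_eq_one_left h2).symm
      rw [hu]; dsimp only; rw [h3, ← h1]
    dsimp only
    rw [← hθe, hL, AddCircle.liftIco_coe_apply hθ, ← hK'D θ ⟨hθ.1, by linarith [hθ.2]⟩, hub]

variable [ContinuousSMul Γ Y]

/-- A square that `f` maps into a slice neighbourhood can be filled relative to a given lift on its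
boundary. The boundary loop is deformed to `k b • y`; as `k` is continuous, a path from `y` to the fixed point
moves it on to a constant loop. -/
theorem square (A : Slice (Γ := Γ) S.q y U U') {f : ℝ × ℝ → X} {F : ℝ × ℝ → Y} {c : ℝ × ℝ}
    (hf : ∀ b ∈ closedBall (0:ℝ×ℝ) 1, f (c + b) ∈ U)
    (hF : ContinuousOn (fun b => F (c + b)) (sphere 0 1))
    (hqF : ∀ b ∈ sphere (0:ℝ×ℝ) 1, S.q (F (c + b)) = f (c + b)) :
    Fillable S.q f F c univ univ := by
  have hFU : ∀ b ∈ sphere (0:ℝ×ℝ) 1, S.q (F (c + b)) ∈ U := fun b hb => by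
    rw [hqF b hb]; exact hf b (sphere_subset_closedBall hb)
  have hU : ∀ u ∈ U, S.q (S.l u) ∈ U := fun u hu => by rwa [q_l]
  obtain ⟨k, hk, hkD⟩ := lift_sphere A hF hFU
  obtain ⟨γ, hγ, γ0, γ1⟩ := S.path y
  refine ⟨U, fun u s => if s ≤ 1/2 then S.q (A.D (S.l u) (2*s)) else S.q (γ (2*s-1)), S.one,
    fun b s => if s ≤ 1/2 then A.D (F (c + b)) (2*s) else k b • γ (2*s-1), hf, ?_, ?_, ?_, ?_, ?_, ?_, ?_,
    fun _ _ _ _ => mem_univ _, mem_univ _, fun _ _ _ _ => mem_univ _⟩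
  · have hsub : U ×ˢ Icc (0:ℝ) 1 ⊆ {z | z ∈ U ×ˢ (univ : Set ℝ) ∧ z.2 ≤ 1/2} ∪ {z | z ∈ U ×ˢ (univ : Set ℝ) ∧ 1/2 ≤ z.2} := by
      rintro ⟨u, s⟩ ⟨hu, -⟩
      rcases le_total s (1/2) with h | h
      · exact Or.inl ⟨⟨hu, mem_univ _⟩, h⟩
      · exact Or.inr ⟨⟨hu, mem_univ _⟩, h⟩
    have h1 : ContinuousOn (fun z : X × ℝ => S.q (A.D (S.l z.1) (2*z.2))) (U ×ˢ univ) :=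
      (contDbar A).comp (f := fun z : X × ℝ => (z.1, 2*z.2)) (by fun_prop) (fun z hz => ⟨hz.1, mem_univ _⟩)
    have h2 : ContinuousOn (fun z : X × ℝ => S.q (γ (2*z.2-1))) (U ×ˢ univ) :=
      (S.hq.continuous.comp (hγ.comp (by fun_prop))).continuousOn
    refine ContinuousOn.congr (f := fun z : X × ℝ => if z.2 ≤ 1/2 then S.q (A.D (S.l z.1) (2*z.2)) else S.q (γ (2*z.2-1))) ?_ (fun _ _ => rfl)
    refine ContinuousOn.if ?_ (h1.mono ?_) (h2.mono ?_)
    · rintro z ⟨hz, hz'⟩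
      have h : z.2 = 1/2 := frontier_le_subset_eq continuous_snd continuous_const hz'
      obtain ⟨g, hg⟩ := qD1 A _ (hU z.1 hz.1)
      norm_num [h, γ0, hg, qsmul]
    · exact fun z hz => ⟨hz.1.1, mem_univ _⟩
    · exact fun z hz => ⟨hz.1.1, mem_univ _⟩
  · intro u hu
    simp [A.zero _ (hU u hu), q_l]
  · intro u hu
    norm_num [γ1]
  · have h1 : ContinuousOn (fun z : (ℝ × ℝ) × ℝ => A.D (F (c + z.1)) (2*z.2)) (sphere 0 1 ×ˢ univ) := by
      rintro ⟨b, s⟩ ⟨hb, -⟩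
      have := A.cont _ (hFU b hb) (2*s)
      refine ContinuousAt.comp_continuousWithinAt (g := uncurry A.D) (f := fun z : (ℝ × ℝ) × ℝ => (F (c + z.1), 2*z.2)) this ?_
      have h3 : ContinuousOn (fun z : (ℝ × ℝ) × ℝ => (F (c + z.1), 2*z.2)) (sphere 0 1 ×ˢ univ) :=
        ContinuousOn.prodMk (hF.comp continuousOn_fst (fun z hz => hz.1)) (by fun_prop)
      exact h3 _ ⟨hb, mem_univ _⟩
    have h2 : ContinuousOn (fun z : (ℝ × ℝ) × ℝ => k z.1 • γ (2*z.2-1)) (sphere 0 1 ×ˢ univ) :=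
      (hk.comp continuousOn_fst (fun z hz => hz.1)).smul (hγ.comp (by fun_prop)).continuousOn
    refine ContinuousOn.congr (f := fun z : (ℝ × ℝ) × ℝ => if z.2 ≤ 1/2 then A.D (F (c + z.1)) (2*z.2) else k z.1 • γ (2*z.2-1)) ?_ (fun _ _ => rfl)
    refine ContinuousOn.if ?_ (h1.mono ?_) (h2.mono ?_)
    · rintro z ⟨hz, hz'⟩
      have h : z.2 = 1/2 := frontier_le_subset_eq continuous_snd continuous_const hz'
      norm_num [h, γ0, hkD _ hz.1]
    · exact fun z hz => ⟨hz.1.1, mem_univ _⟩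
    · exact fun z hz => ⟨hz.1.1, mem_univ _⟩
  · intro b hb s hs
    dsimp only
    split_ifs
    · rw [← qD A _ (hFU b hb), hqF b hb]
    · exact qsmul _ _
  · intro b hb
    norm_num [γ1, S.fix]
  · intro b hb
    simp [A.zero _ (hFU b hb)]

end Setup

/-! ### Grid lines -/


/-- A homotopy that is controlled only for times in the unit interval. -/
theorem FH.of_Icc {X : Type*} [TopologicalSpace X] {L : ℝ} {x : X} {H : ℝ → ℝ × ℝ → X}
    (hH : Continuous (uncurry H)) (hx : ∀ t ∈ Icc (0:ℝ) 1, ∀ p ∉ Sq L, H t p = x) : FH L (H 0) (H 1) := by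
  refine ⟨fun t => H (max 0 (min 1 t)), ?_, by norm_num, by norm_num, ?_⟩
  · exact hH.comp (f := fun z : ℝ × (ℝ × ℝ) => (max 0 (min 1 z.1), z.2)) (by fun_prop)
  · intro t p hp p' hp'
    have : max 0 (min 1 t) ∈ Icc (0:ℝ) 1 := ⟨le_max_left _ _, max_le zero_le_one (min_le_left _ _)⟩
    dsimp only
    rw [hx _ this p hp, hx _ this p' hp']

/-- Every point off the square lies in a cell of the grid all of which lies off the square. -/
theorem off_square (N : ℕ) (p : ℝ × ℝ) (hp : p ∉ Sq (2 * N)) :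
    ∃ k, ∃ b ∈ closedBall (0:ℝ×ℝ) 1, p = grid2.c k + b ∧
      ∀ b' ∈ closedBall (0:ℝ×ℝ) 1, grid2.c k + b' ∉ Sq (2 * N) := by
  have key : ∀ a : ℝ, ¬ (0 < a ∧ a < 2 * N) → ∃ i : ℤ, |a - (2*i+1)| ≤ 1 ∧
      ∀ b : ℝ, |b| ≤ 1 → ¬ (0 < 2*i+1+b ∧ 2*i+1+b < 2 * N) := by
    intro a ha
    rcases le_or_gt a 0 with h | h
    · refine ⟨⌈a/2⌉ - 1, ?_, ?_⟩
      · have h1 := Int.le_ceil (a/2)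
        have h2 := Int.ceil_lt_add_one (a/2)
        push_cast
        rw [abs_le]; constructor <;> linarith
      · rintro b hb ⟨h1, -⟩
        have : ⌈a/2⌉ ≤ 0 := Int.ceil_le.2 (by push_cast; linarith)
        have : (⌈a/2⌉:ℝ) ≤ 0 := by exact_mod_cast this
        push_cast at h1
        linarith [(abs_le.1 hb).2]
    · have h' : 2 * (N:ℝ) ≤ a := by by_contra! h'; exact ha ⟨h, h'⟩
      refine ⟨⌊a/2⌋, ?_, ?_⟩
      · have h1 := Int.floor_le (a/2)
        have h2 := Int.lt_floor_add_one (a/2)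
        rw [abs_le]; constructor <;> linarith
      · rintro b hb ⟨-, h1⟩
        have : (N:ℤ) ≤ ⌊a/2⌋ := Int.le_floor.2 (by push_cast; linarith)
        have : (N:ℝ) ≤ ⌊a/2⌋ := by exact_mod_cast this
        linarith [(abs_le.1 hb).1]
  have gen : ∀ a : ℝ, ∃ i : ℤ, |a - (2*i+1)| ≤ 1 := fun a => by
    refine ⟨⌊a/2⌋, ?_⟩
    have h1 := Int.floor_le (a/2)
    have h2 := Int.lt_floor_add_one (a/2)
    rw [abs_le]; constructor <;> linarith
  have fin : ∀ i j : ℤ, |p.1 - (2*i+1)| ≤ 1 → |p.2 - (2*j+1)| ≤ 1 →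
      ∃ b ∈ closedBall (0:ℝ×ℝ) 1, p = grid2.c (i, j) + b := by
    intro i j hi hj
    refine ⟨p - grid2.c (i, j), ?_, by simp⟩
    rw [mem_closedBall_zero_iff, Prod.norm_def]
    exact max_le hi hj
  by_cases h1 : 0 < p.1 ∧ p.1 < 2 * N
  · have h2 : ¬ (0 < p.2 ∧ p.2 < 2 * N) := fun h => hp ⟨h1.1, h1.2, h.1, h.2⟩
    obtain ⟨i, hi⟩ := gen p.1
    obtain ⟨j, hj, hj'⟩ := key p.2 h2
    obtain ⟨b, hb, e⟩ := fin i j hi hj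
    refine ⟨(i, j), b, hb, e, fun b' hb' h => ?_⟩
    rw [mem_closedBall_zero_iff, Prod.norm_def] at hb'
    exact hj' b'.2 ((le_max_right _ _).trans hb') ⟨h.2.2.1, h.2.2.2⟩
  · obtain ⟨j, hj⟩ := gen p.2
    obtain ⟨i, hi, hi'⟩ := key p.1 h1
    obtain ⟨b, hb, e⟩ := fin i j hi hj
    refine ⟨(i, j), b, hb, e, fun b' hb' h => ?_⟩
    rw [mem_closedBall_zero_iff, Prod.norm_def] at hb'
    exact hi' b'.1 ((le_max_left _ _).trans hb') ⟨h.1, h.2.1⟩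

theorem mem_sphere_prod (b : ℝ × ℝ) (hb : b ∈ sphere (0:ℝ×ℝ) 1) :
    (|b.1| ≤ 1 ∧ (b.2 = 1 ∨ b.2 = -1)) ∨ (|b.2| ≤ 1 ∧ (b.1 = 1 ∨ b.1 = -1)) := by
  rw [mem_sphere_zero_iff_norm, Prod.norm_def, Real.norm_eq_abs, Real.norm_eq_abs] at hb
  have h1 : |b.1| ≤ 1 := hb ▸ le_max_left _ _
  have h2 : |b.2| ≤ 1 := hb ▸ le_max_right _ _
  rcases max_choice |b.1| |b.2| with h | h <;> rw [hb] at h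
  · exact Or.inr ⟨h2, eq_or_eq_neg_of_abs_eq h.symm⟩
  · exact Or.inl ⟨h1, eq_or_eq_neg_of_abs_eq h.symm⟩

/-- Maps on the horizontal and vertical grid lines that agree at the vertices form a map on the
one-skeleton of the grid of squares. -/
theorem skeleton {Z : Type*} [TopologicalSpace Z] {hor ver : ℤ → ℝ → ℝ → Z}
    (hh : ∀ j, Continuous (uncurry (hor j))) (hv : ∀ i, Continuous (uncurry (ver i)))
    (hhv : ∀ (i j : ℤ) v, hor j v (2*i) = ver i v (2*j)) :
    ∃ s : ℝ → ℝ × ℝ → Z, (∀ (j : ℤ) v a, s v (a, 2*j) = hor j v a) ∧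
      (∀ (i : ℤ) v a, s v (2*i, a) = ver i v a) ∧
      ∀ k, ContinuousOn (uncurry fun v b => s v (grid2.c k + b)) (univ ×ˢ sphere 0 1) := by
  classical
  set s : ℝ → ℝ × ℝ → Z := fun v p => if p.2 = 2*⌊p.2/2⌋ then hor ⌊p.2/2⌋ v p.1 else ver ⌊p.1/2⌋ v p.2 with hs
  have fl : ∀ i : ℤ, ⌊(2*i:ℝ)/2⌋ = i := fun i => by rw [mul_div_cancel_left₀ _ two_ne_zero]; simp
  have s1 : ∀ (j : ℤ) v a, s v (a, 2*j) = hor j v a := by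
    intro j v a
    simp only [hs, fl, if_true]
  have s2 : ∀ (i : ℤ) v a, s v (2*i, a) = ver i v a := by
    intro i v a
    simp only [hs, fl]
    split_ifs with h
    · rw [hhv, ← h]
    · rfl
  refine ⟨s, s1, s2, ?_⟩
  rintro ⟨i, j⟩
  have hsub : (univ : Set ℝ) ×ˢ sphere (0:ℝ×ℝ) 1 ⊆ (({z | z.2.2 = 1} ∪ {z | z.2.2 = -1}) ∪ {z | z.2.1 = 1}) ∪ {z | z.2.1 = -1} := by
    rintro ⟨v, b⟩ ⟨-, hb⟩
    have := mem_sphere_prod b hb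
    simp only [mem_union, mem_ofPred_eq]
    tauto
  have c1 : ∀ a : ℝ, IsClosed {z : ℝ × (ℝ × ℝ) | z.2.2 = a} := fun a => isClosed_eq (by fun_prop) continuous_const
  have c2 : ∀ a : ℝ, IsClosed {z : ℝ × (ℝ × ℝ) | z.2.1 = a} := fun a => isClosed_eq (by fun_prop) continuous_const
  refine ContinuousOn.mono ?_ hsub
  refine ContinuousOn.union_of_isClosed (ContinuousOn.union_of_isClosed (ContinuousOn.union_of_isClosed
    ?_ ?_ (c1 _) (c1 _)) ?_ ((c1 _).union (c1 _)) (c2 _)) ?_ (((c1 _).union (c1 _)).union (c2 _)) (c2 _)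
  · refine ((hh (j+1)).comp (f := fun z : ℝ × (ℝ × ℝ) => (z.1, 2*i+1+z.2.1)) (by fun_prop)).continuousOn.congr ?_
    rintro ⟨v, a, b⟩ hb
    simp only [mem_ofPred_eq] at hb
    subst hb
    refine Eq.trans ?_ (s1 (j+1) v (2*i+1+a))
    simp only [uncurry, grid2, Prod.mk_add_mk]
    congr 2; push_cast; ring
  · refine ((hh j).comp (f := fun z : ℝ × (ℝ × ℝ) => (z.1, 2*i+1+z.2.1)) (by fun_prop)).continuousOn.congr ?_
    rintro ⟨v, a, b⟩ hb
    simp only [mem_ofPred_eq] at hb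
    subst hb
    refine Eq.trans ?_ (s1 j v (2*i+1+a))
    simp only [uncurry, grid2, Prod.mk_add_mk]
    congr 2; ring
  · refine ((hv (i+1)).comp (f := fun z : ℝ × (ℝ × ℝ) => (z.1, 2*j+1+z.2.2)) (by fun_prop)).continuousOn.congr ?_
    rintro ⟨v, a, b⟩ hb
    simp only [mem_ofPred_eq] at hb
    subst hb
    refine Eq.trans ?_ (s2 (i+1) v (2*j+1+b))
    simp only [uncurry, grid2, Prod.mk_add_mk]
    congr 2; push_cast; ring
  · refine ((hv i).comp (f := fun z : ℝ × (ℝ × ℝ) => (z.1, 2*j+1+z.2.2)) (by fun_prop)).continuousOn.congr ?_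
    rintro ⟨v, a, b⟩ hb
    simp only [mem_ofPred_eq] at hb
    subst hb
    refine Eq.trans ?_ (s2 i v (2*j+1+b))
    simp only [uncurry, grid2, Prod.mk_add_mk]
    congr 2; ring

namespace Setup
variable {Γ Y X : Type*} [Group Γ] [TopologicalSpace Γ] [TopologicalSpace Y] [TopologicalSpace X]
  [MulAction Γ Y] [IsTopologicalGroup Γ] [ContinuousSMul Γ Y] 
variable {S : Setup Γ Y X}

/-- Filling all intervals of a grid line. The resulting lift equals the section `l` at the vertices, and
nothing moves on intervals where `φ` is constantly `x`. -/
theorem line {φ : ℝ → X} (hφ : Continuous φ) (x : X) {O : ℤ → Set X}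
    (h : ∀ i : ℤ, ∃ y U, Nonempty (Slice (Γ := Γ) S.q y U (O i)) ∧
      ∀ b ∈ closedBall (0:ℝ) 1, φ (2*i+1+b) ∈ U) :
    ∃ (H : ℝ → ℝ → X) (Φ : ℝ → Y), Continuous (uncurry H) ∧ Continuous Φ ∧ H 0 = φ ∧ H 1 = S.q ∘ Φ ∧
      (∀ v (i : ℤ), H v (2*i) = φ (2*i)) ∧ (∀ i : ℤ, Φ (2*i) = S.l (φ (2*i))) ∧
      (∀ (i : ℤ) v, ∀ b ∈ closedBall (0:ℝ) 1, H v (2*i+1+b) ∈ O i ∨ H v (2*i+1+b) = φ (2*i+1+b)) ∧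
      ∀ i : ℤ, (∀ b ∈ closedBall (0:ℝ) 1, φ (2*i+1+b) = x) →
        ∀ v, ∀ b ∈ closedBall (0:ℝ) 1, H v (2*i+1+b) = x ∧ Φ (2*i+1+b) = S.l x := by
  classical
  set T : ℤ → Prop := fun i => ∀ b ∈ closedBall (0:ℝ) 1, φ (2*i+1+b) = x with hT
  have hfill : ∀ i, Fillable S.q φ (S.l ∘ φ) (grid1.c i) (if T i then {x} else O i) (if T i then {S.l x} else univ) := by
    intro i
    split_ifs with hi
    · have := Fillable.trivial (q := S.q) (f := φ) (F₀ := S.l ∘ φ) (c := grid1.c i) (S.l x)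
        (fun b hb => by rw [q_l]; exact hi b hb)
        (fun b hb => congrArg S.l (hi b (sphere_subset_closedBall hb)))
      rwa [q_l] at this
    · obtain ⟨y, U, ⟨A⟩, hU⟩ := h i
      exact edge A hU
  obtain ⟨H, Φ, hH, hΦ, H0, H1, HS, ΦS, HO, ΦN⟩ := grid1.fill hφ hfill
  have hcl : ∀ v : ℝ, max 0 (min 1 v) ∈ Icc (0:ℝ) 1 := fun v => ⟨le_max_left _ _, max_le zero_le_one (min_le_left _ _)⟩
  have hi : ∀ i : ℤ, (2*i : ℝ) = grid1.c i + (-1) := fun i => by simp [grid1]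
  have hm : (-1:ℝ) ∈ sphere (0:ℝ) 1 := by simp
  refine ⟨fun v => H (max 0 (min 1 v)), Φ, ?_, hΦ, by norm_num [H0], by norm_num [H1], ?_, ?_, ?_, ?_⟩
  · exact hH.comp (f := fun z : ℝ × ℝ => (max 0 (min 1 z.1), z.2)) (by fun_prop)
  · intro v i
    rw [hi]; exact HS i _ (hcl v) _ hm
  · intro i
    rw [hi]; exact ΦS i _ hm
  · intro i v b hb
    have := HO i _ (hcl v) b hb
    split_ifs at this with hi
    · exact Or.inr (this.trans (hi b hb).symm)
    · exact Or.inl this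
  · intro i hi v b hb
    have h1 := HO i _ (hcl v) b hb
    have h2 := ΦN i b hb
    rw [if_pos hi] at h1 h2
    exact ⟨h1, h2⟩

end Setup

/-! ### Lifting a map of the plane -/


/-- The retraction of the plane onto the closed unit square. -/
noncomputable def clampSq (p : ℝ × ℝ) : ℝ × ℝ := (max 0 (min 1 p.1), max 0 (min 1 p.2))

theorem clampSq_dist (p p' : ℝ × ℝ) : dist (clampSq p) (clampSq p') ≤ dist p p' := by
  have key : ∀ a b : ℝ, dist (max 0 (min 1 a)) (max 0 (min 1 b)) ≤ dist a b := by
    intro a b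
    have h1 := abs_max_sub_max_le_abs (min 1 a) (min 1 b) 0
    have h2 := abs_min_sub_min_le_max 1 a 1 b
    rw [Real.dist_eq, Real.dist_eq, max_comm, max_comm 0]
    refine h1.trans (h2.trans ?_)
    simp
  simp only [clampSq, Prod.dist_eq]
  exact max_le_max (key _ _) (key _ _)

theorem clampSq_mem (p : ℝ × ℝ) : clampSq p ∈ Icc (0:ℝ) 1 ×ˢ Icc (0:ℝ) 1 :=
  ⟨⟨le_max_left _ _, max_le zero_le_one (min_le_left _ _)⟩,
    ⟨le_max_left _ _, max_le zero_le_one (min_le_left _ _)⟩⟩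

theorem clampSq_apply {X : Type*} {f : ℝ × ℝ → X} {x : X} (hx : ∀ p ∉ Sq 1, f p = x) (p : ℝ × ℝ) :
    f (clampSq p) = f p := by
  by_cases hp : p ∈ Sq 1
  · obtain ⟨a, b, c, d⟩ := hp
    congr 1
    simp only [clampSq]
    rw [min_eq_right b.le, max_eq_right a.le, min_eq_right d.le, max_eq_right c.le]
  · rw [hx p hp, hx]
    intro h
    apply hp
    obtain ⟨a, b, c, d⟩ := h
    simp only [clampSq, lt_max_iff, lt_min_iff, max_lt_iff, min_lt_iff, lt_irrefl, false_or] at a b c d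
    exact ⟨a.2, b.2, c.2, d.2⟩

namespace Setup
variable {Γ Y X : Type*} [Group Γ] [TopologicalSpace Γ] [TopologicalSpace Y] [TopologicalSpace X]
  [MulAction Γ Y] 
variable {S : Setup Γ Y X}

/-- Every small ball is mapped into a coarse slice `Uc`, and into a finer slice whose retraction
stays inside the coarse slices of all nearby centres. -/
theorem labels {f : ℝ × ℝ → X} (hf : Continuous f) {x : X} (hx : ∀ p ∉ Sq 1, f p = x) :
    ∃ δ > 0, ∃ Uc : ℝ × ℝ → Set X, (∀ c, ∃ y, Nonempty (Slice (Γ := Γ) S.q y (Uc c) univ)) ∧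
      (∀ c, ∀ p ∈ ball c δ, f p ∈ Uc c) ∧
      ∀ c', ∃ y U O, Nonempty (Slice (Γ := Γ) S.q y U O) ∧ (∀ p ∈ ball c' δ, f p ∈ U) ∧
        ∀ c, dist c c' < δ → O ⊆ Uc c := by
  classical
  set g : ℝ × ℝ → X := fun p => S.q (S.σ (f p)) with hg
  have hgc : Continuous g := S.hσ.comp hf
  have hK : IsCompact (Icc (0:ℝ) 1 ×ˢ Icc (0:ℝ) 1) := isCompact_Icc.prod isCompact_Icc
  choose U0 A0 using fun p => S.slice (f p) univ isOpen_univ (mem_univ _)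
  have hU0 : ∀ p, IsOpen (U0 p) := fun p => (A0 p).some.isOpen
  obtain ⟨t, -, ht⟩ := hK.elim_nhds_subcover (fun p => g ⁻¹' (U0 p))
    (fun p _ => ((hU0 p).preimage hgc).mem_nhds (A0 p).some.mem)
  obtain ⟨lam, hlam, hl⟩ := lebesgue_number_lemma_of_metric (ι := t) (c := fun i => g ⁻¹' (U0 i)) hK
    (fun i => (hU0 i).preimage hgc) (fun p hp => by
      obtain ⟨i, hi, h⟩ := mem_iUnion₂.1 (ht hp)
      exact mem_iUnion.2 ⟨⟨i, hi⟩, h⟩)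
  choose l hl using fun c => hl (clampSq c) (clampSq_mem c)
  set O : ℝ × ℝ → Set X := fun p => ⋂ i ∈ t.filter (fun i => g p ∈ U0 i), U0 i with hO
  have hOo : ∀ p, IsOpen (O p) := fun p => isOpen_biInter_finset (fun i _ => hU0 i)
  have hOm : ∀ p, g p ∈ O p := fun p => mem_iInter₂.2 (fun i hi => (Finset.mem_filter.1 hi).2)
  choose U1 A1 using fun p => S.slice (f p) (O p) (hOo p) (hOm p)
  have hU1 : ∀ p, IsOpen (U1 p) := fun p => (A1 p).some.isOpen
  obtain ⟨lam1, hlam1, hl1⟩ := lebesgue_number_lemma_of_metric (c := fun p => g ⁻¹' (U1 p) ∩ ball p (lam/2)) hK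
    (fun i => ((hU1 i).preimage hgc).inter isOpen_ball)
    (fun p hp => mem_iUnion.2 ⟨p, (A1 p).some.mem, mem_ball_self (by linarith)⟩)
  refine ⟨min lam1 (lam/2), lt_min hlam1 (by linarith), fun c => U0 (l c), fun c => ⟨_, A0 (l c)⟩, ?_, ?_⟩
  · intro c p hp
    have h1 : clampSq p ∈ ball (clampSq c) lam := by
      have := (clampSq_dist p c).trans_lt (mem_ball.1 hp)
      exact this.trans_le ((min_le_right _ _).trans (by linarith))
    rw [← clampSq_apply hx]
    exact S.spec _ _ (hU0 _) (hl c h1)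
  · intro c'
    obtain ⟨p, hp⟩ := hl1 (clampSq c') (clampSq_mem c')
    refine ⟨_, U1 p, O p, A1 p, ?_, ?_⟩
    · intro p' hp'
      have h1 : clampSq p' ∈ ball (clampSq c') lam1 := by
        have := (clampSq_dist p' c').trans_lt (mem_ball.1 hp')
        exact this.trans_le (min_le_left _ _)
      rw [← clampSq_apply hx]
      exact S.spec _ _ (hU1 _) (hp h1).1
    · intro c hc
      have h1 := (hp (mem_ball_self hlam1)).2
      have h2 := (clampSq_dist c c').trans_lt (hc.trans_le (min_le_right _ _))
      have h3 : p ∈ ball (clampSq c) lam := by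
        rw [mem_ball] at h1 ⊢
        rw [dist_comm] at h1 h2
        have := dist_triangle p (clampSq c') (clampSq c)
        linarith
      exact biInter_subset_of_mem (Finset.mem_coe.2 (Finset.mem_filter.2 ⟨(l c).2, hl c h3⟩))

variable [IsTopologicalGroup Γ] [ContinuousSMul Γ Y]

/-- Every map of the plane to the quotient that is constant off the unit square lifts, after a
subdivision, up to free homotopy. -/
theorem lift_plane {f : ℝ × ℝ → X} (hf : Continuous f) {x : X} (hx : ∀ p ∉ Sq 1, f p = x) :
    ∃ L > 0, ∃ F : ℝ × ℝ → Y, Continuous F ∧ (∀ p ∉ Sq L, F p = S.l x) ∧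
      FH L (fun p => f (L⁻¹ • p)) (S.q ∘ F) := by
  classical
  obtain ⟨δ, hδ, Uc, hUc, hfU, hfine⟩ := S.labels hf hx
  obtain ⟨N, hN⟩ := exists_nat_gt (2/δ)
  have hN0 : (0:ℝ) < N := lt_trans (by positivity) hN
  set L : ℝ := 2 * N with hL
  have hL0 : 0 < L := by positivity
  have hLδ : L⁻¹ * 4 < 2 * δ := by
    rw [div_lt_iff₀ hδ] at hN
    rw [inv_mul_lt_iff₀ hL0]; nlinarith
  set f' : ℝ × ℝ → X := fun p => f (L⁻¹ • p) with hf'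
  have hf'c : Continuous f' := hf.comp (by fun_prop)
  have hf'x : ∀ p ∉ Sq L, f' p = x := by
    intro p hp
    refine hx _ fun h => hp ?_
    have e : L⁻¹ * L = 1 := inv_mul_cancel₀ hL0.ne'
    have hi : 0 < L⁻¹ := by positivity
    obtain ⟨a, b, c, d⟩ := h
    simp only [Prod.smul_fst, Prod.smul_snd, smul_eq_mul] at a b c d
    rw [← e] at b d
    exact ⟨pos_of_mul_pos_right a hi.le, lt_of_mul_lt_mul_left b hi.le, pos_of_mul_pos_right c hi.le, lt_of_mul_lt_mul_left d hi.le⟩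
  have hsc : ∀ a b : ℝ × ℝ, dist a b ≤ 1 → dist (L⁻¹ • a) (L⁻¹ • b) < δ := by
    intro a b h
    rw [dist_smul₀, Real.norm_eq_abs, abs_of_pos (by positivity)]
    have : (0:ℝ) < L⁻¹ := by positivity
    nlinarith
  -- fine slices along the grid lines
  choose y1 U1 O1 A1 hU1 hO1 using fun c => hfine (L⁻¹ • c)
  have hor := fun j : ℤ => S.line (φ := fun a => f' (a, 2*j)) (by fun_prop) x
    (O := fun i => O1 (2*i+1, 2*j)) (fun i => ⟨_, _, A1 (2*i+1, 2*j), fun b hb => hU1 _ _ (hsc _ _ (by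
      simpa [Prod.dist_eq] using hb))⟩)
  choose Hh Φh Hhc Φhc Hh0 Hh1 Hhv Φhv HhO Hhx using hor
  have ver := fun i : ℤ => S.line (φ := fun b => f' (2*i, b)) (by fun_prop) x
    (O := fun j => O1 (2*i, 2*j+1)) (fun j => ⟨_, _, A1 (2*i, 2*j+1), fun b hb => hU1 _ _ (hsc _ _ (by
      simpa [Prod.dist_eq] using hb))⟩)
  choose Hv Φv Hvc Φvc Hv0 Hv1 Hvv Φvv HvO Hvx using ver
  obtain ⟨h, h1, h2, hc⟩ := skeleton Hhc Hvc (fun i j v => (Hhv j v i).trans (Hvv i v j).symm)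
  obtain ⟨Fs, F1, F2, Fc⟩ := skeleton (hor := fun j _ => Φh j) (ver := fun i _ => Φv i)
    (fun j => (Φhc j).comp continuous_snd) (fun i => (Φvc i).comp continuous_snd)
    (fun i j v => (Φhv j i).trans (Φvv i j).symm)
  -- every skeleton point of a cell lies on one of its edges
  have edges : ∀ k, ∀ b ∈ sphere (0:ℝ×ℝ) 1,
      (∃ j : ℤ, ∃ a ∈ closedBall (0:ℝ) 1, (j = k.2 ∨ j = k.2+1) ∧ grid2.c k + b = (2*k.1+1+a, (2*j:ℝ))) ∨
      (∃ i : ℤ, ∃ a ∈ closedBall (0:ℝ) 1, (i = k.1 ∨ i = k.1+1) ∧ grid2.c k + b = ((2*i:ℝ), 2*k.2+1+a)) := by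
    rintro ⟨i, j⟩ b hb
    rcases mem_sphere_prod b hb with ⟨ha, h | h⟩ | ⟨ha, h | h⟩
    · refine Or.inl ⟨j+1, b.1, by simpa using ha, Or.inr rfl, ?_⟩
      ext <;> simp [grid2, h]; ring
    · refine Or.inl ⟨j, b.1, by simpa using ha, Or.inl rfl, ?_⟩
      ext <;> simp [grid2, h]
    · refine Or.inr ⟨i+1, b.2, by simpa using ha, Or.inr rfl, ?_⟩
      ext <;> simp [grid2, h]; ring
    · refine Or.inr ⟨i, b.2, by simpa using ha, Or.inl rfl, ?_⟩
      ext <;> simp [grid2, h]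
  have h00 : ∀ k, ∀ b ∈ sphere (0:ℝ×ℝ) 1, h 0 (grid2.c k + b) = f' (grid2.c k + b) := by
    intro k b hb
    rcases edges k b hb with ⟨j, a, ha, -, e⟩ | ⟨j, a, ha, -, e⟩ <;> rw [e]
    · rw [h1, Hh0]
    · rw [h2, Hv0]
  have h11 : ∀ k, ∀ b ∈ sphere (0:ℝ×ℝ) 1, h 1 (grid2.c k + b) = S.q (Fs 0 (grid2.c k + b)) := by
    intro k b hb
    rcases edges k b hb with ⟨j, a, ha, -, e⟩ | ⟨j, a, ha, -, e⟩ <;> rw [e]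
    · rw [h1, Hh1, F1]; rfl
    · rw [h2, Hv1, F2]; rfl
  have hcell : ∀ k, ∀ b ∈ closedBall (0:ℝ×ℝ) 1, f' (grid2.c k + b) ∈ Uc (L⁻¹ • grid2.c k) := by
    intro k b hb
    exact hfU _ _ (hsc _ _ (by simpa using hb))
  have hhcell : ∀ k v, ∀ b ∈ sphere (0:ℝ×ℝ) 1, h v (grid2.c k + b) ∈ Uc (L⁻¹ • grid2.c k) := by
    intro k v b hb
    have hf := hcell k b (sphere_subset_closedBall hb)
    rcases edges k b hb with ⟨j, a, ha, hj, e⟩ | ⟨j, a, ha, hj, e⟩ <;> rw [e] at hf ⊢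
    · rw [h1]
      rcases HhO j k.1 v a ha with h' | h'
      · refine hO1 _ _ (hsc _ _ ?_) h'
        rcases hj with rfl | rfl <;> simp [grid2, Prod.dist_eq, Real.dist_eq]
        ring_nf; norm_num
      · rw [h']; exact hf
    · rw [h2]
      rcases HvO j k.2 v a ha with h' | h'
      · refine hO1 _ _ (hsc _ _ ?_) h'
        rcases hj with rfl | rfl <;> simp [grid2, Prod.dist_eq, Real.dist_eq]
        ring_nf; norm_num
      · rw [h']; exact hf
  have htriv : ∀ k, (∀ b ∈ closedBall (0:ℝ×ℝ) 1, f' (grid2.c k + b) = x) → ∀ v, ∀ b ∈ sphere (0:ℝ×ℝ) 1,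
      h v (grid2.c k + b) = x ∧ Fs 0 (grid2.c k + b) = S.l x := by
    intro k hk v b hb
    rcases edges k b hb with ⟨j, a, ha, hj, e⟩ | ⟨j, a, ha, hj, e⟩ <;> rw [e]
    · rw [h1, F1]
      refine Hhx j k.1 ?_ v a ha
      intro a' ha'
      have ha' : |a'| ≤ 1 := by simpa using ha'
      rcases hj with rfl | rfl
      · have := hk (a', -1) (by simpa [Prod.norm_def] using ha')
        simpa [grid2] using this
      · have := hk (a', 1) (by simpa [Prod.norm_def] using ha')
        rw [← this]; simp [grid2]; ring_nf
    · rw [h2, F2]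
      refine Hvx j k.2 ?_ v a ha
      intro a' ha'
      have ha' : |a'| ≤ 1 := by simpa using ha'
      rcases hj with rfl | rfl
      · have := hk (-1, a') (by simpa [Prod.norm_def] using ha')
        simpa [grid2] using this
      · have := hk (1, a') (by simpa [Prod.norm_def] using ha')
        rw [← this]; simp [grid2]; ring_nf
  -- the homotopy of the one-skeleton is extended over every square, without leaving the coarse slice
  -- of that square, after which the squares can be filled
  have hhep := fun k => hep (f := fun b => f' (grid2.c k + b)) (Continuous.continuousOn (by fun_prop))
    (h := fun v b => h v (grid2.c k + b)) ((hc k).mono (prod_mono (subset_univ _) le_rfl)) (h00 k)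
  choose G Gc G0 GS GO using hhep
  obtain ⟨K, hK, hKe⟩ := grid2.glue Gc (h := h) (fun k v hv b hb => GS k v hv b hb)
  have z0 : (0:ℝ) ∈ Icc (0:ℝ) 1 := by simp
  have z1 : (1:ℝ) ∈ Icc (0:ℝ) 1 := by simp
  have K0 : K 0 = f' := by
    ext p
    obtain ⟨k, hk⟩ := grid2.cover p
    have hb : p - grid2.c k ∈ closedBall (0:ℝ×ℝ) 1 := by simpa [dist_eq_norm] using hk
    have := hKe k 0 z0 _ hb
    rw [G0 k _ hb] at this
    simpa using this
  have Kx : ∀ v ∈ Icc (0:ℝ) 1, ∀ k, (∀ b ∈ closedBall (0:ℝ×ℝ) 1, f' (grid2.c k + b) = x) → ∀ b ∈ closedBall (0:ℝ×ℝ) 1,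
      K v (grid2.c k + b) = x := by
    intro v hv k hk b hb
    rw [hKe k v hv b hb]
    rcases GO k v hv b hb with ⟨p', hp', e⟩ | ⟨v', hv', b', hb', e⟩ <;> rw [e]
    · exact hk p' hp'
    · exact (htriv k hk v' b' hb').1
  have KU : ∀ k, ∀ b ∈ closedBall (0:ℝ×ℝ) 1, K 1 (grid2.c k + b) ∈ Uc (L⁻¹ • grid2.c k) := by
    intro k b hb
    rw [hKe k 1 z1 b hb]
    rcases GO k 1 z1 b hb with ⟨p', hp', e⟩ | ⟨v', hv', b', hb', e⟩ <;> rw [e]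
    · exact hcell k p' hp'
    · exact hhcell k v' b' hb'
  have Kq : ∀ k, ∀ b ∈ sphere (0:ℝ×ℝ) 1, S.q (Fs 0 (grid2.c k + b)) = K 1 (grid2.c k + b) := by
    intro k b hb
    rw [hKe k 1 z1 b (sphere_subset_closedBall hb), GS k 1 z1 b hb, h11 k b hb]
  have offcell : ∀ p ∉ Sq L, ∃ k, ∃ b ∈ closedBall (0:ℝ×ℝ) 1, p = grid2.c k + b ∧
      ∀ b' ∈ closedBall (0:ℝ×ℝ) 1, f' (grid2.c k + b') = x := by
    intro p hp
    obtain ⟨k, b, hb, e, he⟩ := off_square N p hp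
    exact ⟨k, b, hb, e, fun b' hb' => hf'x _ (he b' hb')⟩
  have step1 : FH L f' (K 1) := by
    rw [← K0]
    refine FH.of_Icc (x := x) hK ?_
    intro v hv p hp
    obtain ⟨k, b, hb, rfl, he⟩ := offcell p hp
    exact Kx v hv k he b hb
  set T : ℤ × ℤ → Prop := fun k => ∀ b ∈ closedBall (0:ℝ×ℝ) 1, f' (grid2.c k + b) = x with hT
  have hfill : ∀ k, Fillable S.q (K 1) (Fs 0) (grid2.c k) (if T k then {x} else univ) (if T k then {S.l x} else univ) := by
    intro k
    split_ifs with hk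
    · have := Fillable.trivial (q := S.q) (f := K 1) (F₀ := Fs 0) (c := grid2.c k) (S.l x)
        (fun b hb => by rw [q_l]; exact Kx 1 z1 k hk b hb)
        (fun b hb => (htriv k hk 0 b hb).2)
      rwa [q_l] at this
    · obtain ⟨y, ⟨A⟩⟩ := hUc (L⁻¹ • grid2.c k)
      refine square A (KU k) ?_ (Kq k)
      exact (Fc k).comp (f := fun b : ℝ × ℝ => ((0:ℝ), b)) (by fun_prop) (fun b hb => ⟨mem_univ _, hb⟩)
  have hK1 : Continuous (K 1) := hK.comp (f := fun p : ℝ × ℝ => ((1:ℝ), p)) (by fun_prop)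
  obtain ⟨H, F, hH, hF, H0, H1, -, -, HO, FN⟩ := grid2.fill hK1 hfill
  refine ⟨L, hL0, F, hF, ?_, step1.trans ?_⟩
  · intro p hp
    obtain ⟨k, b, hb, rfl, he⟩ := offcell p hp
    have := FN k b hb
    rwa [if_pos he] at this
  · rw [← H0, ← H1]
    refine FH.of_Icc (x := x) hH ?_
    intro v hv p hp
    obtain ⟨k, b, hb, rfl, he⟩ := offcell p hp
    have := HO k v hv b hb
    rwa [if_pos he] at this

end Setup

/-! ### The second homotopy group -/


/-- The second homotopy group is trivial if every map of the plane that is constant off the unit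
square is freely null homotopic. -/
theorem subsingleton_homotopyGroup {X : Type*} [TopologicalSpace X] {x : X}
    (h : ∀ f : ℝ × ℝ → X, Continuous f → (∀ p ∉ Sq 1, f p = x) → ∃ c, FH 1 f fun _ => c) :
    Subsingleton (HomotopyGroup (Fin 2) X x) := by
  suffices H : ∀ γ : GenLoop (Fin 2) X x, GenLoop.Homotopic γ GenLoop.const by
    constructor
    intro a b
    induction a using Quotient.inductionOn with | _ a => ?_
    induction b using Quotient.inductionOn with | _ b => ?_
    exact Quotient.sound ((H a).trans (H b).symm)
  intro γ
  set u : ℝ × ℝ → Fin 2 → unitInterval := fun p => ![projIcc 0 1 zero_le_one p.1, projIcc 0 1 zero_le_one p.2] with hu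
  have huc : Continuous u := by
    refine continuous_pi fun i => ?_
    fin_cases i
    · exact (continuous_projIcc (h := zero_le_one)).comp continuous_fst
    · exact (continuous_projIcc (h := zero_le_one)).comp continuous_snd
  have hub : ∀ p ∉ Sq 1, u p ∈ Cube.boundary (Fin 2) := by
    intro p hp
    by_contra hb
    apply hp
    simp only [Cube.boundary, mem_ofPred_eq, not_exists, not_or] at hb
    have h0 := hb 0
    have h1 := hb 1
    simp only [hu, Matrix.cons_val_zero, Matrix.cons_val_one] at h0 h1
    refine ⟨?_, ?_, ?_, ?_⟩ <;> by_contra! hc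
    · exact h0.1 (projIcc_of_le_left _ hc)
    · exact h0.2 (projIcc_of_right_le _ hc)
    · exact h1.1 (projIcc_of_le_left _ hc)
    · exact h1.2 (projIcc_of_right_le _ hc)
  set f : ℝ × ℝ → X := fun p => γ (u p) with hf
  have hfx : ∀ p ∉ Sq 1, f p = x := fun p hp => GenLoop.boundary γ _ (hub p hp)
  obtain ⟨c, hc⟩ := h f ((map_continuous γ.1).comp huc) hfx
  obtain ⟨K, hK, K0, K1, Kb⟩ := hc.base
  have f0 : f 0 = x := hfx 0 (by simp [Sq])
  rw [f0] at K1 Kb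
  refine ⟨⟨⟨⟨fun z => K z.1 ((z.2 0 : ℝ), (z.2 1 : ℝ)), ?_⟩, ?_, ?_⟩, ?_⟩⟩
  · exact hK.comp (f := fun z : unitInterval × (Fin 2 → unitInterval) => ((z.1:ℝ), ((z.2 0 : ℝ), (z.2 1 : ℝ)))) (by fun_prop)
  · intro y
    simp only [Icc.coe_zero, K0, hf]
    have : u ((y 0 : ℝ), (y 1 : ℝ)) = y := by
      ext i
      fin_cases i <;> simp [hu]
    rw [this]; rfl
  · intro y
    simp only [Icc.coe_one, K1]; rfl
  · intro t y hy
    simp only [ContinuousMap.coe_mk]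
    have : ((y 0 : ℝ), (y 1 : ℝ)) ∉ Sq 1 := by
      rintro ⟨a, b, c, d⟩
      obtain ⟨i, hi⟩ := hy
      fin_cases i <;> rcases hi with hi | hi <;> simp_all
    rw [Kb t t.2.1 t.2.2 _ this]
    exact (GenLoop.boundary γ y hy).symm

namespace Setup
variable {Γ Y X : Type*} [Group Γ] [TopologicalSpace Γ] [TopologicalSpace Y] [TopologicalSpace X]
  [MulAction Γ Y] [IsTopologicalGroup Γ] [ContinuousSMul Γ Y]

/-- If spheres in `Y` are freely null homotopic, then the second homotopy group of the quotient is trivial. -/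
theorem homotopyGroup (S : Setup Γ Y X) 
    (hY : ∀ L > 0, ∀ F : ℝ × ℝ → Y, ∀ y, Continuous F → (∀ p ∉ Sq L, F p = y) → ∃ c, FH L F fun _ => c) (x : X) :
    Subsingleton (HomotopyGroup (Fin 2) X x) := by
  refine subsingleton_homotopyGroup fun f hf hfx => ?_
  obtain ⟨L, hL, F, hF, hFx, hfF⟩ := S.lift_plane hf hfx
  obtain ⟨c, hc⟩ := hY L hL F _ hF hFx
  refine ⟨S.q c, ?_⟩
  have h1 : FH (L * 1) (fun p => f (L⁻¹ • p)) (fun _ => S.q c) := by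
    rw [mul_one]
    exact hfF.trans (hc.map S.hq.continuous)
  have h2 := h1.scale hL
  simpa [smul_smul, inv_mul_cancel₀ hL.ne'] using h2

end Setup

/-! ### Adjoints in a generated algebra -/


/-- If the operators `B i` and their adjoints `B' i` satisfy the moment identity `hmom`, then every
subspace invariant under all `B i` is invariant under all `B' i`. In an orthonormal basis of the subspace,
the restriction of `B i` and the compression of `B' i` have the same Hilbert–Schmidt norm, so `hmom` leaves no room for a component
of `B' i` orthogonal to the subspace. -/
theorem mapsTo_adjoint {ι V : Type*} [Fintype ι] [NormedAddCommGroup V] [InnerProductSpace ℂ V]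
    [FiniteDimensional ℂ V] (B B' : ι → V →ₗ[ℂ] V)
    (hadj : ∀ i x y, inner ℂ (B i x) y = inner ℂ x (B' i y))
    (hmom : ∀ x, ∑ i, ‖B i x‖ ^ 2 = ∑ i, ‖B' i x‖ ^ 2)
    (Z : Submodule ℂ V) (hZ : ∀ i, ∀ z ∈ Z, B i z ∈ Z) : ∀ i, ∀ z ∈ Z, B' i z ∈ Z := by
  set e := stdOrthonormalBasis ℂ Z
  have key : ∀ i, ∑ j, ‖B i (e j)‖ ^ 2 = ∑ j, ‖Z.orthogonalProjectionOnto (B' i (e j))‖ ^ 2 := by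
    intro i
    have h1 : ∀ j, ‖B i (e j)‖ ^ 2 = ∑ k, ‖inner ℂ (e k : V) (B i (e j))‖ ^ 2 := by
      intro j
      have := e.sum_sq_norm_inner_right ⟨B i (e j), hZ i _ (e j).2⟩
      simpa using this.symm
    have h2 : ∀ j, ‖Z.orthogonalProjectionOnto (B' i (e j))‖ ^ 2
        = ∑ k, ‖inner ℂ (e k : V) (B' i (e j))‖ ^ 2 := by
      intro j
      rw [← e.sum_sq_norm_inner_right]
      simp 
    simp_rw [h1, h2]
    rw [Finset.sum_comm]
    refine Finset.sum_congr rfl fun k _ => Finset.sum_congr rfl fun j _ => ?_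
    rw [← hadj, norm_inner_symm]
  have hle : ∀ v : V, ‖Z.orthogonalProjectionOnto v‖ ^ 2 ≤ ‖v‖ ^ 2 := fun v => by
    rw [Z.norm_sq_eq_add_norm_sq_projection v]; nlinarith [sq_nonneg ‖Zᗮ.orthogonalProjectionOnto v‖]
  have tot : ∑ i, ∑ j, ‖Z.orthogonalProjectionOnto (B' i (e j))‖ ^ 2 = ∑ i, ∑ j, ‖B' i (e j)‖ ^ 2 := by
    simp_rw [← key]
    rw [Finset.sum_comm, Finset.sum_comm (γ := ι)]
    exact Finset.sum_congr rfl fun j _ => hmom _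
  have each : ∀ i j, B' i (e j) ∈ Z := by
    intro i j
    have h1 := (Finset.sum_eq_sum_iff_of_le fun i _ => Finset.sum_le_sum fun j _ => hle (B' i (e j))).1 tot i (Finset.mem_univ _)
    have h2 := (Finset.sum_eq_sum_iff_of_le fun j _ => hle (B' i (e j))).1 h1 j (Finset.mem_univ _)
    rw [Z.norm_sq_eq_add_norm_sq_projection (B' i (e j))] at h2
    have h3 : ‖Zᗮ.orthogonalProjectionOnto (B' i (e j))‖ = 0 := by
      have : ‖Zᗮ.orthogonalProjectionOnto (B' i (e j))‖^2 = 0 := by linarith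
      simpa using this
    rw [norm_eq_zero, Submodule.orthogonalProjectionOnto_eq_zero_iff, Submodule.orthogonal_orthogonal] at h3
    exact h3
  intro i z hz
  have : (⟨z, hz⟩ : Z) = ∑ j, e.repr ⟨z, hz⟩ j • e j := (e.sum_repr _).symm
  have h := congrArg (B' i ∘ Subtype.val) this
  simp only [comp_apply, Submodule.coe_sum, Submodule.coe_smul, map_sum, map_smul] at h
  rw [h]
  exact Z.sum_mem fun j _ => Z.smul_mem _ (each i j)

open Matrix ComplexOrder in
/-- If the moment vanishes, the conjugate transposes lie in the algebra generated by the tuple: this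
algebra is a space of matrices invariant under left multiplication by `y i`, hence, for the Frobenius inner
product, under left multiplication by the conjugate transposes, and it contains `1`. -/
theorem star_mem_adjoin {n r : ℕ} (y : Fin r → Matrix (Fin n) (Fin n) ℂ)
    (hy : ∑ i, y i * (y i)ᴴ = ∑ i, (y i)ᴴ * y i) (i : Fin r) :
    (y i)ᴴ ∈ Algebra.adjoin ℂ (range y) := by
  let _ := Matrix.toMatrixNormedAddCommGroup (1 : Matrix (Fin n) (Fin n) ℂ) Matrix.PosDef.one
  let _ := Matrix.toMatrixInnerProductSpace (1 : Matrix (Fin n) (Fin n) ℂ) Matrix.PosDef.one.posSemidef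
  have hin : ∀ a b : Matrix (Fin n) (Fin n) ℂ, inner ℂ a b = (b * aᴴ).trace := by
    intro a b
    change (b * 1 * aᴴ).trace = _
    simp
  have := mapsTo_adjoint (fun i => LinearMap.mulLeft ℂ (y i)) (fun i => LinearMap.mulLeft ℂ (y i)ᴴ) ?_ ?_
    (Subalgebra.toSubmodule (Algebra.adjoin ℂ (range y))) ?_ i 1 (one_mem (Algebra.adjoin ℂ (range y)))
  · simpa using this
  · intro i a b
    simp only [hin, LinearMap.mulLeft_apply, conjTranspose_mul]
    rw [← Matrix.mul_assoc, Matrix.trace_mul_comm, Matrix.mul_assoc]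
  · intro a
    apply Complex.ofReal_injective
    push_cast
    have : ∀ z : Matrix (Fin n) (Fin n) ℂ, ((‖z‖:ℝ):ℂ)^2 = (z * zᴴ).trace := by
      intro z
      rw [← hin]
      exact (inner_self_eq_norm_sq_to_K (𝕜 := ℂ) z).symm
    simp only [this, LinearMap.mulLeft_apply, conjTranspose_mul, conjTranspose_conjTranspose]
    have h2 : ∀ b c : Matrix (Fin n) (Fin n) ℂ, (b * a * (aᴴ * c)).trace = ((a * aᴴ) * (c * b)).trace := by
      intro b c
      rw [Matrix.mul_assoc, Matrix.trace_mul_comm]; simp only [Matrix.mul_assoc]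
    simp only [h2]
    rw [← Matrix.trace_sum, ← Matrix.trace_sum, ← Finset.mul_sum, ← Finset.mul_sum, hy]
  · intro i z hz
    exact mul_mem (S := Subalgebra ℂ _) (Algebra.subset_adjoin ⟨i, rfl⟩) hz

/-! ### Idempotents near an almost idempotent element -/


/-- The square of the generating function of the central binomial coefficients is `1 / (1 - 4 * x)`. -/
theorem sum_centralBinom (n : ℕ) :
    ∑ p ∈ Finset.HasAntidiagonal.antidiagonal n, p.1.centralBinom * p.2.centralBinom = 4 ^ n := by
  have hF : ∃ F : PowerSeries ℚ, F = PowerSeries.mk fun n => (n.centralBinom : ℚ) := ⟨_, rfl⟩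
  obtain ⟨F, hF⟩ := hF
  have h1 : PowerSeries.derivative ℚ F * (1 - 4 * PowerSeries.X) = 2 * F := by
    ext k
    rw [mul_sub, mul_one, mul_left_comm, ← mul_assoc]
    have h4 : (4 : PowerSeries ℚ) = PowerSeries.C 4 := (map_ofNat PowerSeries.C 4).symm
    have h2 : (2 : PowerSeries ℚ) = PowerSeries.C 2 := (map_ofNat PowerSeries.C 2).symm
    rw [h4, h2, map_sub, mul_assoc, PowerSeries.coeff_C_mul, PowerSeries.coeff_C_mul, hF]
    cases k with
    | zero => simp [PowerSeries.coeff_derivative, PowerSeries.coeff_zero_mul_X, Nat.centralBinom]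
    | succ k =>
      rw [PowerSeries.coeff_succ_mul_X]
      simp only [PowerSeries.coeff_derivative, PowerSeries.coeff_mk]
      have := Nat.succ_mul_centralBinom_succ (k+1)
      have h : ((k:ℚ)+1+1) * (k+1+1).centralBinom = 2*(2*(k+1)+1) * (k+1).centralBinom := by exact_mod_cast this
      push_cast
      linarith
  have h2 : F ^ 2 * (1 - 4 * PowerSeries.X) = 1 := by
    apply PowerSeries.derivative.ext
    · rw [Derivation.leibniz, Derivation.leibniz_pow]
      have : PowerSeries.derivative ℚ (1 - 4 * PowerSeries.X : PowerSeries ℚ) = -4 := by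
        have h4 : (4 : PowerSeries ℚ) = PowerSeries.C 4 := (map_ofNat PowerSeries.C 4).symm
        rw [map_sub, Derivation.map_one_eq_zero, Derivation.leibniz, PowerSeries.derivative_X, h4, PowerSeries.derivative_C]
        simp
      rw [this, Derivation.map_one_eq_zero]
      simp only [smul_eq_mul, nsmul_eq_mul]
      push_cast
      linear_combination (2 * F) * h1
    · simp [hF]
  have h3 : F ^ 2 = PowerSeries.mk fun n => (4:ℚ) ^ n := by
    have : (PowerSeries.mk fun n => (4:ℚ) ^ n) * (1 - 4 * PowerSeries.X) = 1 := by
      have h4 : (4 : PowerSeries ℚ) = PowerSeries.C 4 := (map_ofNat PowerSeries.C 4).symm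
      ext k
      rw [mul_sub, mul_one, mul_left_comm, h4, map_sub, PowerSeries.coeff_C_mul]
      cases k with
      | zero => simp
      | succ k => rw [PowerSeries.coeff_succ_mul_X]; simp [PowerSeries.coeff_one, pow_succ']
    calc F ^ 2 = F ^ 2 * ((PowerSeries.mk fun n => (4:ℚ) ^ n) * (1 - 4 * PowerSeries.X)) := by rw [this, mul_one]
      _ = (F ^ 2 * (1 - 4 * PowerSeries.X)) * (PowerSeries.mk fun n => (4:ℚ) ^ n) := by ring
      _ = _ := by rw [h2, one_mul]
  have h4 := congrArg (PowerSeries.coeff n) h3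
  rw [pow_two, PowerSeries.coeff_mul, hF] at h4
  simp only [PowerSeries.coeff_mk] at h4
  exact_mod_cast h4

section
variable {A : Type*} [NormedRing A] [NormedAlgebra ℝ A] [CompleteSpace A]

/-- The power series of `(1 - 4 * d)^(-1/2)`; a junk value where it is not summable. -/
noncomputable def invSqrt (d : A) : A := ∑' k : ℕ, k.centralBinom • d ^ k

theorem bound_invSqrt (d : A) (hd : ‖d‖ ≤ 1/8) (k : ℕ) :
    ‖k.centralBinom • d ^ k‖ ≤ (‖(1:A)‖ + 1) * (1/2) ^ k := by
  have h1 : (k.centralBinom : ℝ) ≤ 4 ^ k := by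
    exact_mod_cast (by
      have := Nat.choose_le_two_pow (2 * k) k
      rw [pow_mul] at this
      simpa [Nat.centralBinom] using this : k.centralBinom ≤ 4 ^ k)
  have h2 : ‖d ^ k‖ ≤ (‖(1:A)‖ + 1) * (1/8) ^ k := by
    rcases k.eq_zero_or_pos with rfl | hk
    · simp
    · calc ‖d^k‖ ≤ ‖d‖^k := norm_pow_le' d hk
        _ ≤ (1/8)^k := pow_le_pow_left₀ (norm_nonneg _) hd k
        _ ≤ _ := by nlinarith [norm_nonneg (1:A), pow_pos (by norm_num : (0:ℝ) < 1/8) k]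
  rw [← Nat.cast_smul_eq_nsmul ℝ, norm_smul]
  calc _ ≤ (4:ℝ)^k * ((‖(1:A)‖ + 1) * (1/8) ^ k) := by
        gcongr; simpa using h1
    _ = (‖(1:A)‖ + 1) * (4^k * (1/8) ^ k) := by ring
    _ = _ := by rw [← mul_pow]; norm_num

theorem summable_bound : Summable fun k : ℕ => (‖(1:A)‖ + 1) * (1/2 : ℝ) ^ k :=
  (summable_geometric_of_lt_one (by norm_num) (by norm_num)).mul_left _

theorem summable_invSqrt (d : A) (hd : ‖d‖ ≤ 1/8) : Summable fun k : ℕ => ‖k.centralBinom • d ^ k‖ :=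
  Summable.of_nonneg_of_le (fun _ => norm_nonneg _) (bound_invSqrt d hd) summable_bound

theorem continuousOn_invSqrt : ContinuousOn (invSqrt : A → A) (closedBall 0 (1/8)) :=
  continuousOn_tsum (fun k => by fun_prop) summable_bound fun k d hd => bound_invSqrt d (by simpa using hd) k

theorem invSqrt_sq (d : A) (hd : ‖d‖ ≤ 1/8) : (1 - 4 * d) * (invSqrt d * invSqrt d) = 1 := by
  rw [invSqrt, tsum_mul_tsum_eq_tsum_sum_antidiagonal_of_summable_norm (summable_invSqrt d hd) (summable_invSqrt d hd)]
  have : ∀ n : ℕ, ∑ kl ∈ Finset.HasAntidiagonal.antidiagonal n, kl.1.centralBinom • d ^ kl.1 * kl.2.centralBinom • d ^ kl.2 = (4 * d) ^ n := by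
    intro n
    rw [show (4:A) = ((4:ℕ):A) by norm_num, (Nat.cast_commute 4 d : Commute ((4:ℕ):A) d).mul_pow]
    have h := congrArg (fun m : ℕ => (m : A)) (sum_centralBinom n)
    push_cast at h
    push_cast
    rw [← h, Finset.sum_mul]
    refine Finset.sum_congr rfl fun p hp => ?_
    rw [← Finset.HasAntidiagonal.mem_antidiagonal.1 hp, pow_add]
    simp only [nsmul_eq_mul]
    rw [mul_assoc, mul_assoc, ← mul_assoc (d ^ p.1), ← (Nat.cast_commute _ _).eq, mul_assoc]
  simp_rw [this]
  have h4 : ‖4 * d‖ < 1 := by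
    have : (4:A) * d = (4:ℝ) • d := by rw [Algebra.smul_def, map_ofNat]
    rw [this, norm_smul]; norm_num; linarith
  exact mul_neg_geom_series _ h4

/-- The element `(1 + (2 * a - 1) * (1 - 4 * (a - a * a))^(-1/2)) / 2`. It is idempotent if `a - a * a` is
small, it equals `a` if `a` is idempotent, and it is compatible with intertwiners. -/
noncomputable def idem (a : A) : A := (2⁻¹ : ℝ) • (1 + (2 * a - 1) * invSqrt (a - a * a))

theorem semiconjBy_invSqrt {s a b : A} (h : SemiconjBy s a b) (ha : ‖a‖ ≤ 1/8) (hb : ‖b‖ ≤ 1/8) :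
    SemiconjBy s (invSqrt a) (invSqrt b) := by
  have h1 := (summable_invSqrt a ha).of_norm
  have h2 := (summable_invSqrt b hb).of_norm
  rw [SemiconjBy, invSqrt, invSqrt, ← h1.tsum_mul_left, ← h2.tsum_mul_right]
  congr 1; ext k
  rw [mul_smul_comm, smul_mul_assoc, (h.pow_right k).eq]

theorem semiconjBy_idem {s a b : A} (h : SemiconjBy s a b) (ha : ‖a - a * a‖ ≤ 1/8) (hb : ‖b - b * b‖ ≤ 1/8) :
    SemiconjBy s (idem a) (idem b) := by
  have h1 := semiconjBy_invSqrt (h.sub_right (h.mul_right h)) ha hb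
  have h2 : SemiconjBy s (2 * a - 1) (2 * b - 1) := by
    rw [two_mul, two_mul]; exact (h.add_right h).sub_right (SemiconjBy.one_right s)
  have h3 := (SemiconjBy.one_right s).add_right (h2.mul_right h1)
  rw [SemiconjBy, idem, idem, mul_smul_comm, smul_mul_assoc, h3.eq]

theorem isIdempotentElem_idem {a : A} (ha : ‖a - a * a‖ ≤ 1/8) : idem a * idem a = idem a := by
  have hc : Commute (2 * a - 1) (invSqrt (a - a * a)) := by
    have h : Commute a (a - a * a) := (Commute.refl a).sub_right ((Commute.refl a).mul_right (Commute.refl a))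
    have h1 : Commute a (invSqrt (a - a * a)) := by
      have h1 := (summable_invSqrt _ ha).of_norm
      rw [Commute, SemiconjBy, invSqrt, ← h1.tsum_mul_left, ← h1.tsum_mul_right]
      congr 1; ext k
      rw [mul_smul_comm, smul_mul_assoc, (h.pow_right k).eq]
    rw [two_mul]
    exact (h1.add_left h1).sub_left (Commute.one_left _)
  have h2 := invSqrt_sq _ ha
  have h3 : ((2 * a - 1) * invSqrt (a - a * a)) * ((2 * a - 1) * invSqrt (a - a * a)) = 1 := by
    have h4 : (2 * a - 1) * (2 * a - 1) = 1 - 4 * (a - a * a) := by noncomm_ring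
    rw [← h4] at h2
    refine Eq.trans ?_ h2
    rw [mul_assoc (2 * a - 1), ← mul_assoc (invSqrt _) (2 * a - 1), ← hc.eq]
    simp only [mul_assoc]
  rw [idem, smul_mul_smul_comm, add_mul, one_mul, mul_add, h3, mul_one]
  set u := (2 * a - 1) * invSqrt (a - a * a)
  rw [show 1 + u + (u + 1) = (2:ℝ) • (1 + u) by rw [two_smul]; abel, smul_smul]
  norm_num

theorem idem_self {a : A} (ha : a * a = a) : idem a = a := by
  have : invSqrt (a - a * a) = 1 := by
    rw [ha, sub_self, invSqrt, tsum_eq_single 0]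
    · simp
    · intro k hk; simp [hk]
  rw [idem, this, mul_one, two_mul, show 1 + (a + a - 1) = (2:ℝ) • a by rw [two_smul]; abel, smul_smul]
  norm_num

theorem eventually_idem {e : A} (he : e * e = e) : ∀ᶠ a in 𝓝 e, ‖a - a * a‖ ≤ 1/8 := by
  have : Tendsto (fun a : A => ‖a - a * a‖) (𝓝 e) (𝓝 0) := by
    have : ContinuousAt (fun a : A => ‖a - a * a‖) e := by fun_prop
    simpa [ContinuousAt, he] using this
  exact this.eventually_le_const (by norm_num)

theorem continuousOn_idem : ContinuousOn (idem : A → A) {a | ‖a - a * a‖ ≤ 1/8} := by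
  have h : ContinuousOn (fun a : A => invSqrt (a - a * a)) {a | ‖a - a * a‖ ≤ 1/8} :=
    continuousOn_invSqrt.comp (by fun_prop) fun a ha => by simpa using ha
  unfold idem
  fun_prop
end

/-! ### Maps that are equivariant up to the commutant -/


/-- Square complex matrices. -/
abbrev Mat (n : ℕ) : Type := Matrix (Fin n) (Fin n) ℂ

section
variable {M : Type*} [NormedRing M] [NormedAlgebra ℂ M] {r : ℕ}

/-- Left multiplication as a bounded operator. -/
noncomputable def opL : M →L[ℂ] M →L[ℂ] M := ContinuousLinearMap.mul ℂ M
/-- Right multiplication as a bounded operator. -/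
noncomputable def opR : M →L[ℂ] M →L[ℂ] M := (ContinuousLinearMap.mul ℂ M).flip

@[simp] theorem opL_apply (a t : M) : opL a t = a * t := rfl
@[simp] theorem opR_apply (a t : M) : opR a t = t * a := rfl

/-- The map `t ↦ ∑ i, (Q_i(y) * u_i - u_i * Q_i(m))` with `u_i = y_i * t - t * m_i`, where the `Q i` are
noncommutative polynomials. If `Q_i(y)` is the adjoint of `y_i` and `m = y`, this is the sum of `ad(y_i)* ad(y_i)`,
with kernel the commutant of `y`. -/
def psi (Q : Fin r → FreeAlgebra ℂ (Fin r)) (y m : Fin r → M) (t : M) : M :=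
  ∑ i, (FreeAlgebra.lift ℂ y (Q i) * (y i * t - t * m i) - (y i * t - t * m i) * FreeAlgebra.lift ℂ m (Q i))

/-- The map `psi` as a bounded operator. -/
noncomputable def opPsi (Q : Fin r → FreeAlgebra ℂ (Fin r)) (y m : Fin r → M) : M →L[ℂ] M :=
  ∑ i, (opL (FreeAlgebra.lift ℂ y (Q i)) - opR (FreeAlgebra.lift ℂ m (Q i))) * (opL (y i) - opR (m i))

theorem opPsi_apply (Q : Fin r → FreeAlgebra ℂ (Fin r)) (y m : Fin r → M) (t : M) : opPsi Q y m t = psi Q y m t := by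
  unfold opPsi psi
  rw [_root_.sum_apply]
  rfl

theorem continuous_lift (Q : FreeAlgebra ℂ (Fin r)) : Continuous fun m : Fin r → M => FreeAlgebra.lift ℂ m Q := by
  induction Q using FreeAlgebra.induction with
  | grade0 c => simpa using continuous_const
  | grade1 i => simpa using continuous_apply i
  | mul a b ha hb => simp only [map_mul]; exact ha.mul hb
  | add a b ha hb => simp only [map_add]; exact ha.add hb

theorem continuous_opPsi (Q : Fin r → FreeAlgebra ℂ (Fin r)) (y : Fin r → M) : Continuous (opPsi Q y) := by
  unfold opPsi
  refine continuous_finsetSum _ fun i _ => ?_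
  exact (continuous_const.sub (opR.continuous.comp (continuous_lift _))).mul
    (continuous_const.sub (opR.continuous.comp (continuous_apply i)))

theorem lift_conj (m : Fin r → M) {g g' : M} (h : g' * g = 1) (h' : g * g' = 1) (Q : FreeAlgebra ℂ (Fin r)) :
    FreeAlgebra.lift ℂ (fun i => g * m i * g') Q = g * FreeAlgebra.lift ℂ m Q * g' := by
  induction Q using FreeAlgebra.induction with
  | grade0 c => rw [AlgHom.commutes, AlgHom.commutes, ← Algebra.commutes, mul_assoc, h', mul_one]
  | grade1 i => simp
  | mul a b ha hb =>
    rw [map_mul, map_mul, ha, hb]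
    rw [show g * FreeAlgebra.lift ℂ m a * g' * (g * FreeAlgebra.lift ℂ m b * g') = g * FreeAlgebra.lift ℂ m a * (g' * g) * FreeAlgebra.lift ℂ m b * g' by simp only [mul_assoc], h]
    simp only [mul_assoc, one_mul]
  | add a b ha hb => simp [ha, hb, mul_add, add_mul]

theorem lift_comm (y : Fin r → M) {c : M} (hc : ∀ i, c * y i = y i * c) (Q : FreeAlgebra ℂ (Fin r)) :
    c * FreeAlgebra.lift ℂ y Q = FreeAlgebra.lift ℂ y Q * c := by
  induction Q using FreeAlgebra.induction with
  | grade0 z => rw [AlgHom.commutes, Algebra.commutes]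
  | grade1 i => simpa using hc i
  | mul a b ha hb => rw [map_mul, ← mul_assoc, ha, mul_assoc, hb, mul_assoc]
  | add a b ha hb => simp [ha, hb, mul_add, add_mul]

theorem semiconj_conj (Q : Fin r → FreeAlgebra ℂ (Fin r)) (y m : Fin r → M) {g g' : M} (h : g' * g = 1) (h' : g * g' = 1) :
    SemiconjBy (opR g') (opPsi Q y m) (opPsi Q y fun i => g * m i * g') := by
  have key : ∀ a b : M, SemiconjBy (opR g') (opL a - opR b) (opL a - opR (g * b * g')) := by
    intro a b
    ext1 t
    simp only [mul_apply_eq_comp, _root_.sub_apply, opL_apply, opR_apply, sub_mul, mul_sub]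
    congr 1
    · rw [mul_assoc]
    · rw [show t * g' * (g * b * g') = t * (g' * g) * b * g' by simp only [mul_assoc], h, mul_one]
  unfold opPsi SemiconjBy
  rw [Finset.mul_sum, Finset.sum_mul]
  refine Finset.sum_congr rfl fun i _ => ?_
  rw [lift_conj m h h']
  exact (key _ _).mul_right (key _ _)

theorem commute_opL (Q : Fin r → FreeAlgebra ℂ (Fin r)) (y m : Fin r → M) {c : M} (hc : ∀ i, c * y i = y i * c) :
    SemiconjBy (opL c) (opPsi Q y m) (opPsi Q y m) := by
  have key : ∀ a b : M, c * a = a * c → SemiconjBy (opL c) (opL a - opR b) (opL a - opR b) := by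
    intro a b h
    ext1 t
    simp only [mul_apply_eq_comp, _root_.sub_apply, opL_apply, opR_apply, sub_mul, mul_sub]
    rw [← mul_assoc, h, mul_assoc, mul_assoc]
  unfold opPsi SemiconjBy
  rw [Finset.mul_sum, Finset.sum_mul]
  exact Finset.sum_congr rfl fun i _ => (key _ _ (lift_comm y hc _)).mul_right (key _ _ (hc i))


/-- If the kernel of `psi Q y y` is the commutant of `y` and coincides with its generalized kernel, then
a polynomial in this operator is a projection onto the commutant. -/
theorem exists_poly [FiniteDimensional ℂ M] (Q : Fin r → FreeAlgebra ℂ (Fin r)) (y : Fin r → M)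
    (hker : ∀ t, psi Q y y t = 0 ↔ ∀ i, t * y i = y i * t) (hsq : ∀ t, psi Q y y (psi Q y y t) = 0 → psi Q y y t = 0) :
    ∃ f : Polynomial ℂ, (∀ t, (∀ i, t * y i = y i * t) → Polynomial.aeval (opPsi Q y y) f t = t) ∧
      ∀ t i, Polynomial.aeval (opPsi Q y y) f t * y i = y i * Polynomial.aeval (opPsi Q y y) f t := by
  set P := opPsi Q y y with hP
  obtain ⟨p, hp, hp0⟩ : IsIntegral ℂ P := Algebra.IsIntegral.isIntegral P
  obtain ⟨g, hg, hg0⟩ := Polynomial.exists_eq_pow_rootMultiplicity_mul_and_not_dvd p hp.ne_zero 0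
  set k := p.rootMultiplicity 0
  rw [map_zero, sub_zero] at hg hg0
  rw [Polynomial.X_dvd_iff] at hg0
  have hpow : ∀ k : ℕ, ∀ t, (P ^ k) t = 0 → ∀ i, t * y i = y i * t := by
    have h1 : ∀ k : ℕ, ∀ t, (P ^ (k+1)) t = 0 → P t = 0 := by
      intro k
      induction k with
      | zero => intro t h; simpa using h
      | succ k ih =>
        intro t h
        rw [pow_succ, mul_apply_eq_comp] at h
        have := ih _ h
        rw [hP, opPsi_apply, opPsi_apply] at this
        rw [hP, opPsi_apply]
        exact hsq t this
    intro k t h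
    cases k with
    | zero => 
      have : t = 0 := h
      simp [this]
    | succ k => 
      have := h1 k t h
      rw [hP, opPsi_apply] at this
      exact (hker t).1 this
  have hp0' : Polynomial.aeval P p = 0 := hp0
  refine ⟨Polynomial.C (g.coeff 0)⁻¹ * g, fun t ht => ?_, fun t => ?_⟩
  · have h0 : P t = 0 := by rw [hP, opPsi_apply]; exact (hker t).2 ht
    have h1 : g = g.divX * Polynomial.X + Polynomial.C (g.coeff 0) := (Polynomial.divX_mul_X_add g).symm
    rw [map_mul, Polynomial.aeval_C, mul_apply_eq_comp]
    have h2 : Polynomial.aeval P g t = g.coeff 0 • t := by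
      conv_lhs => rw [h1]
      rw [map_add, map_mul, Polynomial.aeval_X, Polynomial.aeval_C, _root_.add_apply, mul_apply_eq_comp, h0, map_zero, zero_add]
      rfl
    rw [h2]
    change (g.coeff 0)⁻¹ • (g.coeff 0 • t) = t
    rw [smul_smul, inv_mul_cancel₀ hg0, one_smul]
  · apply hpow k
    rw [← mul_apply_eq_comp]
    have : P ^ k * Polynomial.aeval P (Polynomial.C (g.coeff 0)⁻¹ * g) = 0 := by
      rw [← Polynomial.aeval_X_pow (R := ℂ) P (n := k), ← map_mul, mul_left_comm, ← hg, map_mul, hp0', mul_zero]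
    rw [this]; rfl

theorem semiconjBy_aeval {A : Type*} [Ring A] [Algebra ℂ A] {s a b : A} (h : SemiconjBy s a b) (f : Polynomial ℂ) :
    SemiconjBy s (Polynomial.aeval a f) (Polynomial.aeval b f) := by
  induction f using Polynomial.induction_on' with
  | add p q hp hq => rw [map_add, map_add]; exact hp.add_right hq
  | monomial k c =>
    rw [Polynomial.aeval_monomial, Polynomial.aeval_monomial]
    refine SemiconjBy.mul_right ?_ (h.pow_right k)
    exact (Algebra.commutes c s).symm

theorem continuous_aeval {A : Type*} [NormedRing A] [NormedAlgebra ℂ A] (f : Polynomial ℂ) :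
    Continuous fun a : A => Polynomial.aeval a f := by
  simp only [Polynomial.aeval_eq_sum_range]
  fun_prop

/-- A map `w` near `y` that is equivariant up to elements of the commutant of `y`: `w(g m g⁻¹) g = c w(m)`.
The polynomial of `exists_poly`, evaluated at `opPsi Q y m`, is nearly idempotent for `m` near `y`. The idempotent
obtained from it by `idem` commutes with left multiplication by the commutant, and its image is generated by the image
of `1` over the commutant. Conjugating `m` by `g` intertwines these idempotents via right multiplication by `g⁻¹`. -/
theorem exists_w [FiniteDimensional ℂ M] (Q : Fin r → FreeAlgebra ℂ (Fin r)) (y : Fin r → M)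
    (hker : ∀ t, psi Q y y t = 0 ↔ ∀ i, t * y i = y i * t) (hsq : ∀ t, psi Q y y (psi Q y y t) = 0 → psi Q y y t = 0) :
    ∃ N : Set (Fin r → M), IsOpen N ∧ y ∈ N ∧ ∃ w : (Fin r → M) → M, ContinuousOn w N ∧ w y = 1 ∧
      ∀ m ∈ N, ∀ g g' : M, g' * g = 1 → g * g' = 1 → (fun i => g * m i * g') ∈ N →
        ∃ c, (∀ i, c * y i = y i * c) ∧ w (fun i => g * m i * g') * g = c * w m := by
  have : CompleteSpace M := FiniteDimensional.complete ℂ M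
  obtain ⟨f, hf1, hf2⟩ := exists_poly Q y hker hsq
  let _ : NormedAlgebra ℝ (M →L[ℂ] M) := NormedAlgebra.restrictScalars ℝ ℂ _
  set e : (Fin r → M) → (M →L[ℂ] M) := fun m => Polynomial.aeval (opPsi Q y m) f with he
  have hec : Continuous e := (continuous_aeval f).comp (continuous_opPsi Q y)
  have hee : e y * e y = e y := by ext1 t; exact hf1 _ (hf2 t)
  set E : (Fin r → M) → (M →L[ℂ] M) := fun m => idem (e m) with hE
  set N₁ : Set (Fin r → M) := {m | ‖e m - e m * e m‖ < 1/8} with hN₁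
  have hN₁o : IsOpen N₁ := isOpen_lt (by fun_prop) continuous_const
  have hyN₁ : y ∈ N₁ := by simp [hN₁, hee]
  have hEc : ContinuousOn E N₁ := continuousOn_idem.comp hec.continuousOn fun m hm => (show ‖e m - e m * e m‖ < 1/8 from hm).le
  have hEy : E y = e y := idem_self hee
  set N : Set (Fin r → M) := N₁ ∩ {m | (‖E y‖ + 1) * ‖E m - E y‖ < 1} with hN
  have hNo : IsOpen N := by
    have : ContinuousOn (fun m => (‖E y‖ + 1) * ‖E m - E y‖) N₁ := by fun_prop
    exact this.isOpen_inter_preimage hN₁o isOpen_Iio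
  have hEid : ∀ m ∈ N, E m * E m = E m := fun m hm => isIdempotentElem_idem (le_of_lt hm.1)
  have hcomm : ∀ m ∈ N, ∀ c : M, (∀ i, c * y i = y i * c) → ∀ t, E m (c * t) = c * E m t := by
    intro m hm c hc t
    have := semiconjBy_idem (semiconjBy_aeval (commute_opL Q y m hc) f) (le_of_lt hm.1) (le_of_lt hm.1)
    exact (congrArg (fun T : M →L[ℂ] M => T t) this.eq).symm
  have hlt : ∀ m ∈ N, ∀ t : M, ‖E y ((E m - E y) t)‖ < ‖t‖ ∨ t = 0 := by
    intro m hm t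
    refine or_iff_not_imp_right.2 fun ht => ?_
    have ht' := norm_pos_iff.2 ht
    have h2 : (‖E y‖ + 1) * ‖E m - E y‖ < 1 := hm.2
    calc ‖E y ((E m - E y) t)‖ ≤ ‖E y‖ * (‖E m - E y‖ * ‖t‖) :=
          ((E y).le_opNorm _).trans (mul_le_mul_of_nonneg_left ((E m - E y).le_opNorm _) (norm_nonneg _))
      _ ≤ ((‖E y‖ + 1) * ‖E m - E y‖) * ‖t‖ := by nlinarith [mul_nonneg (norm_nonneg (E m - E y)) ht'.le]
      _ < ‖t‖ := by nlinarith
  have hlt' : ∀ m ∈ N, ∀ t : M, E m t = t → E y t = 0 → t = 0 := by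
    intro m hm t h1 h2
    by_contra ht
    have ht' := norm_pos_iff.2 ht
    have h3 : (‖E y‖ + 1) * ‖E m - E y‖ < 1 := hm.2
    have h4 := (E m - E y).le_opNorm t
    rw [_root_.sub_apply, h1, h2, sub_zero] at h4
    nlinarith [mul_nonneg (norm_nonneg (E m - E y)) (norm_nonneg (E y)), norm_nonneg (E m - E y)]
  -- the image of `E m` is generated by `E m 1` over the commutant of `y`
  have himg : ∀ m ∈ N, ∀ t : M, ∃ c, (∀ i, c * y i = y i * c) ∧ E m t = c * E m 1 := by
    intro m hm t
    have hC : ∀ t i, E y t * y i = y i * E y t := by rw [hEy]; exact hf2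
    have hC1 : ∀ t, (∀ i, t * y i = y i * t) → E y t = t := by rw [hEy]; exact hf1
    let C : Submodule ℂ M :=
      { carrier := {c | ∀ i, c * y i = y i * c}
        add_mem' := fun ha hb i => by rw [add_mul, mul_add, ha i, hb i]
        zero_mem' := fun i => by simp
        smul_mem' := fun a b hb i => by rw [smul_mul_assoc, mul_smul_comm, hb i] }
    let φ : C →ₗ[ℂ] C := ((E y * E m : M →L[ℂ] M) : M →ₗ[ℂ] M).restrict fun c _ => hC (E m c)
    have hφ : Injective φ := by
      rw [← LinearMap.ker_eq_bot, LinearMap.ker_eq_bot']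
      intro c hc
      have h0 : E y (E m c) = 0 := congrArg Subtype.val hc
      rcases hlt m hm c with h | h
      · rw [_root_.sub_apply, map_sub, h0, hC1 c c.2, hC1 c c.2, zero_sub, norm_neg] at h
        exact absurd h (lt_irrefl _)
      · exact Subtype.ext h
    obtain ⟨c, hc⟩ := (LinearMap.injective_iff_surjective.1 hφ) ⟨E y (E m t), hC _⟩
    have hc' : E y (E m c) = E y (E m t) := congrArg Subtype.val hc
    refine ⟨c, c.2, ?_⟩
    have hid : ∀ t, E m (E m t) = E m t := fun t => congrArg (fun T : M →L[ℂ] M => T t) (hEid m hm)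
    have h1 := hlt' m hm (E m t - E m c) (by rw [map_sub, hid, hid]) (by rw [map_sub, hc', sub_self])
    rw [sub_eq_zero.1 h1, ← hcomm m hm c c.2, mul_one]
  refine ⟨N, hNo, ⟨hyN₁, by simp⟩, fun m => E m 1, ?_, ?_, ?_⟩
  · exact (hEc.mono inter_subset_left).clm_apply continuousOn_const
  · change E y 1 = 1
    rw [hEy]
    exact hf1 1 (by simp)
  · intro m hm g g' h h' hgm
    have h1 := semiconjBy_idem (semiconjBy_aeval (semiconj_conj Q y m h h') f) (le_of_lt hm.1) (le_of_lt hgm.1)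
    have h2 : E m g * g' = E (fun i => g * m i * g') (g * g') := congrArg (fun T : M →L[ℂ] M => T g) h1.eq
    obtain ⟨c, hc, hc'⟩ := himg m hm g
    refine ⟨c, hc, ?_⟩
    rw [h'] at h2
    change E (fun i => g * m i * g') 1 * g = _
    rw [← h2, mul_assoc, h, mul_one, hc']
end


section
variable {n r : ℕ}
open Matrix ComplexOrder

/-- For the Frobenius inner product, the operator is the sum of `ad(y_i)* ad(y_i)`. -/
theorem trace_psi (y : Fin r → Mat n)
    (s t : Mat n) :
    (sᴴ * (∑ i, ((y i)ᴴ * (y i * t - t * y i) - (y i * t - t * y i) * (y i)ᴴ))).trace = ∑ i, ((y i * s - s * y i)ᴴ * (y i * t - t * y i)).trace := by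
  rw [Finset.mul_sum, Matrix.trace_sum]
  refine Finset.sum_congr rfl fun i _ => ?_
  simp only [conjTranspose_sub, conjTranspose_mul]
  generalize y i * t - t * y i = u
  rw [mul_sub, sub_mul, trace_sub, trace_sub, ← mul_assoc, ← mul_assoc, trace_mul_comm (sᴴ * u), ← mul_assoc]

section
attribute [local instance] Matrix.linftyOpNormedRing Matrix.linftyOpNormedAlgebra

/-- The map of `exists_w` exists near every tuple of matrices with vanishing moment, because the
conjugate transposes are then polynomials in the tuple. -/
theorem exists_w_matrix (y : Fin r → Mat n) (hy : ∑ i, y i * (y i)ᴴ = ∑ i, (y i)ᴴ * y i) :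
    ∃ N : Set (Fin r → Mat n), IsOpen N ∧ y ∈ N ∧ ∃ w : (Fin r → Mat n) → Mat n, ContinuousOn w N ∧ w y = 1 ∧
      ∀ m ∈ N, ∀ g g' : Mat n, g' * g = 1 → g * g' = 1 → (fun i => g * m i * g') ∈ N →
        ∃ c, (∀ i, c * y i = y i * c) ∧ w (fun i => g * m i * g') * g = c * w m := by
  have h1 : ∀ i, ∃ Q, FreeAlgebra.lift ℂ y Q = (y i)ᴴ := by
    intro i
    have := star_mem_adjoin y hy i
    rw [Algebra.adjoin_range_eq_range_freeAlgebra_lift] at this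
    exact this
  choose Q hQ using h1
  have hpsi : ∀ t, psi Q y y t = ∑ i, ((y i)ᴴ * (y i * t - t * y i) - (y i * t - t * y i) * (y i)ᴴ) := by
    intro t
    unfold psi
    exact Finset.sum_congr rfl fun i _ => by rw [← hQ i]
  have := exists_w (M := Mat n) Q y ?_ ?_
  · exact this
  · intro t
    rw [hpsi]
    constructor
    · intro h
      have h1 := trace_psi y t t
      rw [h, mul_zero, trace_zero, eq_comm, Finset.sum_eq_zero_iff_of_nonneg] at h1
      · intro i
        have := h1 i (Finset.mem_univ _)
        rw [trace_conjTranspose_mul_self_eq_zero_iff, sub_eq_zero] at this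
        exact this.symm
      · intro i _
        exact (posSemidef_conjTranspose_mul_self _).trace_nonneg
    · intro h
      refine Finset.sum_eq_zero fun i _ => ?_
      simp [h i]
  · intro t h
    set u := psi Q y y t
    have h1 : (uᴴ * u).trace = 0 := by
      have h2 := trace_psi y u t
      have h3 := trace_psi y t u
      rw [← hpsi] at h2 h3
      rw [h, mul_zero, trace_zero] at h3
      have h4 := congrArg star h3
      rw [star_zero, star_sum] at h4
      change (uᴴ * u).trace = _ at h2
      rw [h2, h4]
      refine Finset.sum_congr rfl fun i _ => ?_
      rw [← trace_conjTranspose, conjTranspose_mul, conjTranspose_conjTranspose]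
    rwa [trace_conjTranspose_mul_self_eq_zero_iff] at h1
end
end

/-! ### The space of tuples -/


/-- The space `SL_n(ℂ)^r` of `r`-tuples of complex `n × n` matrices of determinant one, with the subspace
topology. -/
@[ext] structure RepSp (n r : ℕ) : Type where
  /-- The tuple. -/
  val : Fin r → Mat n
  det_one : ∀ i, (val i).det = 1

section
variable {n r : ℕ}

noncomputable instance : TopologicalSpace (RepSp n r) := TopologicalSpace.induced RepSp.val inferInstance

theorem isInducing_val : IsInducing (RepSp.val : RepSp n r → Fin r → Mat n) := ⟨rfl⟩

/-- Simultaneous conjugation. -/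
def cj (g : GL (Fin n) ℂ) (a : Fin r → Mat n) : Fin r → Mat n := fun i => g.1 * a i * (g⁻¹).1

theorem val_mul_inv (g : GL (Fin n) ℂ) : (g.1 : Mat n) * (g⁻¹).1 = 1 := g.mul_inv
theorem inv_mul_val (g : GL (Fin n) ℂ) : ((g⁻¹).1 : Mat n) * g.1 = 1 := g.inv_mul

theorem det_cj (g : GL (Fin n) ℂ) (a : Fin r → Mat n) (i : Fin r) : (cj g a i).det = (a i).det := by
  rw [cj, Matrix.det_mul, Matrix.det_mul, mul_right_comm, ← Matrix.det_mul, val_mul_inv, Matrix.det_one, one_mul]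

theorem cj_one (a : Fin r → Mat n) : cj 1 a = a := by
  ext1 i; simp [cj]

theorem cj_mul (g h : GL (Fin n) ℂ) (a : Fin r → Mat n) : cj (g * h) a = cj g (cj h a) := by
  ext1 i; simp [cj, mul_assoc]

instance : MulAction (GL (Fin n) ℂ) (RepSp n r) where
  smul g a := ⟨cj g a.1, fun i => by rw [det_cj, a.2 i]⟩
  one_smul a := RepSp.ext (cj_one a.1)
  mul_smul g h a := RepSp.ext (cj_mul g h a.1)

theorem smul_val (g : GL (Fin n) ℂ) (a : RepSp n r) : (g • a).1 = cj g a.1 := rfl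

theorem continuous_cj : Continuous fun z : GL (Fin n) ℂ × (Fin r → Mat n) => cj z.1 z.2 := by
  refine continuous_pi fun i => ?_
  have h1 : Continuous fun z : GL (Fin n) ℂ × (Fin r → Mat n) => (z.1.1 : Mat n) := Units.continuous_val.comp continuous_fst
  have h2 : Continuous fun z : GL (Fin n) ℂ × (Fin r → Mat n) => ((z.1⁻¹).1 : Mat n) := Units.continuous_val.comp continuous_fst.inv
  have h3 : Continuous fun z : GL (Fin n) ℂ × (Fin r → Mat n) => z.2 i := (continuous_apply i).comp continuous_snd
  exact (h1.mul h3).mul h2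

instance : ContinuousSMul (GL (Fin n) ℂ) (RepSp n r) where
  continuous_smul := by
    rw [isInducing_val.continuous_iff]
    exact continuous_cj.comp (g := fun z : GL (Fin n) ℂ × (Fin r → Mat n) => cj z.1 z.2)
      (f := fun z : GL (Fin n) ℂ × RepSp n r => (z.1, z.2.val))
      (continuous_fst.prodMk (isInducing_val.continuous.comp continuous_snd))

instance : IsTopologicalGroup (GL (Fin n) ℂ) := inferInstance

theorem smul_eq_self_iff (g : GL (Fin n) ℂ) (y : RepSp n r) : g • y = y ↔ ∀ i, (g.1 : Mat n) * y.1 i = y.1 i * g.1 := by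
  constructor
  · intro h i
    have := congrFun (congrArg RepSp.val h) i
    rw [smul_val, cj] at this
    conv_rhs => rw [← this]
    rw [mul_assoc _ _ g.1, inv_mul_val, mul_one]
  · intro h
    apply RepSp.ext
    ext1 i
    rw [smul_val, cj, h, mul_assoc, val_mul_inv, mul_one]

/-- The tuple of identity matrices. -/
def oneSp : RepSp n r := ⟨fun _ => 1, fun _ => Matrix.det_one⟩

theorem smul_oneSp (g : GL (Fin n) ℂ) : g • (oneSp : RepSp n r) = oneSp := by
  rw [smul_eq_self_iff]; intro i; simp [oneSp]

open Classical in
/-- Each matrix rescaled to determinant one by the principal branch of the `n`-th root; the junk value is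
`oneSp`, taken if some determinant vanishes or `n = 0`. -/
noncomputable def nrm (a : Fin r → Mat n) : RepSp n r :=
  if h : n ≠ 0 ∧ ∀ i, (a i).det ≠ 0 then
    ⟨fun i => ((a i).det ^ (-(n:ℂ)⁻¹)) • a i, fun i => by
      rw [Matrix.det_smul, Fintype.card_fin, ← Complex.cpow_nat_mul, mul_neg,
        mul_inv_cancel₀ (Nat.cast_ne_zero.2 h.1), Complex.cpow_neg_one, inv_mul_cancel₀ (h.2 i)]⟩
  else oneSp

theorem nrm_val (hn : n ≠ 0) {a : Fin r → Mat n} (h : ∀ i, (a i).det ≠ 0) :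
    (nrm a).1 = fun i => ((a i).det ^ (-(n:ℂ)⁻¹)) • a i := by
  rw [nrm, dif_pos ⟨hn, h⟩]

theorem nrm_self (hn : n ≠ 0) (a : RepSp n r) : nrm a.1 = a := by
  apply RepSp.ext
  rw [nrm_val hn fun i => by rw [a.2 i]; exact one_ne_zero]
  ext1 i
  rw [a.2 i, Complex.one_cpow, one_smul]

theorem nrm_cj (hn : n ≠ 0) (g : GL (Fin n) ℂ) (a : Fin r → Mat n) : nrm (cj g a) = g • nrm a := by
  by_cases h : ∀ i, (a i).det ≠ 0
  · apply RepSp.ext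
    rw [nrm_val hn (by simpa only [det_cj] using h), smul_val, nrm_val hn h]
    ext1 i
    simp only [det_cj]
    simp only [cj, mul_smul_comm, smul_mul_assoc]
  · have h' : ¬ ∀ i, (cj g a i).det ≠ 0 := by simpa only [det_cj] using h
    rw [nrm, nrm, dif_neg (by tauto), dif_neg (by tauto), smul_oneSp]

theorem continuousAt_nrm (hn : n ≠ 0) {a : Fin r → Mat n} (h : ∀ i, (a i).det ∈ Complex.slitPlane) :
    ContinuousAt (nrm : (Fin r → Mat n) → RepSp n r) a := by
  have hdet : ∀ i, Continuous fun a : Fin r → Mat n => (a i).det := fun i => (continuous_apply i).matrix_det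
  refine isInducing_val.continuousAt_iff.2 ?_
  have h1 : ∀ᶠ b : Fin r → Mat n in 𝓝 a, ∀ i, (b i).det ∈ Complex.slitPlane :=
    eventually_all.2 fun i => (hdet i).continuousAt.eventually (Complex.isOpen_slitPlane.mem_nhds (h i))
  have h2 : ContinuousAt (fun b : Fin r → Mat n => fun i => ((b i).det ^ (-(n:ℂ)⁻¹)) • b i) a :=
    continuousAt_pi.2 fun i => ((hdet i).continuousAt.cpow continuousAt_const (h i)).smul (continuous_apply i).continuousAt
  refine h2.congr ?_
  filter_upwards [h1] with b hb
  exact (nrm_val hn fun i => Complex.slitPlane_ne_zero (hb i)).symm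

/-- The straight line from `a` to `b`, with time clamped to `[0, 1]`. -/
noncomputable def mix (a b : RepSp n r) (t : ℝ) : Fin r → Mat n :=
  (1 - (projIcc (0:ℝ) 1 zero_le_one t : ℝ)) • a.1 + (projIcc (0:ℝ) 1 zero_le_one t : ℝ) • b.1

theorem continuous_mix : Continuous fun z : (RepSp n r × RepSp n r) × ℝ => mix z.1.1 z.1.2 z.2 := by
  have h1 : Continuous fun z : (RepSp n r × RepSp n r) × ℝ => z.1.1.1 := isInducing_val.continuous.comp (continuous_fst.comp continuous_fst)
  have h2 : Continuous fun z : (RepSp n r × RepSp n r) × ℝ => z.1.2.1 := isInducing_val.continuous.comp (continuous_snd.comp continuous_fst)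
  have h3 : Continuous fun z : (RepSp n r × RepSp n r) × ℝ => (projIcc (0:ℝ) 1 zero_le_one z.2 : ℝ) :=
    continuous_subtype_val.comp (continuous_projIcc.comp continuous_snd)
  exact ((continuous_const.sub h3).smul h1).add (h3.smul h2)

theorem mix_smul (g : GL (Fin n) ℂ) (a b : RepSp n r) (t : ℝ) : mix (g • a) (g • b) t = cj g (mix a b t) := by
  ext1 i
  simp only [mix, smul_val, cj, Pi.add_apply, Pi.smul_apply, mul_add, add_mul, mul_smul_comm, smul_mul_assoc]

theorem mix_zero (a b : RepSp n r) : mix a b 0 = a.1 := by simp [mix]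
theorem mix_one (a b : RepSp n r) : mix a b 1 = b.1 := by simp [mix]
theorem mix_self (a : RepSp n r) (t : ℝ) : mix a a t = a.1 := by simp [mix, ← add_smul]
end

/-! ### Slices for the conjugation action -/


section
variable {Γ Y : Type*} [Group Γ] [TopologicalSpace Γ] [TopologicalSpace Y] [MulAction Γ Y]
  [IsTopologicalGroup Γ] [ContinuousSMul Γ Y]

/-- If `W` is continuous near `y` and `n ↦ (W n)⁻¹ • y` is equivariant as far as it is defined, then
this map extends to an equivariant retraction of an invariant open set onto the orbit of `y`, with local lifts to `Γ`. -/
theorem exists_retraction {y : Y} {N : Set Y} (hN : IsOpen N) (hy : y ∈ N) {W : Y → Γ}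
    (hW : ContinuousOn W N) (hWy : W y = 1)
    (key : ∀ n ∈ N, ∀ g : Γ, g • n ∈ N → (W (g • n))⁻¹ • y = g • (W n)⁻¹ • y) :
    ∃ (O : Set Y) (R : Y → Y), IsOpen O ∧ y ∈ O ∧ (∀ n ∈ O, ∀ g : Γ, g • n ∈ O) ∧ R y = y ∧
      (∀ n ∈ O, ∀ g : Γ, R (g • n) = g • R n) ∧
      (∀ n ∈ O, ∃ V ∈ 𝓝 n, ∃ k : Y → Γ, ContinuousOn k V ∧ ∀ n' ∈ V, R n' = k n' • y) := by
  classical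
  set O : Set Y := {n | ∃ g : Γ, g • n ∈ N} with hO
  choose! s hs using fun n (hn : n ∈ O) => hn
  set R : Y → Y := fun n => (s n)⁻¹ • (W (s n • n))⁻¹ • y with hR
  have hRg : ∀ n, ∀ g : Γ, g • n ∈ N → R n = g⁻¹ • (W (g • n))⁻¹ • y := by
    intro n g hg
    have h1 := hs n ⟨g, hg⟩
    have h2 := key (g • n) hg (s n * g⁻¹) (by rwa [mul_smul, inv_smul_smul])
    rw [mul_smul, inv_smul_smul] at h2
    rw [hR]
    simp only [h2, mul_smul, inv_smul_smul]
  have hOo : IsOpen O := by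
    have : O = ⋃ g : Γ, (fun n => g • n) ⁻¹' N := by ext; simp [hO]
    rw [this]
    exact isOpen_iUnion fun g => hN.preimage (continuous_const_smul g)
  refine ⟨O, R, hOo, ⟨1, by rwa [one_smul]⟩, ?_, ?_, ?_, ?_⟩
  · rintro n ⟨h, hh⟩ g
    exact ⟨h * g⁻¹, by rwa [mul_smul, inv_smul_smul]⟩
  · rw [hRg y 1 (by rwa [one_smul]), one_smul, hWy, inv_one, one_smul, one_smul]
  · rintro n ⟨h, hh⟩ g
    rw [hRg n h hh, hRg (g • n) (h * g⁻¹) (by rwa [mul_smul, inv_smul_smul]), mul_smul h, inv_smul_smul,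
      mul_inv_rev, inv_inv, mul_smul]
  · rintro n ⟨h, hh⟩
    refine ⟨(fun n => h • n) ⁻¹' N, (hN.preimage (continuous_const_smul h)).mem_nhds hh,
      fun n' => h⁻¹ * (W (h • n'))⁻¹, ?_, ?_⟩
    · exact continuousOn_const.mul (hW.comp (continuous_const_smul h).continuousOn fun _ hx => hx).inv
    · intro n' hn'
      rw [hRg n' h hn', mul_smul]

end

section
variable {n r : ℕ}
attribute [local instance] Matrix.linftyOpNormedRing Matrix.linftyOpNormedAlgebra in
/-- Continuity into `GL_n(ℂ)` can be checked on matrices, although the topology of the group also involves inverses. -/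
theorem continuousOn_units {X : Type*} [TopologicalSpace X] {W : X → GL (Fin n) ℂ} {N : Set X}
    (h : ContinuousOn (fun x => (W x).1) N) : ContinuousOn W N := by
  have hc : CompleteSpace (Mat n) := FiniteDimensional.complete ℂ _
  have : IsOpenEmbedding (Units.val : (Mat n)ˣ → Mat n) := Units.isOpenEmbedding_val
  exact this.toIsEmbedding.toIsInducing.continuousOn_iff.2 h

open Classical in
/-- The matrix as an element of GL, junk value `1`. -/
noncomputable def toGL (a : Mat n) : GL (Fin n) ℂ :=
  if h : a.det ≠ 0 then Matrix.GeneralLinearGroup.mkOfDetNeZero a h else 1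

theorem toGL_val {a : Mat n} (h : a.det ≠ 0) : (toGL a).1 = a := by
  rw [toGL, dif_pos h]; rfl

open Matrix in
/-- Slices at tuples with vanishing moment: points near the orbit of `y` are moved to their image under
an equivariant retraction along straight lines, rescaled to determinant one. -/
theorem exists_slice (hn : n ≠ 0) {X : Type*} [TopologicalSpace X] {q : RepSp n r → X} (hq : IsOpenQuotientMap q)
    (orb : ∀ a b, q a = q b ↔ ∃ g : GL (Fin n) ℂ, g • a = b) (y : RepSp n r)
    (hy : ∑ i, y.val i * (y.val i)ᴴ = ∑ i, (y.val i)ᴴ * y.val i) (U' : Set X) (hU' : IsOpen U') (hyU' : q y ∈ U') :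
    ∃ U, Nonempty (Slice (Γ := GL (Fin n) ℂ) q y U U') := by
  obtain ⟨N, hNo, hyN, w, hw, hwy, hkey⟩ := exists_w_matrix y.val hy
  have hN₁o : IsOpen (N ∩ {m | (w m).det ≠ 0}) :=
    (Continuous.comp_continuousOn (continuous_id.matrix_det) hw).isOpen_inter_preimage hNo isOpen_compl_singleton
  set N₁ : Set (RepSp n r) := RepSp.val ⁻¹' (N ∩ {m | (w m).det ≠ 0}) with hN₁
  have hwc : ContinuousOn (fun m : RepSp n r => toGL (w m.val)) N₁ := by
    refine continuousOn_units ?_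
    refine (hw.comp isInducing_val.continuous.continuousOn fun m hm => hm.1).congr fun m hm => ?_
    exact toGL_val hm.2
  have hqg : ∀ (g : GL (Fin n) ℂ) (a : RepSp n r), q (g • a) = q a := fun g a => ((orb _ _).2 ⟨g, rfl⟩).symm
  obtain ⟨O, R, hO, hyO, hOg, hRy, hRg, hRl⟩ := exists_retraction (Γ := GL (Fin n) ℂ) (y := y) (N := N₁)
    (hN₁o.preimage isInducing_val.continuous) ⟨hyN, by simp [hwy]⟩ hwc
    (by simp only [hwy, toGL, det_one, ne_eq, one_ne_zero, not_false_eq_true, dite_true]; ext1; rfl)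
    (by
      intro m hm g hgm
      obtain ⟨c, hc, hc'⟩ := hkey m.val hm.1 g.1 (g⁻¹).1 (inv_mul_val g) (val_mul_inv g) hgm.1
      set A := toGL (w (g • m).val) with hA
      set B := toGL (w m.val) with hB
      have hA' : A.1 = w (g • m).val := toGL_val hgm.2
      have hB' : B.1 = w m.val := toGL_val hm.2
      have h1 : (A * g * B⁻¹ : GL (Fin n) ℂ).1 = c := by
        have : (A.1 : Mat n) * g.1 = c * B.1 := by rw [hA', hB']; exact hc'
        change (A.1 : Mat n) * g.1 * (B⁻¹).1 = c
        rw [this, mul_assoc, val_mul_inv, mul_one]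
      have h2 : (A * g * B⁻¹) • y = y := by
        rw [smul_eq_self_iff, h1]; exact hc
      rw [← mul_smul, inv_smul_eq_iff, ← mul_smul, ← mul_assoc, h2])
  have hRc : ∀ m ∈ O, ContinuousAt R m := by
    intro m hm
    obtain ⟨V, hV, k, hk, hkR⟩ := hRl m hm
    have : ContinuousAt (fun m' => k m' • y) m := (hk.continuousAt hV).smul continuousAt_const
    refine this.congr ?_
    filter_upwards [hV] with m' hm' using (hkR m' hm').symm
  have hmixc : ∀ m ∈ O, ∀ t, ContinuousAt (fun z : RepSp n r × ℝ => mix z.1 (R z.1) z.2) (m, t) := by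
    intro m hm t
    have h1 : ContinuousAt (fun z : RepSp n r × ℝ => R z.1) (m, t) :=
      ContinuousAt.comp (f := Prod.fst) (hRc m hm) continuousAt_fst
    exact ContinuousAt.comp (f := fun z : RepSp n r × ℝ => ((z.1, R z.1), z.2)) continuous_mix.continuousAt
      ((continuousAt_fst.prodMk h1).prodMk continuousAt_snd)
  set D : RepSp n r → ℝ → RepSp n r := fun m t => nrm (mix m (R m) t) with hD
  set P : RepSp n r → ℝ → Prop := fun m t => (∀ i, (mix m (R m) t i).det ∈ Complex.slitPlane) ∧ q (D m t) ∈ U' with hP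
  have hDc : ∀ m ∈ O, ∀ t, P m t → ContinuousAt (uncurry D) (m, t) := by
    intro m hm t h
    have h1 : ContinuousAt (nrm : (Fin r → Mat n) → RepSp n r) (mix m (R m) t) := continuousAt_nrm hn h.1
    have h2 : uncurry D = nrm ∘ fun z : RepSp n r × ℝ => mix z.1 (R z.1) z.2 := rfl
    rw [h2]
    exact ContinuousAt.comp h1 (hmixc m hm t)
  have hPo : ∀ m ∈ O, ∀ t, P m t → ∀ᶠ z : RepSp n r × ℝ in 𝓝 (m, t), P z.1 z.2 := by
    intro m hm t h
    refine Eventually.and (eventually_all.2 fun i => ?_) ?_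
    · have hdet : Continuous fun a : Fin r → Mat n => (a i).det := (continuous_apply i).matrix_det
      exact (hdet.continuousAt.comp (hmixc m hm t)).eventually (Complex.isOpen_slitPlane.mem_nhds (h.1 i))
    · exact (hq.continuous.continuousAt.comp (hDc m hm t h)).eventually (hU'.mem_nhds h.2)
  have hDg : ∀ m ∈ O, ∀ g : GL (Fin n) ℂ, ∀ t, D (g • m) t = g • D m t := by
    intro m hm g t
    simp only [hD, hRg m hm, mix_smul, nrm_cj hn]
  have hPg : ∀ m ∈ O, ∀ g : GL (Fin n) ℂ, ∀ t, P m t → P (g • m) t := by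
    intro m hm g t h
    refine ⟨fun i => ?_, ?_⟩
    · rw [hRg m hm, mix_smul, det_cj]; exact h.1 i
    · rw [hDg m hm, hqg]; exact h.2
  -- `P m t` only depends on the projection of `t` to the unit interval
  have hPt : ∀ m, (∀ t ∈ Icc (0:ℝ) 1, P m t) → ∀ t, P m t := by
    intro m h t
    have h1 := h (projIcc (0:ℝ) 1 zero_le_one t) (Subtype.coe_prop _)
    have h2 : mix m (R m) (projIcc (0:ℝ) 1 zero_le_one t) = mix m (R m) t := by simp [mix]
    simpa only [hP, hD, h2] using h1
  set O' : Set (RepSp n r) := {m | m ∈ O ∧ ∀ t ∈ Icc (0:ℝ) 1, P m t} with hO'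
  have hO'o : IsOpen O' := by
    rw [isOpen_iff_mem_nhds]
    rintro m ⟨hm, hPm⟩
    have := isCompact_Icc.eventually_forall_of_forall_eventually fun t ht => hPo m hm t (hPm t ht)
    filter_upwards [hO.mem_nhds hm, this] with m' h1 h2 using ⟨h1, h2⟩
  have hO'q : ∀ m, q m ∈ q '' O' ↔ m ∈ O' := by
    intro m
    constructor
    · rintro ⟨m', hm', h⟩
      obtain ⟨g, rfl⟩ := (orb _ _).1 h
      exact ⟨hOg _ hm'.1 g, fun t ht => hPg _ hm'.1 g t (hm'.2 t ht)⟩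
    · intro h; exact ⟨m, h, rfl⟩
  have hD1 : ∀ m, D m 1 = R m := fun m => by simp only [hD, mix_one, nrm_self hn]
  refine ⟨q '' O', ⟨⟨hq.isOpenMap _ hO'o, ?_, D, ?_, ?_, ?_, ?_, ?_⟩⟩⟩
  · rw [hO'q]
    have hDy : ∀ t, D y t = y := fun t => by simp only [hD, hRy, mix_self, nrm_self hn]
    refine ⟨hyO, fun t _ => ⟨fun i => ?_, by rwa [hDy]⟩⟩
    rw [hRy, mix_self, y.det_one]
    exact Complex.one_mem_slitPlane
  · intro m hm t
    rw [hO'q] at hm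
    exact hDc m hm.1 t (hPt m hm.2 t)
  · intro g m hm t
    rw [hO'q] at hm
    exact hDg m hm.1 g t
  · intro m _
    simp only [hD, mix_zero, nrm_self hn]
  · intro m hm
    rw [hO'q] at hm
    simp only [hD1]
    exact hRl m hm.1
  · intro m hm t ht
    rw [hO'q] at hm
    exact (hm.2 t ht).2
end

/-! ### Spheres in `SL_n(ℂ)` -/


/-- `SL_n(ℂ)` as a subspace of the matrices. -/
abbrev Det1 (n : ℕ) : Type := {A : Mat n // A.det = 1}

/-- The first column `v` of a family of matrices of determinant one can be moved along the segment
to `v'`, provided that some `w` satisfies `w · v = 1` and `Re (w · v') > 0`. The matrices are multiplied by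
`1 + s (v' - v) wᵀ`, which takes `v` to `v + s (v' - v)` and is invertible; the determinant is corrected in the
second column. -/
theorem frame_step {m L} {A : ℝ × ℝ → Det1 (m+2)} (hA : Continuous A) (hAc : ∀ p ∉ Sq L, ∀ p' ∉ Sq L, A p = A p')
    {w v' : ℝ × ℝ → Fin (m+2) → ℂ} (hw : Continuous w) (hwc : ∀ p ∉ Sq L, ∀ p' ∉ Sq L, w p = w p')
    (hv' : Continuous v') (hvc : ∀ p ∉ Sq L, ∀ p' ∉ Sq L, v' p = v' p')
    (h1 : ∀ p, w p ⬝ᵥ (A p).1.col 0 = 1) (h2 : ∀ p, 0 < (w p ⬝ᵥ v' p).re) :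
    ∃ A', FH L A A' ∧ ∀ p, (A' p).1.col 0 = v' p := by
  let c : ℝ → ℝ := fun s => max 0 (min 1 s)
  have hc : Continuous c := by fun_prop
  let u : ℝ × ℝ → Fin (m+2) → ℂ := fun p => v' p - (A p).1.col 0
  have hAv : Continuous fun p => (A p).1 := continuous_subtype_val.comp hA
  have hu : Continuous u := hv'.sub (continuous_pi fun i => hAv.matrix_elem i 0)
  let δ : ℝ → ℝ × ℝ → ℂ := fun s p => 1 + w p ⬝ᵥ ((c s : ℂ) • u p)
  have hδ : Continuous (uncurry δ) := by
    refine continuous_const.add (Continuous.dotProduct (hw.comp continuous_snd) ?_)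
    exact (Complex.continuous_ofReal.comp (hc.comp continuous_fst)).smul (hu.comp continuous_snd)
  have hδ0 : ∀ s p, δ s p ≠ 0 := by
    intro s p h
    have h3 : δ s p = 1 + (c s : ℂ) * (w p ⬝ᵥ v' p - 1) := by
      simp only [δ, u, dotProduct_smul, dotProduct_sub, h1, smul_eq_mul]
    have h4 := congrArg Complex.re (h3.symm.trans h)
    simp at h4
    have h5 : 0 ≤ c s := le_max_left _ _
    have h6 : c s ≤ 1 := max_le zero_le_one (min_le_left _ _)
    rcases eq_or_lt_of_le h6 with h7 | h7
    · rw [h7] at h4; have := h2 p; linarith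
    · nlinarith [h2 p]
  let G : ℝ → ℝ × ℝ → Mat (m+2) := fun s p => 1 + Matrix.replicateCol Unit ((c s : ℂ) • u p) * Matrix.replicateRow Unit (w p)
  have hGd : ∀ s p, (G s p).det = δ s p := fun s p => Matrix.det_one_add_replicateCol_mul_replicateRow _ _
  let D : ℝ → ℝ × ℝ → Mat (m+2) := fun s p => Matrix.diagonal (Function.update 1 1 (δ s p)⁻¹)
  have hDd : ∀ s p, (D s p).det = (δ s p)⁻¹ := fun s p => by
    simp only [D, Matrix.det_diagonal]
    rw [Finset.prod_update_of_mem (Finset.mem_univ _)]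
    simp
  have hGc : Continuous (uncurry G) := by
    refine continuous_const.add ?_
    refine Continuous.matrix_mul ?_ ?_
    · refine Continuous.matrix_replicateCol ?_
      exact (Complex.continuous_ofReal.comp (hc.comp continuous_fst)).smul (hu.comp continuous_snd)
    · exact Continuous.matrix_replicateRow (hw.comp continuous_snd)
  have hDc : Continuous (uncurry D) := by
    refine Continuous.matrix_diagonal ?_
    exact continuous_const.update 1 (hδ.inv₀ fun z => hδ0 z.1 z.2)
  have hcol : ∀ s p, (G s p * (A p).1 * D s p).col 0 = (A p).1.col 0 + (c s : ℂ) • u p := by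
    intro s p
    have : (G s p * (A p).1 * D s p).col 0 = (G s p).mulVec ((A p).1.col 0) := by
      ext i
      simp only [Matrix.col_apply, D, Matrix.mul_diagonal]
      rw [Function.update_of_ne (by simp)]
      simp [Matrix.mul_apply, Matrix.mulVec, dotProduct]
    rw [this]
    simp only [G, Matrix.add_mulVec, Matrix.one_mulVec, ← Matrix.mulVec_mulVec]
    congr 1
    ext i
    rw [Matrix.mulVec, dotProduct]
    simp only [Finset.univ_unique, Finset.sum_singleton, Matrix.replicateCol_apply]
    have : (Matrix.replicateRow Unit (w p)).mulVec ((A p).1.col 0) default = w p ⬝ᵥ (A p).1.col 0 := rfl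
    rw [this, h1, mul_one]
  refine ⟨fun p => ⟨G 1 p * (A p).1 * D 1 p, by rw [Matrix.det_mul, Matrix.det_mul, hGd, hDd, (A p).2, mul_one, mul_inv_cancel₀ (hδ0 _ _)]⟩, 
    ⟨fun s p => ⟨G s p * (A p).1 * D s p, by rw [Matrix.det_mul, Matrix.det_mul, hGd, hDd, (A p).2, mul_one, mul_inv_cancel₀ (hδ0 _ _)]⟩, ?_, ?_, rfl, ?_⟩, ?_⟩
  · exact Continuous.subtype_mk ((hGc.matrix_mul (hAv.comp continuous_snd)).matrix_mul hDc) _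
  · funext p
    apply Subtype.ext
    have hc0 : c 0 = 0 := by simp [c]
    simp only [G, D, δ, hc0]
    simp
  · intro t p hp p' hp'
    apply Subtype.ext
    simp only [G, D, δ, u, hAc p hp p' hp', hwc p hp p' hp', hvc p hp p' hp']
  · intro p
    have hc0 : c 1 = 1 := by simp [c]
    rw [hcol, hc0]
    simp [u]


theorem FH.continuous_right {X : Type*} [TopologicalSpace X] {L : ℝ} {f g : ℝ × ℝ → X} (h : FH L f g) : Continuous g := by
  obtain ⟨H, hH, -, rfl, -⟩ := h
  exact hH.comp (f := fun p : ℝ × ℝ => ((1:ℝ), p)) (by fun_prop)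

theorem FH.const_right {X : Type*} [TopologicalSpace X] {L : ℝ} {f g : ℝ × ℝ → X} (h : FH L f g) :
    ∀ p ∉ Sq L, ∀ p' ∉ Sq L, g p = g p' := by
  obtain ⟨H, hH, -, rfl, hc⟩ := h
  exact hc 1

theorem FH.refl {X : Type*} [TopologicalSpace X] {L : ℝ} {f : ℝ × ℝ → X} (hf : Continuous f)
    (hc : ∀ p ∉ Sq L, ∀ p' ∉ Sq L, f p = f p') : FH L f f :=
  ⟨fun _ => f, hf.comp continuous_snd, rfl, rfl, fun _ => hc⟩

/-- A compact set meeting every value of a map that is constant off `(0, L)²`. -/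
def sqK (L : ℝ) : Set (ℝ × ℝ) := Icc 0 L ×ˢ Icc 0 L ∪ {(0, 0)}

theorem isCompact_sqK (L : ℝ) : IsCompact (sqK L) :=
  (isCompact_Icc.prod isCompact_Icc).union isCompact_singleton

theorem zero_notMem_Sq (L : ℝ) : ((0, 0) : ℝ × ℝ) ∉ Sq L := fun h => lt_irrefl _ h.1

theorem exists_sqK {X : Type*} {L : ℝ} {f : ℝ × ℝ → X} (hc : ∀ p ∉ Sq L, ∀ p' ∉ Sq L, f p = f p') (p : ℝ × ℝ) :
    ∃ p' ∈ sqK L, f p' = f p := by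
  by_cases h : p ∈ Sq L
  · exact ⟨p, Or.inl ⟨⟨h.1.le, h.2.1.le⟩, h.2.2.1.le, h.2.2.2.le⟩, rfl⟩
  · exact ⟨(0, 0), Or.inr rfl, hc _ (zero_notMem_Sq L) _ h⟩

theorem star_dot_re {m} {v : Fin m → ℂ} (hv : v ≠ 0) : 0 < (star v ⬝ᵥ v).re := by
  have h : (star v ⬝ᵥ v).re = ∑ i, ‖v i‖ ^ 2 := by
    simp [dotProduct, Complex.re_sum, ← Complex.normSq_eq_norm_sq, Complex.normSq_apply]
  rw [h]
  obtain ⟨i, hi⟩ := Function.ne_iff.1 hv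
  exact Finset.sum_pos' (fun _ _ => by positivity) ⟨i, Finset.mem_univ _, by have := norm_pos_iff.2 hi; positivity⟩

theorem star_dot_ne {m} {v : Fin m → ℂ} (hv : v ≠ 0) : star v ⬝ᵥ v ≠ 0 := fun h => by
  have := star_dot_re hv; rw [h] at this; exact lt_irrefl _ this

theorem star_dot_im {m} (v : Fin m → ℂ) : (star v ⬝ᵥ v) = ((star v ⬝ᵥ v).re : ℂ) := by
  apply Complex.ext
  · simp
  · simp [dotProduct, Complex.im_sum, mul_comm]

/-- Every homotopy of nowhere vanishing first columns lifts to a homotopy of matrices of determinant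
one. By compactness, `frame_step` covers short times. -/
theorem frame_path {m L} {V : ℝ → ℝ × ℝ → Fin (m+2) → ℂ} (hV : Continuous (uncurry V))
    (h0 : ∀ t ∈ Icc (0:ℝ) 1, ∀ p, V t p ≠ 0) (hVc : ∀ t, ∀ p ∉ Sq L, ∀ p' ∉ Sq L, V t p = V t p')
    {A : ℝ × ℝ → Det1 (m+2)} (hA : Continuous A) (hAc : ∀ p ∉ Sq L, ∀ p' ∉ Sq L, A p = A p')
    (hAV : ∀ p, (A p).1.col 0 = V 0 p) :
    ∃ A', FH L A A' ∧ ∀ p, (A' p).1.col 0 = V 1 p := by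
  let P : ℝ → ℝ → Prop := fun s t => ∀ A : ℝ × ℝ → Det1 (m+2), Continuous A → (∀ p ∉ Sq L, ∀ p' ∉ Sq L, A p = A p') →
    (∀ p, (A p).1.col 0 = V s p) → ∃ A', FH L A A' ∧ ∀ p, (A' p).1.col 0 = V t p
  have hVt : ∀ t, Continuous (V t) := fun t => hV.comp (f := fun p : ℝ × ℝ => (t, p)) (by fun_prop)
  have step : ∀ s ∈ Icc (0:ℝ) 1, ∀ t, (∀ p, 0 < (star (V s p) ⬝ᵥ V t p).re) → P s t := by
    intro s hs t hst A hA hAc hAV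
    refine frame_step hA hAc (w := fun p => (star (V s p) ⬝ᵥ V s p)⁻¹ • star (V s p)) ?_ ?_ (hVt t) (hVc t) ?_ ?_
    · exact (Continuous.inv₀ ((hVt s).star.dotProduct (hVt s)) fun p => star_dot_ne (h0 s hs p)).smul (hVt s).star
    · intro p hp p' hp'
      simp only [hVc s p hp p' hp']
    · intro p
      rw [hAV, smul_dotProduct, smul_eq_mul, inv_mul_cancel₀ (star_dot_ne (h0 s hs p))]
    · intro p
      rw [smul_dotProduct, star_dot_im, ← Complex.ofReal_inv, smul_eq_mul, Complex.re_ofReal_mul]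
      exact mul_pos (inv_pos.2 (star_dot_re (h0 s hs p))) (hst p)
  have key : P 0 1 := by
    refine isPreconnected_Icc.induction₂' (s := Icc (0:ℝ) 1) P ?_ ?_ (left_mem_Icc.2 zero_le_one) (right_mem_Icc.2 zero_le_one)
    · intro s hs
      have h1 : ∀ᶠ t in 𝓝 s, ∀ p ∈ sqK L, 0 < (star (V s p) ⬝ᵥ V t p).re := by
        refine (isCompact_sqK L).eventually_forall_of_forall_eventually fun p _ => ?_
        have h2 : Continuous fun z : ℝ × (ℝ × ℝ) => (star (V s z.2) ⬝ᵥ V z.1 z.2).re :=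
          Complex.continuous_re.comp (Continuous.dotProduct ((hVt s).comp continuous_snd).star hV)
        exact h2.continuousAt.eventually (lt_mem_nhds (star_dot_re (h0 s hs p)))
      filter_upwards [nhdsWithin_le_nhds h1, self_mem_nhdsWithin] with t ht htI
      have h3 : ∀ p, 0 < (star (V s p) ⬝ᵥ V t p).re := by
        intro p
        obtain ⟨p', hp', h⟩ := exists_sqK (f := fun p => (V s p, V t p))
          (fun p hp p' hp' => by simp only [hVc s p hp p' hp', hVc t p hp p' hp']) p
        rw [Prod.mk.injEq] at h
        rw [← h.1, ← h.2]
        exact ht p' hp'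
      refine ⟨step s hs t h3, step t htI s fun p => ?_⟩
      have h4 : star (V t p) ⬝ᵥ V s p = star (star (V s p) ⬝ᵥ V t p) := Matrix.star_dotProduct _ _
      rw [h4]
      exact h3 p
    · intro x y z _ _ _ hxy hyz A hA hAc hAV
      obtain ⟨A', h1, h2⟩ := hxy A hA hAc hAV
      obtain ⟨A'', h3, h4⟩ := hyz A' h1.continuous_right h1.const_right h2
      exact ⟨A'', h1.trans h3, h4⟩
  exact key A hA hAc hAV

theorem frame_line {m L} {a b : ℝ × ℝ → Fin (m+2) → ℂ} (ha : Continuous a) (hb : Continuous b)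
    (hac : ∀ p ∉ Sq L, ∀ p' ∉ Sq L, a p = a p') (hbc : ∀ p ∉ Sq L, ∀ p' ∉ Sq L, b p = b p')
    (h0 : ∀ t ∈ Icc (0:ℝ) 1, ∀ p, (1 - t) • a p + t • b p ≠ 0)
    {A : ℝ × ℝ → Det1 (m+2)} (hA : Continuous A) (hAc : ∀ p ∉ Sq L, ∀ p' ∉ Sq L, A p = A p')
    (hAV : ∀ p, (A p).1.col 0 = a p) :
    ∃ A', FH L A A' ∧ ∀ p, (A' p).1.col 0 = b p := by
  have := frame_path (L := L) (V := fun t p => (1 - t) • a p + t • b p) ?_ h0 ?_ hA hAc ?_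
  · simpa using this
  · exact ((continuous_const.sub continuous_fst).smul (ha.comp continuous_snd)).add (continuous_fst.smul (hb.comp continuous_snd))
  · intro t p hp p' hp'
    simp only [hac p hp p' hp', hbc p hp p' hp']
  · intro p; simpa using hAV p

/-- A map that is constant off the square is approximated by smooth maps that are constant off the square:
it is first made constant near the complement of the square, then smoothed. -/
theorem exists_smooth_approx {m L} {v : ℝ × ℝ → Fin m → ℂ} (hv : Continuous v) (hvc : ∀ p ∉ Sq L, ∀ p' ∉ Sq L, v p = v p')
    {μ : ℝ} (hμ : 0 < μ) :
    ∃ g : ℝ × ℝ → Fin m → ℂ, ContDiff ℝ 1 g ∧ (∀ p ∉ Sq L, ∀ p' ∉ Sq L, g p = g p') ∧ ∀ p, ‖g p - v p‖ < μ := by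
  set c := v (0, 0) with hc
  have hcv : ∀ p ∉ Sq L, v p = c := fun p hp => hvc p hp _ (zero_notMem_Sq L)
  set ε := μ / 4 with hε
  have hε0 : 0 < ε := by positivity
  let χ : ℝ × ℝ → ℝ := fun p => min 1 (max 0 (‖v p - c‖ / ε - 1))
  have hχ : Continuous χ := by fun_prop
  let f : ℝ × ℝ → Fin m → ℂ := fun p => c + χ p • (v p - c)
  have hf : Continuous f := continuous_const.add (hχ.smul (hv.sub continuous_const))
  have hfv : ∀ p, ‖f p - v p‖ ≤ 2 * ε := by
    intro p
    have h1 : f p - v p = (χ p - 1) • (v p - c) := by simp only [f, sub_smul, one_smul]; abel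
    rw [h1, norm_smul]
    rcases le_or_gt (2 * ε) ‖v p - c‖ with h | h
    · have : χ p = 1 := by
        have h2 : 2 ≤ ‖v p - c‖ / ε := by rwa [le_div_iff₀ hε0]
        simp only [χ]
        rw [max_eq_right (by linarith), min_eq_left (by linarith)]
      rw [this]; simp; positivity
    · have h2 : χ p ≤ 1 := min_le_left _ _
      have h3 : 0 ≤ χ p := le_min zero_le_one (le_max_left _ _)
      have : ‖χ p - 1‖ ≤ 1 := by rw [Real.norm_eq_abs, abs_le]; constructor <;> linarith
      calc _ ≤ 1 * ‖v p - c‖ := by gcongr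
        _ ≤ 2 * ε := by linarith
  have hU : IsOpen {p | ‖v p - c‖ < ε} := isOpen_lt (by fun_prop) continuous_const
  have hSq : IsOpen (Sq L) := by
    refine (isOpen_lt continuous_const continuous_fst).inter ((isOpen_lt continuous_fst continuous_const).inter ((isOpen_lt continuous_const continuous_snd).inter (isOpen_lt continuous_snd continuous_const)))
  have hfU : ContDiffOn ℝ ((1 : ℕ∞) : WithTop ℕ∞) f {p | ‖v p - c‖ < ε} := by
    refine (contDiffOn_const (c := c)).congr fun p hp => ?_
    have hp' : ‖v p - c‖ / ε < 1 := by rwa [div_lt_one hε0]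
    have : χ p = 0 := by
      simp only [χ]
      rw [max_eq_left (by linarith), min_eq_right (by linarith)]
    simp [f, this]
  obtain ⟨g, hg, hg1, hg2, -⟩ := hf.exists_contDiff_approx_and_eqOn (ε := fun _ => ε) 1 continuous_const (fun _ => hε0)
    (S := (Sq L)ᶜ) (U := {p | ‖v p - c‖ < ε}) hSq.isClosed_compl
    (hU.mem_nhdsSet.2 fun p hp => by simpa [hcv p hp] using hε0) hfU
  refine ⟨g, hg, ?_, fun p => ?_⟩
  · have : ∀ p ∉ Sq L, g p = c := fun p hp => by
      rw [hg2 hp]; simp [f, hcv p hp]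
    intro p hp p' hp'
    rw [this p hp, this p' hp']
  · have h1 := hg1 p
    rw [dist_eq_norm] at h1
    calc ‖g p - v p‖ ≤ ‖g p - f p‖ + ‖f p - v p‖ := norm_sub_le_norm_sub_add_norm_sub _ _ _
      _ < μ := by linarith [hfv p]


/-- The first column of a family of matrices of determinant one over the sphere can be moved to `e₁`. -/
theorem frame_std {m L} {A : ℝ × ℝ → Det1 (m+2)} (hA : Continuous A) (hAc : ∀ p ∉ Sq L, ∀ p' ∉ Sq L, A p = A p') :
    ∃ A', FH L A A' ∧ ∀ p, (A' p).1.col 0 = Pi.single 0 1 := by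
  let v : ℝ × ℝ → Fin (m+2) → ℂ := fun p => (A p).1.col 0
  have hv : Continuous v := continuous_pi fun i => (continuous_subtype_val.comp hA).matrix_elem i 0
  have hvc : ∀ p ∉ Sq L, ∀ p' ∉ Sq L, v p = v p' := fun p hp p' hp' => by simp only [v, hAc p hp p' hp']
  have hv0 : ∀ p, v p ≠ 0 := by
    intro p h
    have h1 := Matrix.det_eq_zero_of_column_eq_zero (A := (A p).1) 0 fun i => congrFun h i
    rw [(A p).2] at h1
    exact one_ne_zero h1
  obtain ⟨μ, hμ, hvμ⟩ : ∃ μ > 0, ∀ p, μ ≤ ‖v p‖ := by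
    obtain ⟨p₀, -, h⟩ := (isCompact_sqK L).exists_isMinOn ⟨(0,0), Or.inr rfl⟩ hv.norm.continuousOn
    refine ⟨‖v p₀‖, norm_pos_iff.2 (hv0 _), fun p => ?_⟩
    obtain ⟨p', hp', e⟩ := exists_sqK hvc p
    rw [← e]; exact h hp'
  obtain ⟨g, hg, hgc, hgv⟩ := exists_smooth_approx hv hvc hμ
  have hg0 : ∀ p, g p ≠ 0 := by
    intro p h
    have := hgv p
    rw [h, zero_sub, norm_neg] at this
    exact absurd (hvμ p) (not_le.2 this)
  -- the cone over a smooth sphere has dimension `3 < 2 (m + 2)`, so it misses a vector near `-e₁`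
  have hd : Dense (range fun z : ℝ × (ℝ × ℝ) => z.1 • g z.2)ᶜ := by
    refine ContDiff.dense_compl_range_of_finrank_lt_finrank (f := fun z : ℝ × (ℝ × ℝ) => z.1 • g z.2)
      (contDiff_fst.smul (hg.comp contDiff_snd)) ?_
    simp [Module.finrank_prod, Module.finrank_pi_fintype]
    omega
  let e : Fin (m+2) → ℂ := Pi.single 0 1
  have he : ‖e‖ = 1 := by rw [Pi.norm_single, norm_one]
  obtain ⟨w, hw, hwe⟩ := hd.exists_dist_lt (-e) (ε := 1/2) (by norm_num)
  rw [dist_eq_norm] at hwe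
  -- the segment from `v` to `g` avoids zero since `g` is close to `v`
  obtain ⟨A₁, h1, hcol1⟩ := frame_line hv hg.continuous hvc hgc (fun t ht p h => by
    have h2 : v p = t • (v p - g p) := by
      rw [smul_sub, ← sub_eq_zero, ← h, sub_smul, one_smul]; abel
    have h3 : ‖v p‖ ≤ 1 * ‖v p - g p‖ := by
      conv_lhs => rw [h2, norm_smul, Real.norm_of_nonneg ht.1]
      gcongr; exact ht.2
    rw [one_mul, norm_sub_rev] at h3
    exact absurd (hvμ p) (not_le.2 (h3.trans_lt (hgv p)))) hA hAc (fun _ => rfl)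
  -- the segments from `g p` to `-w` avoid zero since `w` is not on the cone over `g`
  obtain ⟨A₂, h2, hcol2⟩ := frame_line (b := fun _ => -w) hg.continuous continuous_const hgc (fun _ _ _ _ => rfl) (fun t ht p h => by
    rcases eq_or_ne t 0 with rfl | h0
    · simp [hg0] at h
    · refine hw ⟨(t⁻¹ * (1 - t), p), ?_⟩
      rw [smul_neg, ← sub_eq_add_neg, sub_eq_zero] at h
      simp only [mul_smul, h]
      rw [inv_smul_smul₀ h0]) h1.continuous_right h1.const_right hcol1
  -- the segment from `-w` to `e₁` avoids zero since `-w` is close to `e₁`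
  obtain ⟨A₃, h3, hcol3⟩ := frame_line (a := fun _ => -w) (b := fun _ => e) continuous_const continuous_const (fun _ _ _ _ => rfl) (fun _ _ _ _ => rfl) (fun t ht p h => by
    have h4 : e = (1 - t) • (e + w) := by
      rw [← sub_eq_zero, ← h]; simp only [sub_smul, one_smul, smul_neg, smul_add]; abel
    have h5 : ‖e‖ ≤ 1 * ‖e + w‖ := by
      conv_lhs => rw [h4, norm_smul, Real.norm_of_nonneg (by linarith [ht.2])]
      gcongr; linarith [ht.1]
    have h6 : ‖e + w‖ < 1/2 := by rw [← norm_neg]; rwa [neg_add, ← sub_eq_add_neg]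
    rw [he] at h5; linarith) h2.continuous_right h2.const_right hcol2
  exact ⟨A₃, (h1.trans h2).trans h3, hcol3⟩

/-- The block matrix with first column `e₁`, first row `(1, b)` and lower right block `A`. -/
def blk {m : ℕ} (b : Fin m → ℂ) (A : Mat m) : Mat (m+1) :=
  Matrix.of (Fin.cons (Fin.cons 1 b) fun i => Fin.cons 0 (A i))

theorem det_blk {m : ℕ} (b : Fin m → ℂ) (A : Mat m) : (blk b A).det = A.det := by
  rw [Matrix.det_succ_column_zero, Fin.sum_univ_succ]
  simp [blk]
  congr 1

theorem blk_eq {m : ℕ} {A : Mat (m+1)} (h : A.col 0 = Pi.single 0 1) :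
    blk (fun j => A 0 j.succ) (A.submatrix Fin.succ Fin.succ) = A := by
  ext i j
  have h' : ∀ i, A i 0 = (Pi.single 0 1 : Fin (m+1) → ℂ) i := fun i => congrFun h i
  refine Fin.cases ?_ (fun i => ?_) i <;> refine Fin.cases ?_ (fun j => ?_) j <;> simp [blk, h']

theorem continuous_blk {m : ℕ} : Continuous fun z : (Fin m → ℂ) × Mat m => blk z.1 z.2 := by
  refine continuous_matrix fun i j => ?_
  refine Fin.cases ?_ (fun i => ?_) i <;> refine Fin.cases ?_ (fun j => ?_) j <;> simp only [blk, Matrix.of_apply, Fin.cons_zero, Fin.cons_succ]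
  · fun_prop
  · fun_prop
  · fun_prop
  · exact (continuous_snd.matrix_elem i j)

/-- Spheres in `SL_n(ℂ)` are null homotopic, by induction on `n`: once the first column is `e₁`, the first
row is contracted and the lower right block lies in `SL_{n-1}(ℂ)`. -/
theorem Det1_null : ∀ (n : ℕ) {L : ℝ} {A : ℝ × ℝ → Det1 n}, Continuous A → (∀ p ∉ Sq L, ∀ p' ∉ Sq L, A p = A p') →
    ∃ c, FH L A fun _ => c
  | 0, L, A, hA, hAc => by
    refine ⟨A 0, ?_⟩
    have : A = fun _ => A 0 := by funext p; exact Subtype.ext (Subsingleton.elim _ _)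
    rw [← this]
    exact FH.refl hA hAc
  | 1, L, A, hA, hAc => by
    refine ⟨A 0, ?_⟩
    have : A = fun _ => A 0 := by
      funext p
      apply Subtype.ext
      ext i j
      have h1 := (A p).2
      have h2 := (A 0).2
      rw [Matrix.det_fin_one] at h1 h2
      rw [Subsingleton.elim i 0, Subsingleton.elim j 0, h1, h2]
    rw [← this]
    exact FH.refl hA hAc
  | m+2, L, A, hA, hAc => by
    obtain ⟨B, hB, hB1⟩ := frame_std hA hAc
    have hBc : Continuous fun p => (B p).1 := continuous_subtype_val.comp hB.continuous_right
    let C : ℝ × ℝ → Det1 (m+1) := fun p => ⟨(B p).1.submatrix Fin.succ Fin.succ, by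
      rw [← det_blk (fun j => (B p).1 0 j.succ), blk_eq (hB1 p), (B p).2]⟩
    obtain ⟨c, H, hH, H0, H1, Hc⟩ := Det1_null (m+1) (L := L) (A := C)
      (Continuous.subtype_mk (hBc.matrix_submatrix _ _) _)
      (fun p hp p' hp' => by simp only [C, hB.const_right p hp p' hp'])
    refine ⟨⟨blk 0 c.1, by rw [det_blk, c.2]⟩, hB.trans ⟨fun t p => ⟨blk ((1 - t) • fun j => (B p).1 0 j.succ) (H t p).1, by rw [det_blk, (H t p).2]⟩, ?_, ?_, ?_, ?_⟩⟩
    · refine Continuous.subtype_mk (continuous_blk.comp (f := fun z : ℝ × (ℝ × ℝ) => (((1 - z.1) • fun j => (B z.2).1 0 j.succ : Fin (m+1) → ℂ), (H z.1 z.2).1)) (Continuous.prodMk ?_ (continuous_subtype_val.comp hH))) _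
      exact (continuous_const.sub continuous_fst).smul (continuous_pi fun j => (hBc.comp continuous_snd).matrix_elem 0 j.succ)
    · funext p
      apply Subtype.ext
      simp only [H0, C, sub_zero, one_smul]
      exact blk_eq (hB1 p)
    · funext p
      apply Subtype.ext
      simp only [H1, sub_self, zero_smul]
    · intro t p hp p' hp'
      simp only [hB.const_right p hp p' hp', Hc t p hp p' hp']

theorem RepSp_null {n r : ℕ} {L : ℝ} {F : ℝ × ℝ → RepSp n r} (hF : Continuous F) (hFc : ∀ p ∉ Sq L, ∀ p' ∉ Sq L, F p = F p') :
    ∃ c, FH L F fun _ => c := by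
  have hFv : Continuous fun p => (F p).1 := isInducing_val.continuous.comp hF
  have h1 := fun i => Det1_null n (L := L) (A := fun p => ⟨(F p).1 i, (F p).2 i⟩)
    (Continuous.subtype_mk ((continuous_apply i).comp hFv) _) (fun p hp p' hp' => by simp only [hFc p hp p' hp'])
  choose c H hH H0 H1 Hc using h1
  refine ⟨⟨fun i => (c i).1, fun i => (c i).2⟩, fun t p => ⟨fun i => (H i t p).1, fun i => (H i t p).2⟩, ?_, ?_, ?_, ?_⟩
  · exact isInducing_val.continuous_iff.2 (continuous_pi fun i => continuous_subtype_val.comp (hH i))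
  · funext p
    apply RepSp.ext
    simp only [H0]
  · funext p
    apply RepSp.ext
    simp only [H1]
  · intro t p hp p' hp'
    apply RepSp.ext
    simp only [Hc _ t p hp p' hp']

/-! ### Path connectedness -/


/-- Invertible matrices `A` and `B` are joined by invertible matrices on the complex line through
them, which contains only finitely many singular ones. -/
theorem exists_det_ne_path {n : ℕ} {A B : Mat n} (hA : A.det ≠ 0) (hB : B.det ≠ 0) :
    ∃ z : ℝ → ℂ, Continuous z ∧ z 0 = 0 ∧ z 1 = 1 ∧ ∀ t, ((1 - z t) • A + z t • B).det ≠ 0 := by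
  let p : Polynomial ℂ := ((1 - Polynomial.X : Polynomial ℂ) • A.map Polynomial.C + (Polynomial.X : Polynomial ℂ) • B.map Polynomial.C).det
  have hp : ∀ z, p.eval z = ((1 - z) • A + z • B).det := by
    intro z
    rw [← Polynomial.coe_evalRingHom, RingHom.map_det]
    congr 1
    ext i j
    simp
    exact mul_comm _ _
  have hp0 : p ≠ 0 := by
    intro h
    have := hp 0
    rw [h] at this
    simp at this
    exact hA this.symm
  have hc : {z | p.IsRoot z}.Countable := by
    refine (p.roots.toFinset.finite_toSet.subset fun z hz => ?_).countable
    simpa [hp0] using hz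
  have hpc := hc.isPathConnected_compl_of_one_lt_rank (by rw [Complex.rank_real_complex]; norm_num)
  obtain ⟨γ, hγ⟩ := hpc.joinedIn 0 (by simp [Polynomial.IsRoot, hp, hA]) 1 (by simp [Polynomial.IsRoot, hp, hB])
  refine ⟨γ.extend, γ.continuous_extend, by simp, by simp, fun t => ?_⟩
  rw [← hp]
  exact hγ (projIcc 0 1 zero_le_one t)

/-- A path from `1` to `g` on the complex line through them: its members commute with all matrices that
commute with `g`. -/
theorem GL_conn {n r : ℕ} (g : GL (Fin n) ℂ) : ∃ κ : ℝ → GL (Fin n) ℂ, Continuous κ ∧ κ 0 = 1 ∧ κ 1 = g ∧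
    ∀ t, ∀ y : RepSp n r, g • y = y → κ t • y = y := by
  obtain ⟨z, hz, z0, z1, hd⟩ := exists_det_ne_path (A := (1 : Mat n)) (B := g.1) (by simp)
    (by rw [← isUnit_iff_ne_zero]; exact (Matrix.isUnit_iff_isUnit_det _).1 g.isUnit)
  have hv : ∀ t, (toGL ((1 - z t) • (1 : Mat n) + z t • g.1)).1 = (1 - z t) • (1 : Mat n) + z t • g.1 := fun t => toGL_val (hd t)
  refine ⟨fun t => toGL ((1 - z t) • (1 : Mat n) + z t • g.1), ?_, ?_, ?_, ?_⟩
  · rw [← continuousOn_univ]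
    refine continuousOn_units ?_
    simp only [hv]
    exact Continuous.continuousOn (((continuous_const.sub hz).smul continuous_const).add (hz.smul continuous_const))
  · apply Units.ext
    rw [hv, z0]; simp
  · apply Units.ext
    rw [hv, z1]; simp
  · intro t y hy
    rw [smul_eq_self_iff] at hy ⊢
    intro i
    rw [hv]
    simp [add_mul, mul_add, hy i]

/-- The path of `exists_det_ne_path` to the identity matrix, with the first row divided by the determinant. -/
theorem RepSp_path {n r : ℕ} (hn : n ≠ 0) (y : RepSp n r) : ∃ γ : ℝ → RepSp n r, Continuous γ ∧ γ 0 = y ∧ γ 1 = oneSp := by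
  have h1 := fun i => exists_det_ne_path (A := y.1 i) (B := (1 : Mat n)) (by rw [y.2 i]; simp) (by simp)
  choose z hz z0 z1 hd using h1
  let i₀ : Fin n := ⟨0, Nat.pos_of_ne_zero hn⟩
  let M : ℝ → Fin r → Mat n := fun t i => (1 - z i t) • y.1 i + z i t • 1
  have hM : ∀ i, Continuous fun t => M t i := fun i => ((continuous_const.sub (hz i)).smul continuous_const).add ((hz i).smul continuous_const)
  refine ⟨fun t => ⟨fun i => (M t i).updateRow i₀ ((M t i).det⁻¹ • (M t i) i₀), fun i => ?_⟩, ?_, ?_, ?_⟩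
  · rw [Matrix.det_updateRow_smul, Matrix.updateRow_eq_self, inv_mul_cancel₀ (hd i t)]
  · refine isInducing_val.continuous_iff.2 (continuous_pi fun i => ?_)
    refine (hM i).matrix_updateRow i₀ ?_
    exact ((hM i).matrix_det.inv₀ (hd i)).smul ((continuous_apply i₀).comp (hM i))
  · apply RepSp.ext
    funext i
    simp [M, z0, y.2 i]
  · apply RepSp.ext
    funext i
    simp [M, z1, oneSp]

/-! ### The moment map and minimal vectors -/


section
variable {n r : ℕ}

/-- The squared Frobenius norm of a tuple. -/
noncomputable def nsq (a : Fin r → Mat n) : ℝ := ∑ i, ∑ j, ∑ k, ‖a i j k‖ ^ 2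

/-- The vanishing of the moment map. -/
def Moment (a : Fin r → Mat n) : Prop := ∑ i, a i * (a i)ᴴ = ∑ i, (a i)ᴴ * a i

theorem continuous_nsq : Continuous (nsq : (Fin r → Mat n) → ℝ) := by
  refine continuous_finsetSum _ fun i _ => continuous_finsetSum _ fun j _ => continuous_finsetSum _ fun k _ => ?_
  have h : Continuous fun a : Fin r → Mat n => a i j k := (continuous_apply i).matrix_elem j k
  exact h.norm.pow 2

theorem norm_entry_le (a : Fin r → Mat n) (i j k) : ‖a i j k‖ ^ 2 ≤ nsq a := by
  have h1 : ‖a i j k‖ ^ 2 ≤ ∑ k, ‖a i j k‖ ^ 2 := Finset.single_le_sum (f := fun k => ‖a i j k‖ ^ 2) (fun _ _ => by positivity) (Finset.mem_univ k)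
  have h2 : ∑ k, ‖a i j k‖ ^ 2 ≤ ∑ j, ∑ k, ‖a i j k‖ ^ 2 := Finset.single_le_sum (f := fun j => ∑ k, ‖a i j k‖ ^ 2) (fun _ _ => by positivity) (Finset.mem_univ j)
  have h3 : ∑ j, ∑ k, ‖a i j k‖ ^ 2 ≤ nsq a := Finset.single_le_sum (f := fun i => ∑ j, ∑ k, ‖a i j k‖ ^ 2) (fun _ _ => by positivity) (Finset.mem_univ i)
  linarith

theorem isClosedEmbedding_val : IsClosedEmbedding (RepSp.val : RepSp n r → Fin r → Mat n) := by
  refine ⟨⟨isInducing_val, fun a b h => RepSp.ext h⟩, ?_⟩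
  have : range (RepSp.val : RepSp n r → Fin r → Mat n) = {a | ∀ i, (a i).det = 1} := by
    ext a
    exact ⟨by rintro ⟨y, rfl⟩; exact y.2, fun h => ⟨⟨a, h⟩, rfl⟩⟩
  rw [this]
  simp only [ofPred_forall]
  exact isClosed_iInter fun i => isClosed_eq (continuous_apply i).matrix_det continuous_const

instance : T2Space (RepSp n r) := isClosedEmbedding_val.isEmbedding.t2Space

theorem isCompact_nsq_le (c : ℝ) : IsCompact {y : RepSp n r | nsq y.1 ≤ c} := by
  have h : IsCompact {a : Fin r → Mat n | ∀ i j k, a i j k ∈ closedBall (0:ℂ) (Real.sqrt c)} := by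
    have := isCompact_univ_pi (s := fun _ : Fin r => Set.pi univ fun _ : Fin n => Set.pi univ fun _ : Fin n => closedBall (0:ℂ) (Real.sqrt c))
      fun i => isCompact_univ_pi fun j => isCompact_univ_pi fun k => isCompact_closedBall _ _
    refine (congrArg IsCompact ?_).mp this
    ext a
    simp [Set.mem_pi]
    exact Iff.rfl
  refine (isClosedEmbedding_val.isCompact_preimage h).of_isClosed_subset
    (isClosed_le (continuous_nsq.comp isInducing_val.continuous) continuous_const) ?_
  intro y hy i j k
  rw [mem_closedBall_zero_iff]
  exact Real.le_sqrt_of_sq_le ((norm_entry_le y.1 i j k).trans hy)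

theorem isClosed_Moment : IsClosed {a : Fin r → Mat n | Moment a} := by
  have h : ∀ i, Continuous fun a : Fin r → Mat n => a i := fun i => continuous_apply i
  exact isClosed_eq (continuous_finsetSum _ fun i _ => (h i).matrix_mul (h i).matrix_conjTranspose)
    (continuous_finsetSum _ fun i _ => (h i).matrix_conjTranspose.matrix_mul (h i))

/-- Unitarity of an invertible matrix. -/
def IsU (g : GL (Fin n) ℂ) : Prop := (g⁻¹).1 = (g.1)ᴴ

theorem IsU.inv {g : GL (Fin n) ℂ} (h : IsU g) : IsU g⁻¹ := by
  rw [IsU, inv_inv, h, Matrix.conjTranspose_conjTranspose]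

theorem IsU.mul_cj {g : GL (Fin n) ℂ} (h : IsU g) (a : Fin r → Mat n) (i) :
    cj g a i * (cj g a i)ᴴ = g.1 * (a i * (a i)ᴴ) * (g⁻¹).1 := by
  have : (cj g a i)ᴴ = g.1 * (a i)ᴴ * (g⁻¹).1 := by
    rw [cj, h]; simp [Matrix.conjTranspose_mul, mul_assoc]
  rw [this, cj]
  simp only [mul_assoc]
  rw [← mul_assoc (g⁻¹).1 g.1, inv_mul_val, one_mul]

theorem IsU.mul_cj' {g : GL (Fin n) ℂ} (h : IsU g) (a : Fin r → Mat n) (i) :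
    (cj g a i)ᴴ * (cj g a i) = g.1 * ((a i)ᴴ * (a i)) * (g⁻¹).1 := by
  have : (cj g a i)ᴴ = g.1 * (a i)ᴴ * (g⁻¹).1 := by
    rw [cj, h]; simp [Matrix.conjTranspose_mul, mul_assoc]
  rw [this, cj]
  simp only [mul_assoc]
  rw [← mul_assoc (g⁻¹).1 g.1, inv_mul_val, one_mul]

theorem IsU.moment {g : GL (Fin n) ℂ} (h : IsU g) {a : Fin r → Mat n} (ha : Moment a) : Moment (cj g a) := by
  rw [Moment] at ha ⊢
  simp only [h.mul_cj, h.mul_cj', ← Finset.sum_mul, ← Finset.mul_sum, ha]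

theorem diag_mul_conj (A : Mat n) (j) : (A * Aᴴ) j j = ((∑ k, ‖A j k‖ ^ 2 : ℝ) : ℂ) := by
  simp [Matrix.mul_apply, Complex.mul_conj, Complex.normSq_eq_norm_sq]

theorem diag_conj_mul (A : Mat n) (j) : (Aᴴ * A) j j = ((∑ k, ‖A k j‖ ^ 2 : ℝ) : ℂ) := by
  simp [Matrix.mul_apply, mul_comm _ (A _ _), Complex.mul_conj, Complex.normSq_eq_norm_sq]

theorem nsq_eq (a : Fin r → Mat n) : (nsq a : ℂ) = (∑ i, a i * (a i)ᴴ).trace := by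
  rw [Matrix.trace_sum]
  simp only [nsq, Matrix.trace, Matrix.diag_apply, diag_mul_conj, Complex.ofReal_sum]

theorem IsU.nsq_cj {g : GL (Fin n) ℂ} (h : IsU g) (a : Fin r → Mat n) : nsq (cj g a) = nsq a := by
  have : (nsq (cj g a) : ℂ) = nsq a := by
    rw [nsq_eq, nsq_eq]
    simp only [h.mul_cj, ← Finset.sum_mul, ← Finset.mul_sum]
    rw [Matrix.trace_mul_comm, ← mul_assoc, inv_mul_val, one_mul]
  exact_mod_cast this

/-- The moment of a tuple. -/
def mom (a : Fin r → Mat n) : Mat n := ∑ i, (a i * (a i)ᴴ - (a i)ᴴ * a i)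

theorem mom_eq_zero {a : Fin r → Mat n} : mom a = 0 ↔ Moment a := by
  rw [mom, Finset.sum_sub_distrib, sub_eq_zero, Moment]

theorem isHermitian_mom (a : Fin r → Mat n) : (mom a).IsHermitian := by
  rw [Matrix.IsHermitian, mom, Matrix.conjTranspose_sum]
  simp [Matrix.conjTranspose_mul]

theorem IsU.mom_cj {g : GL (Fin n) ℂ} (h : IsU g) (a : Fin r → Mat n) : mom (cj g a) = cj g (fun _ : Fin 1 => mom a) 0 := by
  simp only [mom, h.mul_cj, h.mul_cj']
  simp only [cj, Finset.sum_mul, Finset.mul_sum, mul_sub, sub_mul]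

theorem mom_diag (a : Fin r → Mat n) (j) : mom a j j = ((∑ i, (∑ k, ‖a i j k‖ ^ 2 - ∑ k, ‖a i k j‖ ^ 2) : ℝ) : ℂ) := by
  simp only [mom, Matrix.sum_apply, Matrix.sub_apply, diag_mul_conj, diag_conj_mul]
  push_cast; rfl

/-- A diagonal matrix with nonzero entries. -/
noncomputable def dg (d : Fin n → ℝ) (hd : ∀ j, d j ≠ 0) : GL (Fin n) ℂ where
  val := Matrix.diagonal fun j => (d j : ℂ)
  inv := Matrix.diagonal fun j => ((d j)⁻¹ : ℂ)
  val_inv := by simp [hd]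
  inv_val := by simp [hd]

theorem cj_dg (d : Fin n → ℝ) (hd) (a : Fin r → Mat n) (i j k) : cj (dg d hd) a i j k = (d j / d k : ℝ) * a i j k := by
  have : ((dg d hd)⁻¹).1 = Matrix.diagonal fun j => ((d j)⁻¹ : ℂ) := rfl
  rw [cj, this]
  simp [dg, div_eq_mul_inv]
  ring

/-- Every Hermitian matrix is diagonalized by a unitary one. -/
theorem exists_diag {M : Mat n} (hM : M.IsHermitian) : ∃ g : GL (Fin n) ℂ, IsU g ∧
    (g⁻¹).1 * M * g.1 = Matrix.diagonal fun j => (hM.eigenvalues j : ℂ) := by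
  refine ⟨Unitary.toUnits hM.eigenvectorUnitary, rfl, ?_⟩
  have h := hM.conjStarAlgAut_star_eigenvectorUnitary
  rw [Unitary.conjStarAlgAut_star_apply] at h
  exact h
end


section
variable {n r : ℕ}

/-- A tuple of minimal norm in its orbit has vanishing moment if the moment is diagonal with entries `μ`: the
squared norm is differentiated along the one-parameter group of diagonal matrices with entries `exp (s μ j)`. -/
theorem mom_diag_eq_zero {a : Fin r → Mat n} {μ : Fin n → ℝ} (hm : mom a = Matrix.diagonal fun j => (μ j : ℂ))
    (hmin : ∀ g : GL (Fin n) ℂ, nsq a ≤ nsq (cj g a)) : ∀ j, μ j = 0 := by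
  have h1 : ∀ j, ∑ i, (∑ k, ‖a i j k‖ ^ 2 - ∑ k, ‖a i k j‖ ^ 2) = μ j := by
    intro j
    have := mom_diag a j
    rw [hm, Matrix.diagonal_apply_eq] at this
    exact_mod_cast this.symm
  let f : ℝ → ℝ := fun s => ∑ i, ∑ j, ∑ k, Real.exp (s * (2 * (μ j - μ k))) * ‖a i j k‖ ^ 2
  have hf : ∀ s, f s = nsq (cj (dg (fun j => Real.exp (s * μ j)) fun j => (Real.exp_pos _).ne') a) := by
    intro s
    simp only [f, nsq, cj_dg]
    refine Finset.sum_congr rfl fun i _ => Finset.sum_congr rfl fun j _ => Finset.sum_congr rfl fun k _ => ?_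
    rw [norm_mul, mul_pow, Complex.norm_real, ← Real.exp_sub, Real.norm_of_nonneg (Real.exp_pos _).le, ← Real.exp_nat_mul]
    congr 2; push_cast; ring
  have hd : HasDerivAt f (∑ i, ∑ j, ∑ k, 2 * (μ j - μ k) * ‖a i j k‖ ^ 2) 0 := by
    refine HasDerivAt.fun_sum fun i _ => HasDerivAt.fun_sum fun j _ => HasDerivAt.fun_sum fun k _ => ?_
    have h2 := (((hasDerivAt_id (0:ℝ)).mul_const (2 * (μ j - μ k))).exp).mul_const (‖a i j k‖ ^ 2)
    simpa using h2
  have hmin' : IsLocalMin f 0 := Filter.Eventually.of_forall fun s => by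
    rw [hf s]
    have : f 0 = nsq a := by simp [f, nsq]
    rw [this]; exact hmin _
  have h0 := hmin'.hasDerivAt_eq_zero hd
  have h2 : ∑ i, ∑ j, ∑ k, 2 * (μ j - μ k) * ‖a i j k‖ ^ 2 = 2 * ∑ j, μ j ^ 2 := by
    have e1 : ∀ i, ∑ j, ∑ k, 2 * (μ j - μ k) * ‖a i j k‖ ^ 2 = 2 * ∑ j, μ j * (∑ k, ‖a i j k‖ ^ 2 - ∑ k, ‖a i k j‖ ^ 2) := by
      intro i
      have e2 : ∑ j, ∑ k, μ k * ‖a i j k‖ ^ 2 = ∑ j, ∑ k, μ j * ‖a i k j‖ ^ 2 := Finset.sum_comm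
      simp only [mul_sub, sub_mul, Finset.mul_sum, Finset.sum_sub_distrib, mul_assoc] at e2 ⊢
      simp only [← Finset.mul_sum] at e2 ⊢
      rw [← mul_sub, ← mul_sub]
      simp only [Finset.mul_sum] at e2 ⊢
      rw [e2]
    simp only [e1, ← Finset.mul_sum]
    rw [Finset.sum_comm]
    simp only [← Finset.mul_sum, h1]
    simp only [sq]
  rw [h2] at h0
  intro j
  have h3 : ∑ j, μ j ^ 2 = 0 := by linarith
  have := (Finset.sum_eq_zero_iff_of_nonneg fun j _ => sq_nonneg (μ j)).1 h3 j (Finset.mem_univ j)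
  exact pow_eq_zero_iff two_ne_zero |>.1 this

/-- One half of the Kempf–Ness theorem. A unitary conjugation reduces it to a diagonal moment. -/
theorem moment_of_min {a : Fin r → Mat n} (hmin : ∀ g : GL (Fin n) ℂ, nsq a ≤ nsq (cj g a)) : Moment a := by
  obtain ⟨u, hu, hd⟩ := exists_diag (isHermitian_mom a)
  have h1 : mom (cj u⁻¹ a) = Matrix.diagonal fun j => ((isHermitian_mom a).eigenvalues j : ℂ) := by
    rw [hu.inv.mom_cj, cj, inv_inv, hd]
  have h2 := mom_diag_eq_zero h1 fun g => by rw [hu.inv.nsq_cj, ← cj_mul]; exact hmin _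
  rw [← mom_eq_zero]
  have h3 : mom (cj u⁻¹ a) = 0 := by rw [h1]; simp [h2]
  have h4 : mom (cj u (cj u⁻¹ a)) = 0 := by rw [hu.mom_cj, h3]; simp [cj]
  rwa [← cj_mul, mul_inv_cancel, cj_one] at h4

/-- Orbit closures contain points of minimal norm, where the moment map vanishes. -/
theorem exists_min (m : RepSp n r) : ∃ y ∈ closure (MulAction.orbit (GL (Fin n) ℂ) m), Moment y.1 ∧
    ∀ m' ∈ closure (MulAction.orbit (GL (Fin n) ℂ) m), nsq y.1 ≤ nsq m'.1 := by
  set K := closure (MulAction.orbit (GL (Fin n) ℂ) m) ∩ {y : RepSp n r | nsq y.1 ≤ nsq m.1} with hK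
  have hmem : m ∈ closure (MulAction.orbit (GL (Fin n) ℂ) m) := subset_closure (MulAction.mem_orbit_self m)
  have hKc : IsCompact K := (isCompact_nsq_le _).inter_left isClosed_closure
  obtain ⟨y, hy, hmin⟩ := hKc.exists_isMinOn ⟨m, hmem, le_refl (nsq m.1)⟩
    (continuous_nsq.comp isInducing_val.continuous).continuousOn
  refine ⟨y, hy.1, moment_of_min fun g => ?_, fun m' hm' => ?_⟩
  swap
  · rcases le_total (nsq m'.1) (nsq m.1) with h | h
    · exact hmin ⟨hm', h⟩
    · exact le_trans hy.2 h
  by_contra! h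
  refine absurd (hmin (a := g • y) ⟨?_, (h.trans_le hy.2).le⟩) (not_le.2 h)
  have h2 : MapsTo (fun y : RepSp n r => g • y) (MulAction.orbit (GL (Fin n) ℂ) m) (MulAction.orbit (GL (Fin n) ℂ) m) := by
    rintro _ ⟨k, rfl⟩
    exact ⟨g * k, mul_smul g k m⟩
  exact h2.closure (continuous_const_smul g) hy.1
end

/-! ### Separation of orbits with vanishing moment -/


/-- Along an ultrafilter, a positive function converges or its inverse tends to zero. -/
theorem pos_tendsto_or {ι : Type*} (l : Ultrafilter ι) {f : ι → ℝ} (hf : ∀ k, 0 < f k) :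
    (∃ c, Tendsto f l (𝓝 c)) ∨ Tendsto (fun k => (f k)⁻¹) l (𝓝 0) := by
  have key : ∀ f : ι → ℝ, (∀ k, 0 < f k) → (∀ᶠ k in l, f k ≤ 1) → ∃ c, Tendsto f l (𝓝 c) := by
    intro f hf h
    have h1 : Icc (0:ℝ) 1 ∈ l.map f := Ultrafilter.mem_map.2 (h.mono fun k hk => ⟨(hf k).le, hk⟩)
    obtain ⟨c, -, hc⟩ := (isCompact_Icc (a := (0:ℝ)) (b := 1)).ultrafilter_le_nhds' (l.map f) h1
    exact ⟨c, hc⟩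
  rcases l.eventually_or.1 (Eventually.of_forall fun k => le_total (f k) 1) with h | h
  · exact Or.inl (key f hf h)
  · obtain ⟨c, hc⟩ := key (fun k => (f k)⁻¹) (fun k => inv_pos.2 (hf k)) (h.mono fun k hk => inv_le_one_of_one_le₀ hk)
    rcases eq_or_ne c 0 with rfl | h0
    · exact Or.inr hc
    · exact Or.inl ⟨c⁻¹, by simpa using hc.inv₀ h0⟩

section
variable {n r : ℕ}

/-- A tuple in block upper triangular form with vanishing moment is block diagonal. -/
theorem Moment.block {a : Fin r → Mat n} (ha : Moment a) (J : Finset (Fin n))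
    (h : ∀ i, ∀ j ∈ J, ∀ k ∉ J, a i k j = 0) : ∀ i, ∀ j ∈ J, ∀ k ∉ J, a i j k = 0 := by
  have h1 : ∀ j, ∑ i, (∑ k, ‖a i j k‖ ^ 2 - ∑ k, ‖a i k j‖ ^ 2) = 0 := by
    intro j
    have h2 := mom_diag a j
    rw [mom_eq_zero.2 ha, Matrix.zero_apply] at h2
    exact_mod_cast h2.symm
  have h3 : ∑ j ∈ J, ∑ i, (∑ k, ‖a i j k‖ ^ 2 - ∑ k, ‖a i k j‖ ^ 2) = 0 := Finset.sum_eq_zero fun j _ => h1 j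
  rw [Finset.sum_comm] at h3
  have h4 : ∀ i, ∑ j ∈ J, (∑ k, ‖a i j k‖ ^ 2 - ∑ k, ‖a i k j‖ ^ 2) = ∑ j ∈ J, ∑ k ∈ Jᶜ, ‖a i j k‖ ^ 2 := by
    intro i
    rw [Finset.sum_sub_distrib]
    simp only [← Finset.sum_add_sum_compl J]
    rw [Finset.sum_add_distrib, Finset.sum_add_distrib, Finset.sum_comm (s := J) (t := J)]
    have h5 : ∑ j ∈ J, ∑ k ∈ Jᶜ, ‖a i k j‖ ^ 2 = 0 := Finset.sum_eq_zero fun j hj => Finset.sum_eq_zero fun k hk => by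
      rw [h i j hj k (Finset.mem_compl.1 hk)]; simp
    rw [h5]; ring
  simp only [h4] at h3
  intro i j hj k hk
  have h5 := (Finset.sum_eq_zero_iff_of_nonneg fun i _ => Finset.sum_nonneg fun j _ => Finset.sum_nonneg fun k _ => sq_nonneg _).1 h3 i (Finset.mem_univ i)
  have h6 := (Finset.sum_eq_zero_iff_of_nonneg fun j _ => Finset.sum_nonneg fun k _ => sq_nonneg _).1 h5 j hj
  have h7 := (Finset.sum_eq_zero_iff_of_nonneg fun k _ => sq_nonneg _).1 h6 k (Finset.mem_compl.2 hk)
  simpa using h7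

/-- Let `m` tend to `a` and its conjugates by positive diagonal matrices `d` tend to `b`, both with vanishing
moment. Then `a` and `b` are conjugate. Entry `(j, k)` is scaled by `d j / d k`; where this factor or its inverse tends
to zero the entries of both limits vanish, by `Moment.block`, and elsewhere the factors converge to nonzero limits. -/
theorem sep_diag {ι : Type*} (l : Ultrafilter ι) {a b : Fin r → Mat n} (ha : Moment a) (hb : Moment b)
    {m : ι → Fin r → Mat n} {d : ι → Fin n → ℝ} (hd : ∀ k j, 0 < d k j)
    (hm : Tendsto m l (𝓝 a)) (hdm : Tendsto (fun k => cj (dg (d k) fun j => (hd k j).ne') (m k)) l (𝓝 b)) :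
    ∃ g, cj g a = b := by
  classical
  have hm' : ∀ i j k, Tendsto (fun x => m x i j k) l (𝓝 (a i j k)) := fun i j k =>
    tendsto_pi_nhds.1 (tendsto_pi_nhds.1 (tendsto_pi_nhds.1 hm i) j) k
  have hdm' : ∀ i j k, Tendsto (fun x => ((d x j / d x k : ℝ) : ℂ) * m x i j k) l (𝓝 (b i j k)) := fun i j k => by
    have := tendsto_pi_nhds.1 (tendsto_pi_nhds.1 (tendsto_pi_nhds.1 hdm i) j) k
    simpa only [cj_dg] using this
  let P : Fin n → Fin n → Prop := fun j k => ∃ c, Tendsto (fun x => d x j / d x k) l (𝓝 c)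
  have hPt : ∀ i j k, P i j → P j k → P i k := by
    rintro i j k ⟨c, hc⟩ ⟨c', hc'⟩
    refine ⟨c * c', (hc.mul hc').congr fun x => ?_⟩
    have := (hd x j).ne'
    field_simp
  have hPn : ∀ j k, ¬ P k j → Tendsto (fun x => d x j / d x k) l (𝓝 0) := by
    intro j k h
    have := (pos_tendsto_or l (f := fun x => d x k / d x j) fun x => div_pos (hd x k) (hd x j)).resolve_left h
    simpa only [inv_div] using this
  -- entries with an unbounded or vanishing scaling factor vanish on both sides
  have hz : ∀ j k, ¬ P k j → ∀ i, a i j k = 0 ∧ b i j k = 0 ∧ a i k j = 0 ∧ b i k j = 0 := by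
    intro j₀ k₀ h
    have hz1 : ∀ j k, ¬ P k j → ∀ i, b i j k = 0 ∧ a i k j = 0 := by
      intro j k h i
      have h1 : Tendsto (fun x => ((d x j / d x k : ℝ) : ℂ)) l (𝓝 0) := by
        have := (Complex.continuous_ofReal.tendsto 0).comp (hPn j k h)
        rwa [Complex.ofReal_zero] at this
      refine ⟨?_, ?_⟩
      · have := h1.mul (hm' i j k)
        rw [zero_mul] at this
        exact tendsto_nhds_unique (hdm' i j k) this
      · have := h1.mul (hdm' i k j)
        rw [zero_mul] at this
        refine tendsto_nhds_unique (hm' i k j) (this.congr fun x => ?_)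
        have e1 := (hd x j).ne'
        have e2 := (hd x k).ne'
        rw [← mul_assoc, ← Complex.ofReal_mul]
        have : d x j / d x k * (d x k / d x j) = 1 := by field_simp
        rw [this]; simp
    let J : Finset (Fin n) := Finset.univ.filter fun j => P j j₀
    have hJ : ∀ j ∈ J, ∀ k ∉ J, ¬ P k j := by
      intro j hj k hk hkj
      simp only [J, Finset.mem_filter, Finset.mem_univ, true_and] at hj hk
      exact hk (hPt _ _ _ hkj hj)
    have hj₀ : j₀ ∈ J := by
      simp only [J, Finset.mem_filter, Finset.mem_univ, true_and]
      exact ⟨1, tendsto_const_nhds.congr fun x => (div_self (hd x j₀).ne').symm⟩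
    have hk₀ : k₀ ∉ J := by simpa [J] using h
    have hJc : ∀ j ∈ Jᶜ, ∀ k ∉ Jᶜ, ¬ P j k := fun j hj k hk => hJ k (by simpa using hk) j (by simpa using hj)
    intro i
    refine ⟨?_, (hz1 _ _ h i).1, (hz1 _ _ h i).2, ?_⟩
    · exact ha.block J (fun i j hj k hk => (hz1 j k (hJ j hj k hk) i).2) i _ hj₀ _ hk₀
    · exact hb.block Jᶜ (fun i j hj k hk => (hz1 k j (hJc j hj k hk) i).1) i k₀ (by simpa using hk₀) j₀ (by simpa using hj₀)
  -- on each class of indices with comparable `d`, the factors relative to a representative converge, and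
  -- their limits are the entries of the conjugating diagonal matrix
  let S : Setoid (Fin n) := ⟨fun j k => P j k ∧ P k j,
    fun j => by
      have : P j j := ⟨1, tendsto_const_nhds.congr fun x => (div_self (hd x j).ne').symm⟩
      exact ⟨this, this⟩, fun h => ⟨h.2, h.1⟩, fun h h' => ⟨hPt _ _ _ h.1 h'.1, hPt _ _ _ h'.2 h.2⟩⟩
  let rep : Fin n → Fin n := fun j => (Quotient.mk S j).out
  have hrep : ∀ j, P j (rep j) ∧ P (rep j) j := fun j => Setoid.symm (Quotient.mk_out (s := S) j)
  have hlim : ∀ j, ∃ c : ℝ, c ≠ 0 ∧ Tendsto (fun x => d x j / d x (rep j)) l (𝓝 c) := by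
    intro j
    obtain ⟨⟨c, hc⟩, c', hc'⟩ := hrep j
    refine ⟨c, ?_, hc⟩
    rintro rfl
    have h1 := hc.mul hc'
    rw [zero_mul] at h1
    have h2 : Tendsto (fun _ : ι => (1:ℝ)) l (𝓝 0) := h1.congr fun x => by
      have e1 := (hd x j).ne'
      have e2 := (hd x (rep j)).ne'
      field_simp
    exact one_ne_zero (tendsto_nhds_unique tendsto_const_nhds h2)
  choose e he0 he using hlim
  refine ⟨dg e he0, ?_⟩
  funext i
  ext j k
  rw [cj_dg]
  by_cases h : P j k ∧ P k j
  · have hr : rep j = rep k := by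
      simp only [rep]
      rw [Quotient.sound (s := S) h]
    have h1 : Tendsto (fun x => d x j / d x k) l (𝓝 (e j / e k)) := by
      refine ((he j).div (he k) (he0 k)).congr fun x => ?_
      rw [hr]
      have := (hd x (rep k)).ne'
      have := (hd x k).ne'
      simp only [Pi.div_apply]
      field_simp
    have h2 : Tendsto (fun x => ((d x j / d x k : ℝ) : ℂ)) l (𝓝 ((e j / e k : ℝ) : ℂ)) :=
      (Complex.continuous_ofReal.tendsto _).comp h1
    exact tendsto_nhds_unique (h2.mul (hm' i j k)) (hdm' i j k)
  · rcases not_and_or.1 h with h | h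
    · have := hz k j h i
      rw [this.2.2.1, this.2.2.2, mul_zero]
    · have := hz j k h i
      rw [this.1, this.2.1, mul_zero]
end


section
variable {n r : ℕ}

theorem isU_of_mul {g : GL (Fin n) ℂ} (h : (g.1)ᴴ * g.1 = 1) : IsU g := by
  have h1 : (g.1)ᴴ * g.1 * (g⁻¹).1 = (g⁻¹).1 := by rw [h, one_mul]
  rw [mul_assoc, val_mul_inv, mul_one] at h1
  exact h1.symm

theorem IsU.mul_self {g : GL (Fin n) ℂ} (h : IsU g) : (g.1)ᴴ * g.1 = 1 := by rw [← h, inv_mul_val]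
theorem IsU.self_mul {g : GL (Fin n) ℂ} (h : IsU g) : g.1 * (g.1)ᴴ = 1 := by rw [← h, val_mul_inv]

/-- The singular value decomposition. -/
theorem exists_svd (g : GL (Fin n) ℂ) : ∃ u v : GL (Fin n) ℂ, IsU u ∧ IsU v ∧ ∃ (d : Fin n → ℝ) (hd : ∀ j, 0 < d j),
    g = u * dg d (fun j => (hd j).ne') * v⁻¹ := by
  have hM : ((g.1)ᴴ * g.1).IsHermitian := Matrix.isHermitian_conjTranspose_mul_self _
  obtain ⟨v, hv, h⟩ := exists_diag hM
  set μ := hM.eigenvalues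
  have h1 : ((g * v).1)ᴴ * (g * v).1 = Matrix.diagonal fun j => (μ j : ℂ) := by
    rw [← h, hv, Units.val_mul, Matrix.conjTranspose_mul]
    simp only [mul_assoc]
  have hμ : ∀ j, 0 < μ j := by
    intro j
    have h2 := diag_conj_mul (g * v).1 j
    rw [h1, Matrix.diagonal_apply_eq] at h2
    have h3 : μ j = ∑ k, ‖(g * v).1 k j‖ ^ 2 := by exact_mod_cast h2
    rw [h3]
    have h4 : ∃ k, (g * v).1 k j ≠ 0 := by
      by_contra! h5
      have h6 := congrFun (congrFun (inv_mul_val (g * v)) j) j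
      rw [Matrix.mul_apply] at h6
      simp [h5] at h6
    obtain ⟨k, hk⟩ := h4
    exact Finset.sum_pos' (fun _ _ => by positivity) ⟨k, Finset.mem_univ _, by have := norm_pos_iff.2 hk; positivity⟩
  have hd : ∀ j, 0 < Real.sqrt (μ j) := fun j => Real.sqrt_pos.2 (hμ j)
  let D := dg (fun j => Real.sqrt (μ j)) fun j => (hd j).ne'
  refine ⟨g * v * D⁻¹, v, isU_of_mul ?_, hv, fun j => Real.sqrt (μ j), hd, ?_⟩
  · have hD : (D⁻¹).1 = Matrix.diagonal fun j => (((Real.sqrt (μ j) : ℝ) : ℂ))⁻¹ := rfl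
    rw [Units.val_mul (g * v), Matrix.conjTranspose_mul, mul_assoc, ← mul_assoc _ (g * v).1, h1, hD,
      Matrix.diagonal_conjTranspose, Matrix.diagonal_mul_diagonal, Matrix.diagonal_mul_diagonal, ← Matrix.diagonal_one]
    congr 1
    funext j
    have e1 : (μ j : ℂ) = (Real.sqrt (μ j) : ℂ) * (Real.sqrt (μ j) : ℂ) := by
      rw [← Complex.ofReal_mul, Real.mul_self_sqrt (hμ j).le]
    have e2 : (Real.sqrt (μ j) : ℂ) ≠ 0 := Complex.ofReal_ne_zero.2 (hd j).ne'
    rw [e1]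
    simp only [Pi.star_apply, star_inv₀, RCLike.star_def, Complex.conj_ofReal]
    field_simp
  · change g = g * v * D⁻¹ * D * v⁻¹
    group

/-- Compactness of the unitary group. -/
theorem IsU.exists_limit {ι : Type*} (l : Ultrafilter ι) {u : ι → GL (Fin n) ℂ} (hu : ∀ k, IsU (u k)) :
    ∃ u₀, IsU u₀ ∧ Tendsto u l (𝓝 u₀) := by
  have h1 : ∀ j k, ∃ c, Tendsto (fun x => (u x).1 j k) l (𝓝 c) := by
    intro j k
    have h2 : closedBall (0:ℂ) 1 ∈ l.map fun x => (u x).1 j k := by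
      refine Ultrafilter.mem_map.2 (Filter.univ_mem' fun x => ?_)
      have h3 := diag_mul_conj (u x).1 j
      rw [(hu x).self_mul, Matrix.one_apply_eq] at h3
      have h4 : (1:ℝ) = ∑ k, ‖(u x).1 j k‖ ^ 2 := by exact_mod_cast h3
      have h5 : ‖(u x).1 j k‖ ^ 2 ≤ ∑ k, ‖(u x).1 j k‖ ^ 2 :=
        Finset.single_le_sum (f := fun k => ‖(u x).1 j k‖ ^ 2) (fun _ _ => by positivity) (Finset.mem_univ k)
      change (u x).1 j k ∈ closedBall (0:ℂ) 1
      rw [mem_closedBall_zero_iff]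
      exact abs_le_of_sq_le_sq' (by rw [one_pow, h4]; exact h5) zero_le_one |>.2
    obtain ⟨c, -, hc⟩ := (isCompact_closedBall (0:ℂ) 1).ultrafilter_le_nhds' _ h2
    exact ⟨c, hc⟩
  choose W hW using h1
  have hWt : Tendsto (fun x => ((u x).1 : Mat n)) l (𝓝 (Matrix.of W)) :=
    tendsto_pi_nhds.2 fun j => tendsto_pi_nhds.2 fun k => hW j k
  have hWs : Tendsto (fun x => ((u x).1 : Mat n)ᴴ) l (𝓝 (Matrix.of W)ᴴ) :=
    (continuous_id.matrix_conjTranspose.tendsto (Matrix.of W)).comp hWt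
  have e1 : (Matrix.of W)ᴴ * Matrix.of W = 1 := by
    have h2 : Tendsto (fun x => ((u x).1 : Mat n)ᴴ * (u x).1) l (𝓝 ((Matrix.of W)ᴴ * Matrix.of W)) := hWs.mul hWt
    simp only [(hu _).mul_self] at h2
    exact (tendsto_nhds_unique tendsto_const_nhds h2).symm
  have e2 : Matrix.of W * (Matrix.of W)ᴴ = 1 := mul_eq_one_comm.1 e1
  let u₀ : GL (Fin n) ℂ := ⟨Matrix.of W, (Matrix.of W)ᴴ, e2, e1⟩
  refine ⟨u₀, rfl, ?_⟩
  rw [Units.isEmbedding_embedProduct.isInducing.tendsto_nhds_iff]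
  refine Tendsto.prodMk_nhds hWt ?_
  refine (MulOpposite.continuous_op.tendsto _).comp (f := fun x => ((u x)⁻¹).1) ?_
  have : ∀ x, ((u x)⁻¹).1 = ((u x).1)ᴴ := fun x => hu x
  simp only [this]
  exact hWs

theorem tendsto_cj {ι : Type*} {l : Filter ι} {g : ι → GL (Fin n) ℂ} {g₀ : GL (Fin n) ℂ} {a : ι → Fin r → Mat n} {a₀ : Fin r → Mat n}
    (hg : Tendsto g l (𝓝 g₀)) (ha : Tendsto a l (𝓝 a₀)) : Tendsto (fun x => cj (g x) (a x)) l (𝓝 (cj g₀ a₀)) := by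
  have h : Tendsto (fun x => (g x, a x)) l (𝓝 (g₀, a₀)) := hg.prodMk_nhds ha
  exact Tendsto.comp (g := fun z : GL (Fin n) ℂ × (Fin r → Mat n) => cj z.1 z.2) (f := fun x => (g x, a x))
    (continuous_cj.tendsto (g₀, a₀)) h

/-- Limits `y` of tuples and `z` of conjugates of these tuples are conjugate if their moments vanish. The
singular value decomposition reduces the claim to `sep_diag`, as the unitary factors converge along an ultrafilter. -/
theorem sep {ι : Type*} (l : Ultrafilter ι) {y z : Fin r → Mat n} (hy : Moment y) (hz : Moment z)
    {m : ι → Fin r → Mat n} {g : ι → GL (Fin n) ℂ} (hm : Tendsto m l (𝓝 y)) (hgm : Tendsto (fun x => cj (g x) (m x)) l (𝓝 z)) :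
    ∃ g, cj g y = z := by
  choose u v hu hv d hd hg using fun x => exists_svd (g x)
  obtain ⟨u₀, hu₀, hul⟩ := IsU.exists_limit l hu
  obtain ⟨v₀, hv₀, hvl⟩ := IsU.exists_limit l hv
  have h1 : Tendsto (fun x => cj (v x)⁻¹ (m x)) l (𝓝 (cj v₀⁻¹ y)) := tendsto_cj hvl.inv hm
  have h2 : Tendsto (fun x => cj (u x)⁻¹ (cj (g x) (m x))) l (𝓝 (cj u₀⁻¹ z)) := tendsto_cj hul.inv hgm
  have h3 : ∀ x, cj (u x)⁻¹ (cj (g x) (m x)) = cj (dg (d x) fun j => (hd x j).ne') (cj (v x)⁻¹ (m x)) := by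
    intro x
    rw [← cj_mul, ← cj_mul]
    congr 1
    rw [hg x]; group
  simp only [h3] at h2
  obtain ⟨k, hk⟩ := sep_diag l (hv₀.inv.moment hy) (hu₀.inv.moment hz) hd h1 h2
  refine ⟨u₀ * k * v₀⁻¹, ?_⟩
  rw [cj_mul, cj_mul, hk, ← cj_mul, mul_inv_cancel, cj_one]
end

/-! ### The choice of minimal vectors -/


section
variable {n r : ℕ} {X : Type*} [TopologicalSpace X] {q : RepSp n r → X}

/-- The choice of a minimal vector in the closure of each orbit. Its class in the quotient varies
continuously, because limits of minimal vectors are compared by `sep`. -/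
theorem exists_sigma (hq : IsOpenQuotientMap q) (orb : ∀ a b, q a = q b ↔ ∃ g : GL (Fin n) ℂ, g • a = b) :
    ∃ σ : X → RepSp n r, (∀ z, Moment (σ z).1) ∧ Continuous (q ∘ σ) ∧ ∀ z U, IsOpen U → q (σ z) ∈ U → z ∈ U := by
  choose y hy hym hyn using fun m : RepSp n r => exists_min m
  choose s hs using hq.surjective
  have horb : ∀ m, closure (MulAction.orbit (GL (Fin n) ℂ) (s (q m))) = closure (MulAction.orbit (GL (Fin n) ℂ) m) := by
    intro m
    obtain ⟨g, hg⟩ := (orb m (s (q m))).1 (hs _).symm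
    rw [← hg, MulAction.orbit_smul]
  let σ : X → RepSp n r := fun x => y (s x)
  have hσcl : ∀ m, σ (q m) ∈ closure (MulAction.orbit (GL (Fin n) ℂ) m) := fun m => horb m ▸ hy (s (q m))
  have hσn : ∀ m, nsq (σ (q m)).1 ≤ nsq m.1 := fun m =>
    hyn (s (q m)) m (by rw [horb]; exact subset_closure (MulAction.mem_orbit_self m))
  have hspec : ∀ z U, IsOpen U → q (σ z) ∈ U → z ∈ U := by
    intro z U hU h
    obtain ⟨m, rfl⟩ := hq.surjective z
    obtain ⟨_, h1, g, rfl⟩ := mem_closure_iff.1 (hσcl m) (q ⁻¹' U) (hU.preimage hq.continuous) h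
    rwa [mem_preimage, ← (orb m (g • m)).2 ⟨g, rfl⟩] at h1
  refine ⟨σ, fun z => hym _, ?_, hspec⟩
  rw [continuous_iff_continuousAt]
  intro x₀
  rw [ContinuousAt, _root_.tendsto_nhds]
  intro U' hU' hxU'
  by_contra hbad
  -- tuples near `σ x₀` whose minimal vector lies over the complement of `U'`
  let F : Filter (RepSp n r) := 𝓝 (σ x₀) ⊓ 𝓟 {m | q (σ (q m)) ∉ U'}
  have hF : F.NeBot := by
    refine inf_principal_neBot_iff.2 fun O hO => ?_
    by_contra hemp
    refine hbad ?_
    obtain ⟨O', hO'O, hO', hyO'⟩ := mem_nhds_iff.1 hO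
    refine mem_of_superset ((hq.isOpenMap _ hO').mem_nhds (hspec x₀ (q '' O') (hq.isOpenMap _ hO') ⟨_, hyO', rfl⟩)) ?_
    rintro _ ⟨m, hm, rfl⟩
    by_contra h2
    exact hemp ⟨m, hO'O hm, h2⟩
  let l : Ultrafilter (RepSp n r) := Ultrafilter.of F
  have hlF : (l : Filter (RepSp n r)) ≤ F := Ultrafilter.of_le F
  have hl : Tendsto id (l : Filter (RepSp n r)) (𝓝 (σ x₀)) := hlF.trans inf_le_left
  have hlb : ∀ᶠ m in (l : Filter (RepSp n r)), q (σ (q m)) ∉ U' := hlF (mem_inf_of_right (mem_principal_self _))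
  have hnc : Continuous fun y : RepSp n r => nsq y.1 := continuous_nsq.comp isInducing_val.continuous
  have hbd : ∀ᶠ m in (l : Filter (RepSp n r)), nsq (σ (q m)).1 ≤ nsq (σ x₀).1 + 1 := by
    filter_upwards [hl.eventually ((hnc.tendsto _).eventually (gt_mem_nhds (lt_add_one _)))] with m hm
    exact (hσn m).trans (le_of_lt hm)
  obtain ⟨z, -, hz⟩ := (isCompact_nsq_le (n := n) (r := r) (nsq (σ x₀).1 + 1)).ultrafilter_le_nhds'
    (l.map fun m => σ (q m)) (Ultrafilter.mem_map.2 hbd)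
  have hz' : Tendsto (fun m => σ (q m)) l (𝓝 z) := hz
  have hzm : Moment z.1 := by
    refine isClosed_Moment.mem_of_tendsto ((isInducing_val.continuous.tendsto z).comp hz') (Eventually.of_forall fun m => ?_)
    exact hym _
  -- group elements moving `m` close to its minimal vector
  let F' : Filter (RepSp n r × GL (Fin n) ℂ) := comap Prod.fst l ⊓ comap (fun x => x.2 • x.1) (𝓝 z)
  have hF' : F'.NeBot := by
    rw [Filter.neBot_iff, Ne, ← Filter.empty_mem_iff_bot]
    rintro hE
    obtain ⟨A, hA, B, hB, hAB⟩ := mem_inf_iff.1 hE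
    obtain ⟨A', hA', hA'A⟩ := mem_comap.1 hA
    obtain ⟨B', hB', hB'B⟩ := mem_comap.1 hB
    obtain ⟨B'', hB''B', hB'', hzB''⟩ := mem_nhds_iff.1 hB'
    obtain ⟨m, hmA, hmB⟩ := Filter.nonempty_of_mem (inter_mem hA' (hz' (hB''.mem_nhds hzB'')))
    obtain ⟨_, h1, g, rfl⟩ := mem_closure_iff.1 (hσcl m) B'' hB'' hmB
    have : (m, g) ∈ A ∩ B := ⟨hA'A hmA, hB'B (hB''B' h1)⟩
    rw [← hAB] at this
    exact this
  let l' : Ultrafilter (RepSp n r × GL (Fin n) ℂ) := Ultrafilter.of F'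
  have hl'F : (l' : Filter (RepSp n r × GL (Fin n) ℂ)) ≤ F' := Ultrafilter.of_le F'
  have h1 : Tendsto Prod.fst (l' : Filter (RepSp n r × GL (Fin n) ℂ)) (𝓝 (σ x₀)) :=
    hl.comp (tendsto_comap.mono_left (hl'F.trans inf_le_left))
  have h2 : Tendsto (fun x : RepSp n r × GL (Fin n) ℂ => x.2 • x.1) l' (𝓝 z) :=
    tendsto_comap.mono_left (hl'F.trans inf_le_right)
  obtain ⟨g, hg⟩ := sep l' (hym (s x₀)) hzm (m := fun x => x.1.1) (g := fun x => x.2)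
    ((isInducing_val.continuous.tendsto _).comp h1) ((isInducing_val.continuous.tendsto _).comp h2)
  have hqz : q (σ x₀) = q z := (orb _ _).2 ⟨g, RepSp.ext hg⟩
  have h3 : ∀ᶠ m in (l : Filter (RepSp n r)), q (σ (q m)) ∈ U' :=
    hz'.eventually ((hU'.preimage hq.continuous).mem_nhds (by rw [mem_preimage, ← hqz]; exact hxU'))
  obtain ⟨m, hm, hm'⟩ := (h3.and hlb).exists
  exact hm' hm
end

/-! ### The quotient of `SL_n(ℂ)^r` -/

section
variable {n r : ℕ}

/-- `RepSp n r` is `SL_n(ℂ)^r`. -/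
noncomputable def toSL : RepSp n r ≃ₜ (Fin r → SLn n) where
  toFun a := fun i => ⟨a.val i, a.det_one i⟩
  invFun b := ⟨fun i => (b i).1, fun i => (b i).2⟩
  left_inv _ := rfl
  right_inv _ := rfl
  continuous_toFun := continuous_pi fun i =>
    Continuous.subtype_mk ((continuous_apply i).comp isInducing_val.continuous) _
  continuous_invFun := isInducing_val.continuous_iff.2 <| continuous_pi fun i =>
    continuous_subtype_val.comp (continuous_apply i)

theorem toSL_smul (g : SLn n) (a : RepSp n r) :
    ConjAct.toConjAct g • toSL a = toSL ((g : GL (Fin n) ℂ) • a) := by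
  ext1 i
  apply Subtype.ext
  rw [Pi.smul_apply, ConjAct.smul_def, ConjAct.ofConjAct_toConjAct]
  change (g.1 * a.val i) * (g⁻¹).1 = cj (g : GL (Fin n) ℂ) a.val i
  rw [cj, ← map_inv]
  rfl

/-- Scalars act trivially, so every orbit of `GL_n(ℂ)` is an orbit of `SL_n(ℂ)`. -/
theorem exists_SL_smul (hn : n ≠ 0) (g : GL (Fin n) ℂ) (a : RepSp n r) :
    ∃ h : SLn n, (h : GL (Fin n) ℂ) • a = g • a := by
  have hd : (g.1 : Mat n).det ≠ 0 := by
    rw [← isUnit_iff_ne_zero]; exact (Matrix.isUnit_iff_isUnit_det _).1 g.isUnit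
  set c : ℂ := (g.1 : Mat n).det ^ (-(n : ℂ)⁻¹) with hc
  have hdet : (c • (g.1 : Mat n)).det = 1 := by
    rw [Matrix.det_smul, Fintype.card_fin, hc, ← Complex.cpow_nat_mul, mul_neg,
      mul_inv_cancel₀ (Nat.cast_ne_zero.2 hn), Complex.cpow_neg_one, inv_mul_cancel₀ hd]
  let h : SLn n := ⟨c • g.1, hdet⟩
  refine ⟨h, ?_⟩
  have key : g⁻¹ • (h : GL (Fin n) ℂ) • a = a := by
    rw [← mul_smul, smul_eq_self_iff]
    intro i
    have : ((g⁻¹ * (h : GL (Fin n) ℂ) : GL (Fin n) ℂ).1 : Mat n) = c • 1 := by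
      change ((g⁻¹).1 : Mat n) * (c • g.1) = _
      rw [mul_smul_comm, inv_mul_val]
    rw [this, smul_mul_assoc, mul_smul_comm, one_mul, mul_one]
  exact inv_smul_eq_iff.1 key

/-- The projection of `SL_n(ℂ)^r` onto its quotient by conjugation. -/
noncomputable def proj (a : RepSp n r) : RepQuotSL n r := Quotient.mk _ (toSL a)

theorem proj_eq_iff (hn : n ≠ 0) (a b : RepSp n r) :
    proj a = proj b ↔ ∃ g : GL (Fin n) ℂ, g • a = b := by
  rw [proj, proj, eq_comm, Quotient.eq, MulAction.orbitRel_apply]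
  constructor
  · rintro ⟨g, hg⟩
    refine ⟨(ConjAct.ofConjAct g : SLn n), toSL.injective ?_⟩
    rw [← toSL_smul]
    exact hg
  · rintro ⟨g, rfl⟩
    obtain ⟨h, hh⟩ := exists_SL_smul hn g a
    exact ⟨ConjAct.toConjAct h, by rw [← hh]; exact toSL_smul h a⟩

theorem isOpenQuotientMap_proj : IsOpenQuotientMap (proj : RepSp n r → RepQuotSL n r) := by
  have : ContinuousConstSMul (ConjAct (SLn n)) (Fin r → SLn n) := by
    constructor
    intro g
    have : (fun b : Fin r → SLn n => g • b) =
        fun b => toSL (((ConjAct.ofConjAct g : SLn n) : GL (Fin n) ℂ) • toSL.symm b) := by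
      ext1 b
      rw [← toSL_smul, toSL.apply_symm_apply]
      rfl
    rw [this]
    exact toSL.continuous.comp ((continuous_const_smul _).comp toSL.symm.continuous)
  exact (MulAction.isOpenQuotientMap_quotientMk (Γ := ConjAct (SLn n)) (T := Fin r → SLn n)).comp
    toSL.isOpenQuotientMap

end

/-- For every `n ≥ 1` and `r ≥ 1`, the quotient of `SL_n(ℂ)^r` by diagonal conjugation has
trivial second homotopy group at every basepoint. -/
theorem pi2_repQuot_specialLinear_trivial (n r : ℕ) (hn : 1 ≤ n) (hr : 1 ≤ r)
    (x : RepQuotSL n r) :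
    Subsingleton (HomotopyGroup (Fin 2) (RepQuotSL n r) x) := by
  have hn' : n ≠ 0 := by omega
  have orb := proj_eq_iff (r := r) hn'
  obtain ⟨σ, hσm, hσ, hspec⟩ := exists_sigma isOpenQuotientMap_proj orb
  let S : Setup (GL (Fin n) ℂ) (RepSp n r) (RepQuotSL n r) :=
    { q := proj
      hq := isOpenQuotientMap_proj
      orb := orb
      conn := GL_conn
      one := oneSp
      fix := smul_oneSp
      path := RepSp_path hn'
      σ := σ
      hσ := hσ
      spec := hspec
      slice := fun z U' hU' h => exists_slice hn' isOpenQuotientMap_proj orb (σ z) (hσm z) U' hU' h }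
  exact S.homotopyGroup
    (fun L _ F y hF hy => RepSp_null hF fun p hp p' hp' => (hy p hp).trans (hy p' hp').symm) x
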